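/- arXiv:math/0612070 — 2 statements merged into one kernel-verified Lean document; each statement's English description precedes it below -/
import Mathlib

section
/- Fix γ > 0 and ε ∈ (0,1). Set m = ⌈(0.01ε)^{−2(1+γ)/γ}⌉ and δ = 1/m. Then for all sufficiently large n the following holds: if A is an n×n matrix with ‖A‖ = 1 and |a_{jk}| ≤ (log n)^{−(1+γ)} for all j,k, and R_δ is a random diagonal matrix with i.i.d. Bernoulli(δ) diagonal entries, then for p = 2⌈log n⌉, (E ‖R_δ A R_δ‖^p)^{1/p} ≤ ε. -/
/-!
Write `R` for the random coordinate projection at selection probability `s`, `k = ⌈log n⌉` and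
`p = 2k`. Since `n ≤ e ^ k`, factors polynomial in `n` cost only constants after taking `p`-th roots,
so norms may be replaced by traces of powers. The estimate has two parts.

**Tiny selection probabilities, `s ≤ (log n)^{-(1+2γ)}`.** For a fixed set `T` of coordinates, the block
`T × Tᶜ` of `RAR` is restricted by independent selectors on rows and columns. A trace-moment form of the
matrix Chernoff inequality (`chernoff_trace`) bounds the norm of a random column restriction of a
contraction `B` by `√k` times the largest column length plus `√s`, up to constants. It is proved
directly: conditioning on one selector turns the trace moment into quadratic forms of a rank-one update
of the restricted Gram matrix, and `rank_one_update_le` bounds these by a scalar shift of the spectrum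
through Chebyshev's sum inequality, giving a recursion that `shift_pow_le` closes. Applied first to single columns of `A` and
then to the block (`block_moment_le`), and averaged over a random `T` (`decouple_norm_le`), this gives
`moment_le`; for the given entry size it makes the `p`-th moment at most `(C (log n)^{-2γ})^k`.

**Extrapolation to constant probability `δ`.** The trace moment of `RAR` is a polynomial of degree `p`
in the selection probability (`lowDeg_trace`, `exists_poly_of_lowDeg`). It is at most `n` on `[0, 1]`
and very small near `0`. Lagrange interpolation on an equispaced grid (`norm_coeff_le_of_grid`) turns both
facts into bounds for its coefficients, at the price of a factor `8 ^ p` (`extrapolate`). Evaluated at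
`δ`, the terms of degree at most `λp`, with `λ = γ / (2(1+γ))`, are small because the moment is small
near `0`, and the remaining ones because `δ ^ λ ≤ 0.01 ε`.
-/

open scoped BigOperators

/-- Spectral norm: operator norm of a matrix as a map `ℓ₂ⁿ → ℓ₂ᵐ`. -/
noncomputable def specNorm {m n : ℕ} (A : Matrix (Fin m) (Fin n) ℂ) : ℝ :=
  ‖LinearMap.toContinuousLinearMap (Matrix.toEuclideanLin A)‖

/-- Maximum Euclidean column norm, i.e. the `ℓ₁ → ℓ₂` operator norm. -/
noncomputable def colNorm {m n : ℕ} (A : Matrix (Fin m) (Fin n) ℂ) : ℝ :=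
  ⨆ j, Real.sqrt (∑ i, ‖A i j‖ ^ 2)

/-- The diagonal 0–1 projector onto the coordinates in `s`. -/
def projOf {n : ℕ} (s : Finset (Fin n)) : Matrix (Fin n) (Fin n) ℂ :=
  Matrix.diagonal fun i => if i ∈ s then 1 else 0

/-- Diagonal 0–1 matrix determined by a boolean vector. -/
def bernM {n : ℕ} (f : Fin n → Bool) : Matrix (Fin n) (Fin n) ℂ :=
  Matrix.diagonal fun i => if f i then 1 else 0

/-- Probability weight of the outcome `f` for i.i.d. Bernoulli(ρ) selectors. -/
noncomputable def bw {n : ℕ} (ρ : ℝ) (f : Fin n → Bool) : ℝ :=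
  ∏ i, if f i then ρ else 1 - ρ

/-! ### Expectations over independent selectors -/

/-- Expectation of `G` under i.i.d. Bernoulli(`ρ`) selectors. -/
noncomputable def ex {n : ℕ} (ρ : ℝ) (G : (Fin n → Bool) → ℝ) : ℝ := ∑ f, bw ρ f * G f

lemma bw_nonneg {n : ℕ} {ρ : ℝ} (h0 : 0 ≤ ρ) (h1 : ρ ≤ 1) (f : Fin n → Bool) : 0 ≤ bw ρ f := by
  unfold bw
  refine Finset.prod_nonneg fun i _ => ?_
  split_ifs <;> linarith

lemma ex_prod {n : ℕ} (ρ : ℝ) (S : Finset (Fin n)) :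
    ex ρ (fun f => ∏ i ∈ S, if f i then (1:ℝ) else 0) = ρ ^ S.card := by
  classical
  have h : ∀ f : Fin n → Bool, bw ρ f * (∏ i ∈ S, if f i then (1:ℝ) else 0)
      = ∏ i, ((if f i then ρ else 1 - ρ) * (if i ∈ S then (if f i then (1:ℝ) else 0) else 1)) := by
    intro f
    rw [bw, Finset.prod_mul_distrib]
    congr 1
    rw [Finset.prod_ite_mem, Finset.univ_inter]
  unfold ex
  simp_rw [h]
  rw [← Fintype.prod_sum (fun (i : Fin n) (b : Bool) => (if b then ρ else 1 - ρ) *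
    (if i ∈ S then (if b then (1:ℝ) else 0) else 1))]
  have h2 : ∀ i : Fin n, (∑ b : Bool, (if b then ρ else 1 - ρ) *
    (if i ∈ S then (if b then (1:ℝ) else 0) else 1)) = if i ∈ S then ρ else 1 := by
    intro i
    by_cases hi : i ∈ S <;> simp [hi]
  simp_rw [h2]
  rw [Finset.prod_ite_mem, Finset.univ_inter, Finset.prod_const]

lemma sum_bw {n : ℕ} (ρ : ℝ) : ∑ f : Fin n → Bool, bw ρ f = 1 := by
  have := ex_prod (n := n) ρ ∅
  simpa [ex] using this

lemma ex_mono {n : ℕ} {ρ : ℝ} (h0 : 0 ≤ ρ) (h1 : ρ ≤ 1) {G H : (Fin n → Bool) → ℝ}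
    (h : ∀ f, G f ≤ H f) : ex ρ G ≤ ex ρ H :=
  Finset.sum_le_sum fun f _ => mul_le_mul_of_nonneg_left (h f) (bw_nonneg h0 h1 f)

lemma ex_nonneg {n : ℕ} {ρ : ℝ} (h0 : 0 ≤ ρ) (h1 : ρ ≤ 1) {G : (Fin n → Bool) → ℝ}
    (h : ∀ f, 0 ≤ G f) : 0 ≤ ex ρ G :=
  Finset.sum_nonneg fun f _ => mul_nonneg (bw_nonneg h0 h1 f) (h f)

lemma ex_const {n : ℕ} (ρ c : ℝ) : ex (n := n) ρ (fun _ => c) = c := by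
  unfold ex
  rw [← Finset.sum_mul, sum_bw, one_mul]

lemma ex_add {n : ℕ} (ρ : ℝ) (G H : (Fin n → Bool) → ℝ) :
    ex ρ (fun f => G f + H f) = ex ρ G + ex ρ H := by
  simp [ex, mul_add, Finset.sum_add_distrib]

lemma ex_const_mul {n : ℕ} (ρ c : ℝ) (G : (Fin n → Bool) → ℝ) :
    ex ρ (fun f => c * G f) = c * ex ρ G := by
  simp only [ex, Finset.mul_sum]
  exact Finset.sum_congr rfl fun f _ => by ring

lemma ex_sum {n : ℕ} {ι : Type*} (ρ : ℝ) (s : Finset ι) (G : ι → (Fin n → Bool) → ℝ) :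
    ex ρ (fun f => ∑ i ∈ s, G i f) = ∑ i ∈ s, ex ρ (G i) := by
  simp only [ex, Finset.mul_sum]
  exact Finset.sum_comm

/-- Exchanging the coordinates outside `T` between two outcomes preserves the joint weight. -/
lemma bw_piecewise_mul {n : ℕ} (ρ : ℝ) (T : Finset (Fin n)) (f g : Fin n → Bool) :
    bw ρ (T.piecewise f g) * bw ρ (T.piecewise g f) = bw ρ f * bw ρ g := by
  unfold bw
  rw [← Finset.prod_mul_distrib, ← Finset.prod_mul_distrib]
  refine Finset.prod_congr rfl fun i _ => ?_
  by_cases hi : i ∈ T <;> simp [hi, mul_comm]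

/-- Resampling the coordinates outside `T` from an independent copy does not change the law. -/
lemma ex_piecewise {n : ℕ} (ρ : ℝ) (T : Finset (Fin n)) (Φ : (Fin n → Bool) → ℝ) :
    ex ρ (fun f => ex ρ (fun g => Φ (T.piecewise f g))) = ex ρ Φ := by
  -- Swapping the coordinates outside `T` is a weight-preserving involution of pairs.
  let e : (Fin n → Bool) × (Fin n → Bool) → (Fin n → Bool) × (Fin n → Bool) :=
    fun q => (T.piecewise q.1 q.2, T.piecewise q.2 q.1)
  have he : Function.Involutive e := by
    rintro ⟨f, g⟩
    refine Prod.ext ?_ ?_ <;>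
    · funext i
      by_cases hi : i ∈ T <;> simp [e, hi]
  have key : ∑ q : (Fin n → Bool) × (Fin n → Bool),
        bw ρ q.1 * bw ρ q.2 * Φ (T.piecewise q.1 q.2)
      = ∑ q : (Fin n → Bool) × (Fin n → Bool), bw ρ q.1 * bw ρ q.2 * Φ q.1 := by
    refine Fintype.sum_equiv (he.toPerm e) _ _ ?_
    rintro ⟨f, g⟩
    simp only [Function.Involutive.coe_toPerm, e]
    rw [bw_piecewise_mul]
  rw [Fintype.sum_prod_type, Fintype.sum_prod_type] at key
  have l : ex ρ (fun f => ex ρ (fun g => Φ (T.piecewise f g))) =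
      ∑ f, ∑ g, bw ρ f * bw ρ g * Φ (T.piecewise f g) := by
    simp only [ex, Finset.mul_sum, mul_assoc]
  rw [l, key]
  refine Finset.sum_congr rfl fun f _ => ?_
  simp only
  rw [← Finset.sum_mul, ← Finset.mul_sum, sum_bw, mul_one]

/-- Conditioning on a single selector. -/
lemma ex_ite {n : ℕ} (ρ : ℝ) (j : Fin n) (G : (Fin n → Bool) → ℝ) :
    ex ρ (fun f => if f j then G f else 0) = ρ * ex ρ (fun f => G (Function.update f j true)) := by
  rw [← ex_piecewise ρ ({j}ᶜ)]
  have h : ∀ f g : Fin n → Bool, (({j}ᶜ : Finset (Fin n)).piecewise f g) =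
      Function.update f j (g j) := by
    intro f g
    funext i
    by_cases hi : i = j
    · subst hi; simp
    · simp [hi]
  simp_rw [h]
  have h2 : ∀ f : Fin n → Bool, ex ρ (fun g : Fin n → Bool =>
      if (Function.update f j (g j)) j then G (Function.update f j (g j)) else 0)
      = ρ * G (Function.update f j true) := by
    intro f
    have h3 : (fun g : Fin n → Bool =>
      if (Function.update f j (g j)) j then G (Function.update f j (g j)) else 0) =
      fun g => G (Function.update f j true) * ∏ i ∈ {j}, if g i then (1:ℝ) else 0 := by
      funext g
      by_cases hg : g j <;> simp [hg]
    rw [h3, ex_const_mul, ex_prod]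
    simp [mul_comm]
  simp_rw [h2]
  rw [ex_const_mul]

section

open scoped Matrix ComplexOrder Matrix.Norms.L2Operator

/-! ### A trace-moment Chernoff inequality -/

/-- Spectral decomposition of a positive semidefinite matrix, with the unitary as a plain matrix. -/
lemma psd_spectral {ι : Type*} [Fintype ι] [DecidableEq ι] {S : Matrix ι ι ℂ}
    (hS : S.PosSemidef) :
    ∃ (lam : ι → ℝ) (U : Matrix ι ι ℂ), (∀ l, 0 ≤ lam l) ∧ Uᴴ * U = 1 ∧ U * Uᴴ = 1 ∧
      S = U * Matrix.diagonal (fun l => (lam l : ℂ)) * Uᴴ := by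
  refine ⟨hS.1.eigenvalues, hS.1.eigenvectorUnitary, hS.eigenvalues_nonneg, ?_, ?_, ?_⟩
  · exact Unitary.coe_star_mul_self hS.1.eigenvectorUnitary
  · exact Unitary.coe_mul_star_self hS.1.eigenvectorUnitary
  · have := hS.1.spectral_theorem
    rw [Unitary.conjStarAlgAut_apply] at this
    exact this

lemma conj_diag_pow {ι : Type*} [Fintype ι] [DecidableEq ι] {U : Matrix ι ι ℂ} (hU : Uᴴ * U = 1)
    (hU' : U * Uᴴ = 1) (lam : ι → ℝ) (k : ℕ) :
    (U * Matrix.diagonal (fun l => (lam l : ℂ)) * Uᴴ) ^ k =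
      U * Matrix.diagonal (fun l => ((lam l ^ k : ℝ) : ℂ)) * Uᴴ := by
  induction k with
  | zero => simp [hU']
  | succ k ih =>
    rw [pow_succ, ih]
    have : ∀ X Y : Matrix ι ι ℂ, U * X * Uᴴ * (U * Y * Uᴴ) = U * (X * Y) * Uᴴ := by
      intro X Y
      calc U * X * Uᴴ * (U * Y * Uᴴ) = U * X * (Uᴴ * U) * Y * Uᴴ := by
            simp only [Matrix.mul_assoc]
        _ = _ := by rw [hU, Matrix.mul_one]; simp only [Matrix.mul_assoc]
    rw [this, Matrix.diagonal_mul_diagonal]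
    congr 3
    funext l
    push_cast
    ring

lemma conj_diag_trace {ι : Type*} [Fintype ι] [DecidableEq ι] {U : Matrix ι ι ℂ}
    (hU : Uᴴ * U = 1) (d : ι → ℝ) :
    (Matrix.trace (U * Matrix.diagonal (fun l => (d l : ℂ)) * Uᴴ)).re = ∑ l, d l := by
  rw [Matrix.trace_mul_comm, ← Matrix.mul_assoc, hU, Matrix.one_mul, Matrix.trace_diagonal]
  simp

/-- The quadratic form at `b` of a function of a diagonalised matrix is an integral against the
spectral measure of `b`, which has mass `‖(Uᴴ b)_l‖²` at the `l`-th eigenvalue. -/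
lemma conj_diag_quad {ι : Type*} [Fintype ι] [DecidableEq ι] (U : Matrix ι ι ℂ)
    (d : ι → ℝ) (b : ι → ℂ) :
    star b ⬝ᵥ ((U * Matrix.diagonal (fun l => (d l : ℂ)) * Uᴴ) *ᵥ b) =
      ((∑ l, d l * ‖(Uᴴ *ᵥ b) l‖ ^ 2 : ℝ) : ℂ) := by
  rw [← Matrix.mulVec_mulVec, ← Matrix.mulVec_mulVec, Matrix.dotProduct_mulVec]
  have : star b ᵥ* U = star (Uᴴ *ᵥ b) := by
    rw [Matrix.star_mulVec, Matrix.conjTranspose_conjTranspose]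
  rw [this]
  generalize Uᴴ *ᵥ b = c
  simp only [dotProduct, Matrix.mulVec_diagonal, Pi.star_apply]
  push_cast
  refine Finset.sum_congr rfl fun l _ => ?_
  rw [← Complex.conj_mul' (c l)]
  simp only [RCLike.star_def]
  ring

/-- Chebyshev's sum inequality for two monotone functions of the eigenvalues. -/
lemma chebyshev_weighted {ι : Type*} [Fintype ι] (w x : ι → ℝ) (hw : ∀ l, 0 ≤ w l)
    (hx : ∀ l, 0 ≤ x l) {L : ℝ} (hL : 0 ≤ L) (i m : ℕ) :
    (∑ l, x l ^ i * w l) * (∑ l, (x l + L) ^ m * w l) ≤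
      (∑ l, w l) * ∑ l, x l ^ i * (x l + L) ^ m * w l := by
  have h : 0 ≤ ∑ l, ∑ l', w l * w l' * ((x l ^ i - x l' ^ i) * ((x l + L) ^ m - (x l' + L) ^ m)) := by
    refine Finset.sum_nonneg fun l _ => Finset.sum_nonneg fun l' _ =>
      mul_nonneg (mul_nonneg (hw l) (hw l')) ?_
    have hl := hx l
    have hl' := hx l'
    rcases le_total (x l) (x l') with h | h
    · apply mul_nonneg_of_nonpos_of_nonpos
      · have : x l ^ i ≤ x l' ^ i := by gcongr
        linarith
      · have : (x l + L) ^ m ≤ (x l' + L) ^ m := by gcongr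
        linarith
    · apply mul_nonneg
      · have : x l' ^ i ≤ x l ^ i := by gcongr
        linarith
      · have : (x l' + L) ^ m ≤ (x l + L) ^ m := by gcongr
        linarith
  have e : ∑ l, ∑ l', w l * w l' * ((x l ^ i - x l' ^ i) * ((x l + L) ^ m - (x l' + L) ^ m))
      = 2 * ((∑ l, w l) * ∑ l, x l ^ i * (x l + L) ^ m * w l)
        - 2 * ((∑ l, x l ^ i * w l) * (∑ l, (x l + L) ^ m * w l)) := by
    have e1 : ∀ a b : ι → ℝ, ∑ l, ∑ l', a l * b l' = (∑ l, a l) * ∑ l, b l := fun a b => by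
      rw [Finset.sum_mul_sum]
    calc _ = ∑ l, ∑ l', ((x l ^ i * (x l + L) ^ m * w l) * w l' +
          w l * (x l' ^ i * (x l' + L) ^ m * w l')
          - (x l ^ i * w l) * ((x l' + L) ^ m * w l')
          - ((x l + L) ^ m * w l) * (x l' ^ i * w l')) := by
          refine Finset.sum_congr rfl fun l _ => Finset.sum_congr rfl fun l' _ => by ring
      _ = _ := by
          simp only [Finset.sum_sub_distrib, Finset.sum_add_distrib]
          rw [e1 (fun l => x l ^ i * (x l + L) ^ m * w l) w,
            e1 w (fun l => x l ^ i * (x l + L) ^ m * w l),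
            e1 (fun l => x l ^ i * w l) (fun l => (x l + L) ^ m * w l),
            e1 (fun l => (x l + L) ^ m * w l) (fun l => x l ^ i * w l)]
          ring
  linarith

/-- In the quadratic form of `b`, the rank-one update `S ↦ S + bb*` is dominated by the shift
`S ↦ S + L`, where `‖b‖² ≤ L`: expanding the power, every occurrence of `bb*` splits off a moment
of the spectral measure of `S` at `b`, and the moments are recombined by Chebyshev's inequality. The
extra factor `S ^ i` is what makes the induction on `m` possible. -/
lemma rank_one_update_le {ι : Type*} [Fintype ι] [DecidableEq ι] {U : Matrix ι ι ℂ}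
    (hU : Uᴴ * U = 1) (hU' : U * Uᴴ = 1) {lam : ι → ℝ} (hlam : ∀ l, 0 ≤ lam l)
    {S : Matrix ι ι ℂ} (hS : S = U * Matrix.diagonal (fun l => (lam l : ℂ)) * Uᴴ)
    (b : ι → ℂ) {L : ℝ} (hL : ∑ l, ‖b l‖ ^ 2 ≤ L) (m i : ℕ) :
    ∃ r : ℝ, star b ⬝ᵥ ((S ^ i * (S + Matrix.vecMulVec b (star b)) ^ m) *ᵥ b) = (r : ℂ) ∧ 0 ≤ r ∧
      r ≤ ∑ l, lam l ^ i * (lam l + L) ^ m * ‖(Uᴴ *ᵥ b) l‖ ^ 2 := by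
  have hL0 : 0 ≤ L := le_trans (Finset.sum_nonneg fun l _ => by positivity) hL
  have hs : ∀ i, star b ⬝ᵥ ((S ^ i) *ᵥ b) =
      ((∑ l, lam l ^ i * ‖(Uᴴ *ᵥ b) l‖ ^ 2 : ℝ) : ℂ) := by
    intro i
    rw [hS, conj_diag_pow hU hU', conj_diag_quad]
  have hs0 : ∑ l, ‖(Uᴴ *ᵥ b) l‖ ^ 2 ≤ L := by
    have h0 := hs 0
    simp only [pow_zero, Matrix.one_mulVec, one_mul] at h0
    have h1 : star b ⬝ᵥ b = ((∑ l, ‖b l‖ ^ 2 : ℝ) : ℂ) := by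
      simp only [dotProduct, Pi.star_apply]
      push_cast
      exact Finset.sum_congr rfl fun l _ => Complex.conj_mul' (b l)
    rw [h1] at h0
    have h2 : ∑ l, ‖b l‖ ^ 2 = ∑ l, ‖(Uᴴ *ᵥ b) l‖ ^ 2 := by exact_mod_cast h0
    linarith
  induction m generalizing i with
  | zero =>
    refine ⟨_, by rw [pow_zero, mul_one, hs], ?_, ?_⟩
    · exact Finset.sum_nonneg fun l _ => mul_nonneg (pow_nonneg (hlam l) _) (by positivity)
    · simp
  | succ m ih =>
    obtain ⟨r1, h1, h1n, h1le⟩ := ih (i + 1)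
    obtain ⟨r0, h0, h0n, h0le⟩ := ih 0
    rw [pow_zero, one_mul] at h0
    have hsi : 0 ≤ ∑ l, lam l ^ i * ‖(Uᴴ *ᵥ b) l‖ ^ 2 :=
      Finset.sum_nonneg fun l _ => mul_nonneg (pow_nonneg (hlam l) _) (by positivity)
    refine ⟨r1 + (∑ l, lam l ^ i * ‖(Uᴴ *ᵥ b) l‖ ^ 2) * r0, ?_, by positivity, ?_⟩
    · push_cast at h1 hs ⊢
      rw [← h1, ← h0, ← hs, pow_succ' (S + _) m]
      generalize (S + Matrix.vecMulVec b (star b)) ^ m = T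
      have : (S ^ i * ((S + Matrix.vecMulVec b (star b)) * T)) *ᵥ b =
          (S ^ (i + 1) * T) *ᵥ b + (star b ⬝ᵥ (T *ᵥ b)) • (S ^ i *ᵥ b) := by
        rw [Matrix.add_mul, Matrix.mul_add, Matrix.add_mulVec, ← Matrix.mul_assoc, ← pow_succ]
        congr 1
        rw [← Matrix.mulVec_mulVec, ← Matrix.mulVec_mulVec, Matrix.vecMulVec_mulVec]
        rw [← Matrix.mulVec_smul]
        simp
      rw [this, dotProduct_add, dotProduct_smul, smul_eq_mul]
      ring
    · have hch := chebyshev_weighted (fun l => ‖(Uᴴ *ᵥ b) l‖ ^ 2) lam (fun l => by positivity)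
        hlam hL0 i m
      have hv : 0 ≤ ∑ l, lam l ^ i * (lam l + L) ^ m * ‖(Uᴴ *ᵥ b) l‖ ^ 2 :=
        Finset.sum_nonneg fun l _ => by
          have := hlam l
          positivity
      have hr0 : r0 ≤ ∑ l, (lam l + L) ^ m * ‖(Uᴴ *ᵥ b) l‖ ^ 2 := by simpa using h0le
      have e : ∑ l, lam l ^ i * (lam l + L) ^ (m + 1) * ‖(Uᴴ *ᵥ b) l‖ ^ 2 =
          ∑ l, lam l ^ (i + 1) * (lam l + L) ^ m * ‖(Uᴴ *ᵥ b) l‖ ^ 2 +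
          L * ∑ l, lam l ^ i * (lam l + L) ^ m * ‖(Uᴴ *ᵥ b) l‖ ^ 2 := by
        rw [Finset.mul_sum, ← Finset.sum_add_distrib]
        exact Finset.sum_congr rfl fun l _ => by ring
      rw [e]
      have := mul_le_mul_of_nonneg_left hr0 hsi
      have := mul_le_mul_of_nonneg_right hs0 hv
      linarith

/-- Scalar inequality that closes the recursion for the trace moment: above the threshold `θ` the
shift by `L ≤ x / (k + 1)` costs at most a factor `e ≤ 3`, which `6ρ ≤ x` absorbs; below `θ` the left
side is bounded by its value at `θ`. -/
lemma shift_pow_le {x L θ ρ : ℝ} (k : ℕ) (hx : 0 ≤ x) (hL : 0 ≤ L) (hρ : 0 ≤ ρ)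
    (h1 : (k + 1 : ℕ) * L ≤ θ) (h2 : 6 * ρ ≤ θ) :
    ρ * (x + L) ^ k ≤ x ^ (k + 1) / 2 + ρ * (θ + L) ^ k := by
  rcases le_total θ x with h | h
  · have hk : (0:ℝ) < (k + 1 : ℕ) := by positivity
    have a1 : x + L ≤ x * (1 + 1 / (k + 1 : ℕ)) := by
      have : L ≤ x / (k + 1 : ℕ) := by
        rw [le_div_iff₀ hk]
        linarith
      calc x + L ≤ x + x / (k + 1 : ℕ) := by linarith
        _ = _ := by ring
    have a2 : (1 + 1 / ((k + 1 : ℕ) : ℝ)) ^ k ≤ 3 := by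
      have b1 : 1 + 1 / ((k + 1 : ℕ) : ℝ) ≤ Real.exp (1 / ((k + 1 : ℕ) : ℝ)) := by
        rw [add_comm]
        exact Real.add_one_le_exp _
      calc (1 + 1 / ((k + 1 : ℕ) : ℝ)) ^ k ≤ (Real.exp (1 / ((k + 1 : ℕ) : ℝ))) ^ k := by
            gcongr
        _ = Real.exp (k * (1 / ((k + 1 : ℕ) : ℝ))) := by rw [← Real.exp_nat_mul]
        _ ≤ Real.exp 1 := by
            apply Real.exp_le_exp.2
            rw [mul_one_div, div_le_one hk]
            push_cast
            linarith
        _ ≤ 3 := by linarith [Real.exp_one_lt_d9]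
    have a3 : (x + L) ^ k ≤ x ^ k * 3 := by
      calc (x + L) ^ k ≤ (x * (1 + 1 / (k + 1 : ℕ))) ^ k := by gcongr
        _ = x ^ k * (1 + 1 / ((k + 1 : ℕ) : ℝ)) ^ k := mul_pow _ _ _
        _ ≤ _ := by gcongr
    have a4 : ρ * (x + L) ^ k ≤ x ^ (k + 1) / 2 := by
      have hxk : 0 ≤ x ^ k := by positivity
      calc ρ * (x + L) ^ k ≤ ρ * (x ^ k * 3) := by gcongr
        _ = (6 * ρ) * x ^ k / 2 := by ring
        _ ≤ x * x ^ k / 2 := by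
            have : 6 * ρ ≤ x := by linarith
            gcongr
        _ = _ := by ring
    have : 0 ≤ ρ * (θ + L) ^ k := by
      have : 0 ≤ θ := by linarith
      positivity
    linarith
  · have : ρ * (x + L) ^ k ≤ ρ * (θ + L) ^ k := by gcongr
    have : 0 ≤ x ^ (k + 1) := by positivity
    linarith

/-- The restricted Gram matrix is the sum of the rank-one matrices of the selected columns. -/
lemma bern_sandwich {ι : Type*} [Fintype ι] [DecidableEq ι] {n : ℕ} (B : Matrix ι (Fin n) ℂ)
    (f : Fin n → Bool) :
    B * bernM f * Bᴴ = ∑ j, if f j then Matrix.vecMulVec (B.col j) (star (B.col j)) else 0 := by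
  ext a c
  rw [Matrix.mul_apply, Matrix.sum_apply]
  simp only [bernM, Matrix.mul_diagonal, Matrix.conjTranspose_apply]
  refine Finset.sum_congr rfl fun j _ => ?_
  by_cases hj : f j <;> simp [hj, Matrix.vecMulVec_apply]

lemma bern_sandwich_psd {ι : Type*} [Fintype ι] [DecidableEq ι] {n : ℕ} (B : Matrix ι (Fin n) ℂ)
    (f : Fin n → Bool) : (B * bernM f * Bᴴ).PosSemidef := by
  have h : (bernM f).PosSemidef := by
    refine Matrix.PosSemidef.diagonal fun i => ?_
    by_cases hi : f i <;> simp [hi]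
  exact h.mul_mul_conjTranspose_same B

/-- Trace-moment form of the matrix Chernoff inequality for a random column restriction of a
contraction `B` whose columns have squared length at most `L`. -/
lemma chernoff_trace {ι : Type*} [Fintype ι] [DecidableEq ι] {n : ℕ} (B : Matrix ι (Fin n) ℂ)
    {ρ L θ : ℝ} (h0 : 0 ≤ ρ) (h1 : ρ ≤ 1) (hL0 : 0 ≤ L)
    (hL : ∀ j, ∑ i, ‖B i j‖ ^ 2 ≤ L)
    (hB : ∀ u : ι → ℂ, ∑ i, ‖u i‖ ^ 2 = 1 → ∑ j, ‖(u ᵥ* B) j‖ ^ 2 ≤ 1)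
    {k : ℕ} (hk : 1 ≤ k) (hθ1 : k * L ≤ θ) (hθ2 : 6 * ρ ≤ θ) :
    ex ρ (fun f : Fin n → Bool => (Matrix.trace ((B * bernM f * Bᴴ) ^ k)).re) ≤ Fintype.card ι * (2 * θ) ^ k := by
  obtain ⟨k, rfl⟩ : ∃ k', k = k' + 1 := ⟨k - 1, by omega⟩
  set X := ex ρ (fun f : Fin n → Bool => (Matrix.trace ((B * bernM f * Bᴴ) ^ (k + 1))).re) with hX
  have hθ0 : 0 ≤ θ := by linarith
  -- Expand one factor of the power and condition on its selector.
  have e1 : X = ρ * ex ρ (fun f : Fin n → Bool => ∑ j, (star (B.col j) ⬝ᵥ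
      (((B * bernM (Function.update f j true) * Bᴴ) ^ k) *ᵥ (B.col j))).re) := by
    rw [ex_sum, Finset.mul_sum]
    rw [Finset.sum_congr rfl fun j _ => (ex_ite ρ j (fun f : Fin n → Bool => (star (B.col j) ⬝ᵥ
      (((B * bernM f * Bᴴ) ^ k) *ᵥ (B.col j))).re)).symm]
    rw [← ex_sum, hX]
    congr 1
    funext f
    rw [pow_succ']
    generalize (B * bernM f * Bᴴ) ^ k = T
    rw [bern_sandwich B f, Finset.sum_mul, Matrix.trace_sum, Complex.re_sum]
    refine Finset.sum_congr rfl fun j _ => ?_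
    by_cases hj : f j
    · simp only [hj, if_true]
      rw [Matrix.vecMulVec_mul, Matrix.trace_vecMulVec, dotProduct_comm,
        ← Matrix.dotProduct_mulVec]
    · simp [hj]
  have e2 : ∀ f : Fin n → Bool, ρ * (∑ j, (star (B.col j) ⬝ᵥ
      (((B * bernM (Function.update f j true) * Bᴴ) ^ k) *ᵥ (B.col j))).re) ≤
      (Matrix.trace ((B * bernM f * Bᴴ) ^ (k + 1))).re / 2 +
        Fintype.card ι * (ρ * (θ + L) ^ k) := by
    intro f
    obtain ⟨lam, U, hlam, hU, hU', hS⟩ := psd_spectral (bern_sandwich_psd B f)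
    have hj : ∀ j, (star (B.col j) ⬝ᵥ
        (((B * bernM (Function.update f j true) * Bᴴ) ^ k) *ᵥ (B.col j))).re ≤
        ∑ l, (lam l + L) ^ k * ‖(Uᴴ *ᵥ (B.col j)) l‖ ^ 2 := by
      intro j
      by_cases hfj : f j
      · have : Function.update f j true = f := by
          rw [← hfj, Function.update_eq_self]
        rw [this, hS, conj_diag_pow hU hU', conj_diag_quad, Complex.ofReal_re]
        refine Finset.sum_le_sum fun l _ => ?_
        have := hlam l
        gcongr
        linarith
      · have : B * bernM (Function.update f j true) * Bᴴ =
            B * bernM f * Bᴴ + Matrix.vecMulVec (B.col j) (star (B.col j)) := by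
          rw [bern_sandwich, bern_sandwich, ← Finset.add_sum_erase _ _ (Finset.mem_univ j),
            ← Finset.add_sum_erase (Finset.univ) (fun j => if f j then _ else _)
              (Finset.mem_univ j)]
          simp only [hfj, Function.update_self, if_true]
          rw [add_comm]
          simp only [Bool.false_eq_true, if_false, zero_add]
          congr 1
          refine Finset.sum_congr rfl fun i hi => ?_
          rw [Function.update_of_ne (Finset.ne_of_mem_erase hi)]
        obtain ⟨r, hr, -, hle⟩ := rank_one_update_le hU hU' hlam hS (B.col j) (hL j) k 0
        rw [pow_zero, one_mul] at hr
        rw [this, hr, Complex.ofReal_re]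
        simpa using hle
    have hrow : ∀ l, ∑ j, ‖(Uᴴ *ᵥ (B.col j)) l‖ ^ 2 ≤ 1 := by
      intro l
      have hu : ∑ i, ‖Uᴴ l i‖ ^ 2 = 1 := by
        have h := congrFun (congrFun hU l) l
        rw [Matrix.mul_apply, Matrix.one_apply_eq] at h
        have h' : ((∑ i, ‖Uᴴ l i‖ ^ 2 : ℝ) : ℂ) = 1 := by
          rw [← h]
          push_cast
          refine Finset.sum_congr rfl fun i _ => ?_
          rw [← Complex.mul_conj', Matrix.conjTranspose_apply]
          simp
        exact_mod_cast h'
      exact hB (fun i => Uᴴ l i) hu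
    calc ρ * (∑ j, (star (B.col j) ⬝ᵥ
          (((B * bernM (Function.update f j true) * Bᴴ) ^ k) *ᵥ (B.col j))).re)
        ≤ ρ * ∑ j, ∑ l, (lam l + L) ^ k * ‖(Uᴴ *ᵥ (B.col j)) l‖ ^ 2 := by
          gcongr with j _
          exact hj j
      _ = ρ * ∑ l, (lam l + L) ^ k * ∑ j, ‖(Uᴴ *ᵥ (B.col j)) l‖ ^ 2 := by
          rw [Finset.sum_comm]
          simp only [Finset.mul_sum]
      _ ≤ ρ * ∑ l, (lam l + L) ^ k * 1 := by
          gcongr with l _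
          · have := hlam l
            positivity
          · exact hrow l
      _ = ∑ l, ρ * (lam l + L) ^ k := by rw [Finset.mul_sum]; simp
      _ ≤ ∑ l, (lam l ^ (k + 1) / 2 + ρ * (θ + L) ^ k) :=
          Finset.sum_le_sum fun l _ => shift_pow_le k (hlam l) hL0 h0 hθ1 hθ2
      _ = _ := by
          rw [hS, conj_diag_pow hU hU', conj_diag_trace hU, Finset.sum_add_distrib,
            Finset.sum_div]
          simp
  have e3 : X ≤ X / 2 + Fintype.card ι * (ρ * (θ + L) ^ k) := by
    calc X ≤ ex ρ (fun f : Fin n → Bool => (1/2 : ℝ) * (Matrix.trace ((B * bernM f * Bᴴ) ^ (k + 1))).re +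
        Fintype.card ι * (ρ * (θ + L) ^ k)) := by
          rw [e1, ← ex_const_mul]
          refine ex_mono h0 h1 fun f => (e2 f).trans (le_of_eq (by ring))
      _ = _ := by
          rw [ex_add, ex_const, ex_const_mul]
          ring
  have e4 : L ≤ θ := by
    refine le_trans ?_ hθ1
    have : (1:ℝ) ≤ (k + 1 : ℕ) := by push_cast; linarith [Nat.cast_nonneg (α := ℝ) k]
    nlinarith
  have e5 : ρ * (θ + L) ^ k ≤ θ * (2 * θ) ^ k := by
    have : θ + L ≤ 2 * θ := by linarith
    have : ρ ≤ θ := by linarith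
    gcongr
  have e6 : (Fintype.card ι : ℝ) * (ρ * (θ + L) ^ k) ≤ Fintype.card ι * (θ * (2 * θ) ^ k) := by
    gcongr
  calc X ≤ 2 * (Fintype.card ι * (θ * (2 * θ) ^ k)) := by linarith
    _ = _ := by ring

/-! ### Polynomials in the selection probability -/

open Polynomial in
/-- Coefficients of a product of linear factors, bounded by the value at `1` of the product with all
signs made positive. -/
lemma norm_coeff_prod_le {ι : Type*} (s : Finset ι) (c a : ι → ℂ) (t : ℕ) :
    ‖(∏ i ∈ s, (C (c i) * (X - C (a i)))).coeff t‖ ≤ ∏ i ∈ s, ‖c i‖ * (1 + ‖a i‖) := by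
  classical
  induction s using Finset.induction_on generalizing t with
  | empty =>
    simp only [Finset.prod_empty, coeff_one]
    split_ifs <;> simp
  | insert i s hi ih =>
    rw [Finset.prod_insert hi, Finset.prod_insert hi, mul_assoc, coeff_C_mul, norm_mul, mul_assoc]
    refine mul_le_mul_of_nonneg_left ?_ (norm_nonneg _)
    set Q := ∏ i ∈ s, (C (c i) * (X - C (a i)))
    set K := ∏ i ∈ s, ‖c i‖ * (1 + ‖a i‖)
    have hK : 0 ≤ K := Finset.prod_nonneg fun i _ => by positivity
    have h1 : ‖(X * Q).coeff t‖ ≤ K := by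
      cases t with
      | zero => simpa using hK
      | succ t => rw [coeff_X_mul]; exact ih t
    rw [sub_mul, coeff_sub, coeff_C_mul]
    calc _ ≤ ‖(X * Q).coeff t‖ + ‖a i * Q.coeff t‖ := norm_sub_le _ _
      _ ≤ K + ‖a i‖ * K := by
          rw [norm_mul]
          gcongr
          exact ih t
      _ = _ := by ring

/-- The absolute value of the denominator of the `j`-th Lagrange basis polynomial for the nodes `0, …, d`. -/
lemma prod_node_dist (d j : ℕ) (hj : j ≤ d) :
    ∏ i ∈ (Finset.range (d + 1)).erase j, |(j : ℝ) - i| = (j.factorial * (d - j).factorial : ℕ) := by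
  induction d, hj using Nat.le_induction with
  | base =>
    have : (Finset.range (j + 1)).erase j = Finset.range j := by
      ext i; simp; omega
    rw [this, Nat.sub_self, Nat.factorial_zero, mul_one, ← Finset.prod_range_reflect,
      ← Finset.prod_range_add_one_eq_factorial, Nat.cast_prod]
    refine Finset.prod_congr rfl fun i hi => ?_
    rw [Finset.mem_range] at hi
    rw [Nat.sub_sub, Nat.cast_sub (by omega)]
    push_cast
    rw [abs_of_nonneg] <;> linarith [Nat.cast_nonneg (α := ℝ) i]
  | succ d hd ih =>
    have : (Finset.range (d + 1 + 1)).erase j = insert (d + 1) ((Finset.range (d + 1)).erase j) := by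
      ext i; simp; omega
    rw [this, Finset.prod_insert (by simp), ih, Nat.sub_add_comm hd, Nat.factorial_succ]
    have h2 : |(j : ℝ) - (d + 1 : ℕ)| = ((d - j + 1 : ℕ) : ℝ) := by
      rw [abs_sub_comm, abs_of_nonneg]
      · push_cast [Nat.cast_sub hd]; ring
      · have : (j : ℝ) ≤ d := by exact_mod_cast hd
        push_cast; linarith
    rw [h2]
    push_cast
    ring

/-- Bound for the numerator, as it arises from `norm_coeff_prod_le`, of the `j`-th Lagrange basis
polynomial for the nodes `0, 1/d, …, 1`. -/
lemma prod_shift_le (d j : ℕ) (hd : 1 ≤ d) (hj : j ≤ d) :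
    ∏ i ∈ (Finset.range (d + 1)).erase j, ((d : ℝ) + i) ≤ (d.factorial * (2 * d).choose d : ℕ) := by
  have h1 : ∏ i ∈ Finset.range (d + 1), ((d : ℝ) + i) =
      (d.factorial * (2 * d).choose d : ℕ) * d := by
    rw [Finset.prod_range_succ', two_mul, ← Nat.ascFactorial_eq_factorial_mul_choose,
      Nat.ascFactorial_eq_prod_range]
    push_cast
    rw [add_zero]
    congr 1
    exact Finset.prod_congr rfl fun i _ => by ring
  have hjm : j ∈ Finset.range (d + 1) := by simp; omega
  rw [← Finset.mul_prod_erase _ _ hjm] at h1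
  have hd0 : (0 : ℝ) < d := by exact_mod_cast hd
  have hP : 0 ≤ ∏ i ∈ (Finset.range (d + 1)).erase j, ((d : ℝ) + i) :=
    Finset.prod_nonneg fun i _ => by positivity
  have : (d : ℝ) * ∏ i ∈ (Finset.range (d + 1)).erase j, ((d : ℝ) + i) ≤
      d * (d.factorial * (2 * d).choose d : ℕ) := by
    have : (0:ℝ) ≤ j := Nat.cast_nonneg j
    nlinarith
  exact le_of_mul_le_mul_left this hd0

/-- Coefficients of a polynomial of degree at most `d` are at most `8 ^ d` times its maximum on
the grid `{0, 1/d, …, 1}`. This replaces the Markov–Bernstein inequality: Lagrange interpolation on an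
equispaced grid loses only a factor exponential in the degree, which is affordable here. -/
lemma norm_coeff_le_of_grid (P : Polynomial ℂ) (d : ℕ) (hd : 1 ≤ d) (hP : P.natDegree ≤ d) (M : ℝ)
    (hM : ∀ j ≤ d, ‖P.eval ((j : ℂ) / d)‖ ≤ M) (t : ℕ) : ‖P.coeff t‖ ≤ 8 ^ d * M := by
  have hd0 : (0 : ℝ) < d := by exact_mod_cast hd
  have hdC : (d : ℂ) ≠ 0 := by exact_mod_cast hd0.ne'
  have hM0 : 0 ≤ M := (norm_nonneg _).trans (hM 0 (Nat.zero_le _))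
  set v : ℕ → ℂ := fun i => (i : ℂ) / d with hv
  have hinj : Set.InjOn v (Finset.range (d + 1)) := by
    intro i _ j _ hij
    have : (i : ℂ) = j := by
      simp only [hv] at hij
      field_simp at hij
      exact hij
    exact_mod_cast this
  have hdeg : P.degree < (Finset.range (d + 1)).card := by
    rw [Finset.card_range]
    refine lt_of_le_of_lt Polynomial.degree_le_natDegree ?_
    exact_mod_cast Nat.lt_succ_of_le hP
  have hfac : ∀ i j : ℕ, ‖(v j - v i)⁻¹‖ * (1 + ‖v i‖) = ((d : ℝ) + i) / |(j : ℝ) - i| := by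
    intro i j
    have e1 : v j - v i = (((j : ℝ) - i) / d : ℝ) := by
      simp only [hv]; push_cast; ring
    have e2 : v i = ((i : ℝ) / d : ℝ) := by simp only [hv]; push_cast; ring
    rw [e1, e2, norm_inv, Complex.norm_real, Complex.norm_real, Real.norm_eq_abs,
      Real.norm_eq_abs, abs_div, abs_div, Nat.abs_cast, Nat.abs_cast, inv_div]
    by_cases h : |(j : ℝ) - i| = 0
    · simp [h]
    · field_simp
  rw [Lagrange.eq_interpolate hinj hdeg, Lagrange.interpolate_apply, Polynomial.finsetSum_coeff]
  have hterm : ∀ j ∈ Finset.range (d + 1),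
      ‖(Polynomial.C (P.eval (v j)) * Lagrange.basis (Finset.range (d + 1)) v j).coeff t‖ ≤
        M * ((2 * d).choose d * d.choose j : ℕ) := by
    intro j hj
    have hjd : j ≤ d := by simpa [Nat.lt_succ_iff] using hj
    rw [Polynomial.coeff_C_mul, norm_mul]
    refine mul_le_mul (hM j hjd) ?_ (norm_nonneg _) hM0
    unfold Lagrange.basis Lagrange.basisDivisor
    refine (norm_coeff_prod_le _ _ _ t).trans ?_
    simp_rw [hfac]
    rw [Finset.prod_div_distrib, prod_node_dist d j hjd]
    have hpos : (0 : ℝ) < (j.factorial * (d - j).factorial : ℕ) := by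
      exact_mod_cast Nat.mul_pos (Nat.factorial_pos _) (Nat.factorial_pos _)
    rw [div_le_iff₀ hpos]
    refine (prod_shift_le d j hd hjd).trans (le_of_eq ?_)
    norm_cast
    rw [← Nat.choose_mul_factorial_mul_factorial hjd]
    ring
  refine (norm_sum_le _ _).trans ((Finset.sum_le_sum hterm).trans ?_)
  rw [← Finset.mul_sum, ← Nat.cast_sum, ← Finset.mul_sum, Nat.sum_range_choose, mul_comm]
  refine mul_le_mul_of_nonneg_right ?_ hM0
  have h4 : (2 * d).choose d ≤ 2 ^ (2 * d) := Nat.choose_le_two_pow _ _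
  have : (2 * d).choose d * 2 ^ d ≤ 8 ^ d := by
    calc _ ≤ 2 ^ (2 * d) * 2 ^ d := by gcongr
      _ = 8 ^ d := by rw [pow_mul, ← mul_pow]; norm_num
  exact_mod_cast this

/-- The monomial `∏ i ∈ S, f i` in the selectors. -/
def selMono {n : ℕ} (S : Finset (Fin n)) : (Fin n → Bool) → ℂ :=
  fun f => ∏ i ∈ S, if f i then 1 else 0

/-- Functions of the selectors that are polynomials of degree at most `d`. As selectors are
idempotent, multilinear monomials suffice. -/
def lowDeg (n d : ℕ) : Submodule ℂ ((Fin n → Bool) → ℂ) :=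
  Submodule.span ℂ {G | ∃ S : Finset (Fin n), S.card ≤ d ∧ G = selMono S}

lemma selMono_mem {n d : ℕ} {S : Finset (Fin n)} (h : S.card ≤ d) : selMono S ∈ lowDeg n d :=
  Submodule.subset_span ⟨S, h, rfl⟩

lemma selMono_mul {n : ℕ} (S T : Finset (Fin n)) : selMono S * selMono T = selMono (S ∪ T) := by
  funext f
  simp only [selMono, Pi.mul_apply, Finset.prod_ite_zero, Finset.prod_const_one]
  by_cases hS : ∀ i ∈ S, f i = true
  · by_cases hT : ∀ i ∈ T, f i = true
    · have : ∀ i ∈ S ∪ T, f i = true := fun i hi => (Finset.mem_union.1 hi).elim (hS i) (hT i)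
      rw [if_pos hS, if_pos hT, if_pos this, one_mul]
    · have : ¬ ∀ i ∈ S ∪ T, f i = true := fun h => hT fun i hi => h i (Finset.mem_union_right _ hi)
      rw [if_neg hT, if_neg this, mul_zero]
  · have : ¬ ∀ i ∈ S ∪ T, f i = true := fun h => hS fun i hi => h i (Finset.mem_union_left _ hi)
    rw [if_neg hS, if_neg this, zero_mul]

lemma lowDeg_mul {n a b : ℕ} {G H : (Fin n → Bool) → ℂ} (hG : G ∈ lowDeg n a)
    (hH : H ∈ lowDeg n b) : G * H ∈ lowDeg n (a + b) := by
  have h := Submodule.mul_mem_mul hG hH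
  unfold lowDeg at h
  rw [Submodule.span_mul_span] at h
  refine Submodule.span_mono ?_ h
  rintro _ ⟨_, ⟨S, hS, rfl⟩, _, ⟨T, hT, rfl⟩, rfl⟩
  refine ⟨S ∪ T, (Finset.card_union_le S T).trans (by omega), ?_⟩
  exact selMono_mul S T

lemma lowDeg_const {n d : ℕ} (c : ℂ) : (fun _ => c) ∈ lowDeg n d := by
  have : (fun _ : Fin n → Bool => c) = c • selMono ∅ := by
    funext f; simp [selMono]
  rw [this]
  exact Submodule.smul_mem _ _ (selMono_mem (by simp))

/-- The expectation of a degree-`d` function of the selectors is a polynomial of degree at most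
`d` in the selection probability. -/
lemma exists_poly_of_lowDeg {n d : ℕ} {G : (Fin n → Bool) → ℂ} (hG : G ∈ lowDeg n d) :
    ∃ P : Polynomial ℂ, P.natDegree ≤ d ∧ ∀ s : ℝ, ∑ f, (bw s f : ℂ) * G f = P.eval (s : ℂ) := by
  unfold lowDeg at hG
  induction hG using Submodule.span_induction with
  | mem G h =>
    obtain ⟨S, hS, rfl⟩ := h
    refine ⟨Polynomial.X ^ S.card, by simpa using hS, fun s => ?_⟩
    have h := ex_prod (n := n) s S
    unfold ex at h
    have h' := congrArg (fun x : ℝ => (x : ℂ)) h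
    simp only [selMono, Polynomial.eval_pow, Polynomial.eval_X]
    push_cast at h'
    rw [← h']
    refine Finset.sum_congr rfl fun f _ => ?_
    congr 1
    exact Finset.prod_congr rfl fun i _ => by split_ifs <;> simp
  | zero => exact ⟨0, by simp, fun s => by simp⟩
  | add G H _ _ hG hH =>
    obtain ⟨P, hP, hP'⟩ := hG
    obtain ⟨Q, hQ, hQ'⟩ := hH
    refine ⟨P + Q, (Polynomial.natDegree_add_le _ _).trans (max_le hP hQ), fun s => ?_⟩
    rw [Polynomial.eval_add, ← hP', ← hQ', ← Finset.sum_add_distrib]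
    exact Finset.sum_congr rfl fun f _ => by simp [mul_add]
  | smul c G _ hG =>
    obtain ⟨P, hP, hP'⟩ := hG
    refine ⟨Polynomial.C c * P, (Polynomial.natDegree_C_mul_le _ _).trans hP, fun s => ?_⟩
    rw [Polynomial.eval_mul, Polynomial.eval_C, ← hP', Finset.mul_sum]
    exact Finset.sum_congr rfl fun f _ => by simp; ring

/-- The trace moment of order `2k` of the restricted matrix, in the form given by `trace_gram_pow`,
has degree at most `2k` in the selectors. The norm moment itself is not a polynomial. -/
lemma lowDeg_trace {n : ℕ} (A : Matrix (Fin n) (Fin n) ℂ) (k : ℕ) :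
    (fun f => Matrix.trace ((bernM f * Aᴴ * bernM f * A) ^ k)) ∈ lowDeg n (2 * k) := by
  have h1 : ∀ (C : Matrix (Fin n) (Fin n) ℂ) i j,
      (fun f => (bernM f * C) i j) ∈ lowDeg n 1 := by
    intro C i j
    have : (fun f : Fin n → Bool => (bernM f * C) i j) = C i j • selMono {i} := by
      funext f
      rw [bernM, Matrix.diagonal_mul]
      simp [selMono]
    rw [this]
    exact Submodule.smul_mem _ _ (selMono_mem (by simp))
  have hmul : ∀ (a b : ℕ) (Y Z : (Fin n → Bool) → Matrix (Fin n) (Fin n) ℂ),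
      (∀ i j, (fun f => Y f i j) ∈ lowDeg n a) → (∀ i j, (fun f => Z f i j) ∈ lowDeg n b) →
      ∀ i j, (fun f => (Y f * Z f) i j) ∈ lowDeg n (a + b) := by
    intro a b Y Z hY hZ i j
    have : (fun f => (Y f * Z f) i j) = ∑ l, (fun f => Y f i l) * (fun f => Z f l j) := by
      funext f
      simp [Matrix.mul_apply]
    rw [this]
    exact Submodule.sum_mem _ fun l _ => lowDeg_mul (hY i l) (hZ l j)
  have hpow : ∀ k i j, (fun f => ((bernM f * Aᴴ * bernM f * A) ^ k) i j) ∈ lowDeg n (2 * k) := by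
    intro k
    induction k with
    | zero =>
      intro i j
      simp only [pow_zero]
      exact lowDeg_const _
    | succ k ih =>
      intro i j
      simp only [pow_succ, mul_add, mul_one]
      refine hmul (2 * k) 2 _ _ ih ?_ i j
      intro i j
      have := hmul 1 1 _ _ (h1 Aᴴ) (h1 A) i j
      simpa only [Matrix.mul_assoc] using this
  have : (fun f : Fin n → Bool => Matrix.trace ((bernM f * Aᴴ * bernM f * A) ^ k)) =
      ∑ i, fun f => ((bernM f * Aᴴ * bernM f * A) ^ k) i i := by
    funext f
    simp [Matrix.trace]
  rw [this]
  exact Submodule.sum_mem _ fun i _ => hpow k i i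

/-! ### Spectral norms, traces and extrapolation -/

lemma specNorm_eq {n : ℕ} (A : Matrix (Fin n) (Fin n) ℂ) : specNorm A = ‖A‖ := by
  rw [Matrix.l2_opNorm_def]
  rfl

lemma sum_mulVec_sq_le {n : ℕ} (A : Matrix (Fin n) (Fin n) ℂ) (hA : ‖A‖ ≤ 1) (x : Fin n → ℂ) :
    ∑ i, ‖(A *ᵥ x) i‖ ^ 2 ≤ ∑ i, ‖x i‖ ^ 2 := by
  have h := Matrix.l2_opNorm_mulVec A (WithLp.toLp 2 x)
  have h2 : ‖(WithLp.toLp 2 (A *ᵥ x) : EuclideanSpace ℂ (Fin n))‖ ≤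
      ‖(WithLp.toLp 2 x : EuclideanSpace ℂ (Fin n))‖ := by
    refine le_trans h ?_
    exact mul_le_of_le_one_left (norm_nonneg _) hA
  have h3 := pow_le_pow_left₀ (norm_nonneg _) h2 2
  rwa [EuclideanSpace.norm_sq_eq, EuclideanSpace.norm_sq_eq] at h3

lemma sum_vecMul_sq_le {n : ℕ} (A : Matrix (Fin n) (Fin n) ℂ) (hA : ‖A‖ ≤ 1) (x : Fin n → ℂ) :
    ∑ i, ‖(x ᵥ* A) i‖ ^ 2 ≤ ∑ i, ‖x i‖ ^ 2 := by
  have h := sum_mulVec_sq_le Aᴴ (by rwa [Matrix.l2_opNorm_conjTranspose]) (star x)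
  rw [← Matrix.star_vecMul] at h
  simpa using h

lemma col_sq_le {n : ℕ} (A : Matrix (Fin n) (Fin n) ℂ) (hA : ‖A‖ ≤ 1) (j : Fin n) :
    ∑ i, ‖A i j‖ ^ 2 ≤ 1 := by
  have h := sum_mulVec_sq_le A hA (Pi.single j 1)
  have e : ∑ i, ‖(Pi.single j 1 : Fin n → ℂ) i‖ ^ 2 = 1 := by
    rw [Finset.sum_eq_single j]
    · simp
    · intro i _ hi
      simp [hi]
    · simp
  rw [e] at h
  simpa using h

lemma norm_trace_le {n : ℕ} (A : Matrix (Fin n) (Fin n) ℂ) : ‖Matrix.trace A‖ ≤ n * ‖A‖ := by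
  have he : ∀ i, ‖A i i‖ ≤ ‖A‖ := by
    intro i
    have h := Matrix.l2_opNorm_mulVec A (EuclideanSpace.single i 1)
    rw [PiLp.norm_single, norm_one, mul_one] at h
    refine le_trans ?_ h
    refine le_trans (le_of_eq ?_) (PiLp.norm_apply_le _ i)
    simp
  calc ‖Matrix.trace A‖ ≤ ∑ i, ‖A i i‖ := norm_sum_le _ _
    _ ≤ ∑ _i : Fin n, ‖A‖ := Finset.sum_le_sum fun i _ => he i
    _ = n * ‖A‖ := by simp

/-- The top eigenvalue of a positive semidefinite matrix is dominated by the trace of a power. -/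
lemma norm_pow_le_trace {n : ℕ} {S : Matrix (Fin n) (Fin n) ℂ} (hS : S.PosSemidef) {k : ℕ}
    (hk : 1 ≤ k) : ‖S‖ ^ k ≤ (Matrix.trace (S ^ k)).re := by
  obtain ⟨lam, U, hlam, hU, hU', h⟩ := psd_spectral hS
  have hnU : ‖U‖ ≤ 1 := by
    have h1 := Matrix.l2_opNorm_conjTranspose_mul_self U
    rw [hU] at h1
    have h2 : ‖(1 : Matrix (Fin n) (Fin n) ℂ)‖ ≤ 1 := by
      rw [← Matrix.diagonal_one, Matrix.l2_opNorm_diagonal, pi_norm_le_iff_of_nonneg zero_le_one]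
      intro i
      simp
    nlinarith [norm_nonneg U]
  have hn : ‖S‖ ≤ ‖fun l => (lam l : ℂ)‖ := by
    rw [h]
    calc ‖U * Matrix.diagonal (fun l => (lam l : ℂ)) * Uᴴ‖
        ≤ ‖U‖ * ‖Matrix.diagonal (fun l => (lam l : ℂ))‖ * ‖Uᴴ‖ :=
          (norm_mul_le _ _).trans (mul_le_mul_of_nonneg_right (norm_mul_le _ _) (norm_nonneg _))
      _ ≤ 1 * ‖Matrix.diagonal (fun l => (lam l : ℂ))‖ * 1 := by
          rw [Matrix.l2_opNorm_conjTranspose]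
          gcongr
      _ = _ := by rw [Matrix.l2_opNorm_diagonal, one_mul, mul_one]
  rw [h, conj_diag_pow hU hU', conj_diag_trace hU, ← h]
  have hsum : ∀ l, lam l ^ k ≤ ∑ l, lam l ^ k := fun l =>
    Finset.single_le_sum (f := fun l => lam l ^ k) (fun l _ => pow_nonneg (hlam l) k)
      (Finset.mem_univ l)
  have hnn : 0 ≤ ∑ l, lam l ^ k := Finset.sum_nonneg fun l _ => pow_nonneg (hlam l) k
  have hk0 : k ≠ 0 := by omega
  have hr : ‖fun l => (lam l : ℂ)‖ ≤ (∑ l, lam l ^ k) ^ ((k : ℝ)⁻¹) := by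
    rw [pi_norm_le_iff_of_nonneg (Real.rpow_nonneg hnn _)]
    intro l
    rw [Complex.norm_real, Real.norm_of_nonneg (hlam l)]
    refine le_of_pow_le_pow_left₀ hk0 (Real.rpow_nonneg hnn _) ?_
    rw [Real.rpow_inv_natCast_pow hnn hk0]
    exact hsum l
  calc ‖S‖ ^ k ≤ ((∑ l, lam l ^ k) ^ ((k : ℝ)⁻¹)) ^ k := by
        gcongr
        exact hn.trans hr
    _ = _ := Real.rpow_inv_natCast_pow hnn hk0

lemma bernM_sq {n : ℕ} (f : Fin n → Bool) : bernM f * bernM f = bernM f := by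
  rw [bernM, Matrix.diagonal_mul_diagonal]
  congr 1
  funext i
  split_ifs <;> simp

lemma bernM_conjTranspose {n : ℕ} (f : Fin n → Bool) : (bernM f)ᴴ = bernM f := by
  rw [bernM, Matrix.diagonal_conjTranspose]
  congr 1
  funext i
  simp only [Pi.star_apply]
  split_ifs <;> simp

lemma norm_bernM_le {n : ℕ} (f : Fin n → Bool) : ‖bernM f‖ ≤ 1 := by
  rw [bernM, Matrix.l2_opNorm_diagonal, pi_norm_le_iff_of_nonneg zero_le_one]
  intro i
  split_ifs <;> simp

lemma norm_projOf_le {n : ℕ} (T : Finset (Fin n)) : ‖projOf T‖ ≤ 1 := by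
  rw [projOf, Matrix.l2_opNorm_diagonal, pi_norm_le_iff_of_nonneg zero_le_one]
  intro i
  split_ifs <;> simp

lemma norm_sandwich_le {n : ℕ} {P Q : Matrix (Fin n) (Fin n) ℂ} (A : Matrix (Fin n) (Fin n) ℂ)
    (hP : ‖P‖ ≤ 1) (hQ : ‖Q‖ ≤ 1) : ‖P * A * Q‖ ≤ ‖A‖ := by
  calc ‖P * A * Q‖ ≤ ‖P‖ * ‖A‖ * ‖Q‖ :=
        (norm_mul_le _ _).trans (mul_le_mul_of_nonneg_right (norm_mul_le _ _) (norm_nonneg _))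
    _ ≤ 1 * ‖A‖ * 1 := by gcongr
    _ = _ := by ring

/-- Since `R = bernM f` is a projection, each factor of the Gram matrix of `RAR` can be written with
two occurrences of `R` inside the trace. -/
lemma trace_gram_pow {n : ℕ} (A : Matrix (Fin n) (Fin n) ℂ) (f : Fin n → Bool) {k : ℕ}
    (hk : 1 ≤ k) :
    Matrix.trace (((bernM f * A * bernM f)ᴴ * (bernM f * A * bernM f)) ^ k) =
      Matrix.trace ((bernM f * Aᴴ * bernM f * A) ^ k) := by
  obtain ⟨k, rfl⟩ : ∃ k', k = k' + 1 := ⟨k - 1, by omega⟩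
  set R := bernM f with hR
  set Y := R * Aᴴ * R * A with hY
  have h1 : (R * A * R)ᴴ * (R * A * R) = Y * R := by
    rw [Matrix.conjTranspose_mul, Matrix.conjTranspose_mul, hR, bernM_conjTranspose, ← hR, hY]
    calc R * (Aᴴ * R) * (R * A * R) = R * Aᴴ * (R * R) * A * R := by
          simp only [Matrix.mul_assoc]
      _ = _ := by rw [hR, bernM_sq]
  have h2 : R * Y = Y := by
    rw [hY]
    calc R * (R * Aᴴ * R * A) = (R * R) * Aᴴ * R * A := by simp only [Matrix.mul_assoc]
      _ = _ := by rw [hR, bernM_sq]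
  have h3 : ∀ k, (Y * R) ^ (k + 1) = Y ^ (k + 1) * R := by
    intro k
    induction k with
    | zero => simp
    | succ k ih =>
      rw [pow_succ, ih, pow_succ Y (k + 1)]
      calc Y ^ (k + 1) * R * (Y * R) = Y ^ (k + 1) * (R * Y) * R := by
            simp only [Matrix.mul_assoc]
        _ = _ := by rw [h2]
  rw [h1, h3, Matrix.trace_mul_comm, pow_succ' Y, ← Matrix.mul_assoc, h2]

/-- Polynomial extrapolation: a moment bound `M` valid for selection probabilities in `[0, ρ]`
controls the moment at any probability `δ`. The moment is dominated by the trace moment, a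
polynomial of degree `2k` in the probability; its coefficients are estimated on the two intervals
`[0, ρ]` and `[0, 1]`. -/
lemma extrapolate {n : ℕ} (A : Matrix (Fin n) (Fin n) ℂ) (hA : ‖A‖ ≤ 1) {k : ℕ} (hk : 1 ≤ k)
    {ρ M : ℝ} (hρ0 : 0 < ρ) (hρ1 : ρ ≤ 1)
    (hM : ∀ s, 0 ≤ s → s ≤ ρ →
      (n : ℝ) * ex s (fun f : Fin n → Bool => ‖bernM f * A * bernM f‖ ^ (2 * k)) ≤ M)
    {δ : ℝ} (hδ0 : 0 ≤ δ) (hδ1 : δ ≤ 1) :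
    ex δ (fun f : Fin n → Bool => ‖bernM f * A * bernM f‖ ^ (2 * k)) ≤
      ∑ t ∈ Finset.range (2 * k + 1), 64 ^ k * min (M * (ρ⁻¹) ^ t) n * δ ^ t := by
  obtain ⟨P, hPd, hP⟩ := exists_poly_of_lowDeg (lowDeg_trace A k)
  have hG : ∀ f : Fin n → Bool, ‖Matrix.trace ((bernM f * Aᴴ * bernM f * A) ^ k)‖ ≤
      n * ‖bernM f * A * bernM f‖ ^ (2 * k) := by
    intro f
    rw [← trace_gram_pow A f hk]
    refine (norm_trace_le _).trans ?_
    gcongr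
    refine (norm_pow_le' _ (by omega)).trans (le_of_eq ?_)
    rw [Matrix.l2_opNorm_conjTranspose_mul_self, pow_mul, sq]
  have hPle : ∀ s : ℝ, 0 ≤ s → s ≤ 1 → ‖P.eval (s : ℂ)‖ ≤
      n * ex s (fun f : Fin n → Bool => ‖bernM f * A * bernM f‖ ^ (2 * k)) := by
    intro s h0 h1
    rw [← hP s, ← ex_const_mul]
    refine (norm_sum_le _ _).trans (Finset.sum_le_sum fun f _ => ?_)
    rw [norm_mul, Complex.norm_real, Real.norm_of_nonneg (bw_nonneg h0 h1 f)]
    exact mul_le_mul_of_nonneg_left (hG f) (bw_nonneg h0 h1 f)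
  have hX : ∀ f : Fin n → Bool, ‖bernM f * A * bernM f‖ ^ (2 * k) ≤
      (Matrix.trace ((bernM f * Aᴴ * bernM f * A) ^ k)).re := by
    intro f
    rw [← trace_gram_pow A f hk]
    refine le_trans (le_of_eq ?_)
      (norm_pow_le_trace (Matrix.posSemidef_conjTranspose_mul_self _) hk)
    rw [Matrix.l2_opNorm_conjTranspose_mul_self, pow_mul, sq]
  have hM' : ∀ s : ℝ, 0 ≤ s → s ≤ 1 → ‖P.eval (s : ℂ)‖ ≤ n := by
    intro s h0 h1
    refine (hPle s h0 h1).trans ?_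
    refine mul_le_of_le_one_right (Nat.cast_nonneg n) ?_
    refine (ex_mono h0 h1 (H := fun _ => 1) fun f => ?_).trans_eq (ex_const s 1)
    exact pow_le_one₀ (norm_nonneg _)
      ((norm_sandwich_le A (norm_bernM_le f) (norm_bernM_le f)).trans hA)
  have hgrid : ∀ j ≤ 2 * k, 0 ≤ (j : ℝ) / (2 * k : ℕ) ∧ (j : ℝ) / (2 * k : ℕ) ≤ 1 := by
    intro j hj
    have hk' : (0 : ℝ) < (2 * k : ℕ) := by exact_mod_cast (by omega : 0 < 2 * k)
    refine ⟨by positivity, ?_⟩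
    rw [div_le_one hk']
    exact_mod_cast hj
  have h64 : (8 : ℝ) ^ (2 * k) = 64 ^ k := by rw [pow_mul]; norm_num
  have hc1 : ∀ t, ‖P.coeff t‖ ≤ 64 ^ k * n := by
    intro t
    rw [← h64]
    refine norm_coeff_le_of_grid P (2 * k) (by omega) hPd _ (fun j hj => ?_) t
    have := hM' _ (hgrid j hj).1 (hgrid j hj).2
    simpa using this
  have hc2 : ∀ t, ‖P.coeff t‖ ≤ 64 ^ k * (M * (ρ⁻¹) ^ t) := by
    intro t
    have h : ‖(P.comp (Polynomial.C (ρ : ℂ) * Polynomial.X)).coeff t‖ ≤ 64 ^ k * M := by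
      rw [← h64]
      refine norm_coeff_le_of_grid _ (2 * k) (by omega) ?_ _ (fun j hj => ?_) t
      · refine Polynomial.natDegree_comp_le.trans ?_
        calc _ ≤ P.natDegree * 1 := Nat.mul_le_mul_left _
              ((Polynomial.natDegree_C_mul_le _ _).trans Polynomial.natDegree_X_le)
          _ ≤ _ := by omega
      · obtain ⟨a, b⟩ := hgrid j hj
        have s1 : ρ * ((j : ℝ) / (2 * k : ℕ)) ≤ ρ := mul_le_of_le_one_right hρ0.le b
        have := (hPle (ρ * ((j : ℝ) / (2 * k : ℕ))) (by positivity) (s1.trans hρ1)).trans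
          (hM _ (by positivity) s1)
        simpa using this
    rw [Polynomial.comp_C_mul_X_coeff, norm_mul, norm_pow, Complex.norm_real,
      Real.norm_of_nonneg hρ0.le] at h
    rw [inv_pow, ← mul_assoc, ← div_eq_mul_inv, le_div_iff₀ (by positivity)]
    exact h
  calc ex δ (fun f : Fin n → Bool => ‖bernM f * A * bernM f‖ ^ (2 * k))
      ≤ ex δ (fun f => (Matrix.trace ((bernM f * Aᴴ * bernM f * A) ^ k)).re) :=
        ex_mono hδ0 hδ1 hX
    _ = (P.eval (δ : ℂ)).re := by
        rw [← hP, Complex.re_sum]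
        exact Finset.sum_congr rfl fun f _ => by simp
    _ ≤ ‖P.eval (δ : ℂ)‖ := Complex.re_le_norm _
    _ ≤ ∑ t ∈ Finset.range (2 * k + 1), ‖P.coeff t‖ * δ ^ t := by
        rw [Polynomial.eval_eq_sum_range' (Nat.lt_succ_of_le hPd)]
        refine (norm_sum_le _ _).trans (Finset.sum_le_sum fun t _ => ?_)
        rw [norm_mul, norm_pow, Complex.norm_real, Real.norm_of_nonneg hδ0]
    _ ≤ _ := by
        refine Finset.sum_le_sum fun t _ => ?_
        refine mul_le_mul_of_nonneg_right ?_ (by positivity)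
        rw [mul_min_of_nonneg _ _ (by positivity)]
        exact le_min (hc2 t) (hc1 t)

/-! ### Decoupling and the moment bound for small probabilities -/

/-- The scalar case of the Chernoff estimate, applied to the squared length of a random restriction
of one column. -/
lemma ex_col_pow_le {n : ℕ} (A : Matrix (Fin n) (Fin n) ℂ) (hA : ‖A‖ ≤ 1) {μ s : ℝ}
    (hμ : ∀ i j, ‖A i j‖ ≤ μ) (hs0 : 0 ≤ s) (hs1 : s ≤ 1) {k : ℕ} (hk : 1 ≤ k) (j : Fin n) :
    ex s (fun f : Fin n → Bool => (∑ i, if f i then ‖A i j‖ ^ 2 else 0) ^ k) ≤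
      (2 * (k * μ ^ 2 + 6 * s)) ^ k := by
  set B : Matrix Unit (Fin n) ℂ := Matrix.of fun _ i => A i j with hBdef
  have hk0 : (0 : ℝ) ≤ k := Nat.cast_nonneg k
  have h := chernoff_trace B (L := μ ^ 2) (θ := k * μ ^ 2 + 6 * s) hs0 hs1 (by positivity)
    (fun i => by
      have h0 := hμ i j
      simp only [hBdef, Matrix.of_apply, Finset.univ_unique, Finset.sum_const,
        Finset.card_singleton, one_smul]
      gcongr)
    (fun u hu => by
      have hu' : ‖u ()‖ ^ 2 = 1 := by simpa using hu
      have e : ∀ i, ‖(u ᵥ* B) i‖ ^ 2 = ‖A i j‖ ^ 2 := by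
        intro i
        simp only [Matrix.vecMul, dotProduct, hBdef, Matrix.of_apply, Finset.univ_unique,
          Finset.sum_singleton, norm_mul, mul_pow]
        rw [show (default : Unit) = () from rfl, hu', one_mul]
      simp_rw [e]
      exact col_sq_le A hA j) hk (by linarith) (by nlinarith [sq_nonneg μ])
  rw [Fintype.card_unit, Nat.cast_one, one_mul] at h
  refine le_trans (le_of_eq ?_) h
  congr 1
  funext f
  have e : B * bernM f * Bᴴ =
      Matrix.diagonal (fun _ => ((∑ i, if f i then ‖A i j‖ ^ 2 else 0 : ℝ) : ℂ)) := by
    rw [bern_sandwich]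
    ext a b
    rw [Matrix.sum_apply]
    simp only [Matrix.diagonal_apply_eq]
    push_cast
    refine Finset.sum_congr rfl fun i _ => ?_
    by_cases hi : f i
    · simp [hi, Matrix.vecMulVec_apply, hBdef, Complex.mul_conj']
    · simp [hi]
  rw [e, Matrix.diagonal_pow, Matrix.trace_diagonal]
  simp only [Pi.pow_apply, Finset.univ_unique, Finset.sum_singleton]
  rw [← Complex.ofReal_pow, Complex.ofReal_re]

lemma projOf_mul_bernM_piecewise {n : ℕ} (T : Finset (Fin n)) (f g : Fin n → Bool) :
    projOf T * bernM (T.piecewise f g) = projOf T * bernM f := by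
  rw [projOf, bernM, bernM, Matrix.diagonal_mul_diagonal, Matrix.diagonal_mul_diagonal]
  congr 1
  funext i
  by_cases hi : i ∈ T <;> simp [hi]

lemma bernM_piecewise_mul_projOf {n : ℕ} (T : Finset (Fin n)) (f g : Fin n → Bool) :
    bernM (T.piecewise f g) * projOf Tᶜ = projOf Tᶜ * bernM g := by
  rw [projOf, bernM, bernM, Matrix.diagonal_mul_diagonal, Matrix.diagonal_mul_diagonal]
  congr 1
  funext i
  by_cases hi : i ∈ T <;> simp [hi]

/-- Moment estimate for an off-diagonal block `T × Tᶜ`. Rows and columns carry independent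
selectors there, so the Chernoff estimate applies first to the columns and then, through the column
lengths, to the rows. -/
lemma block_moment_le {n : ℕ} (A : Matrix (Fin n) (Fin n) ℂ) (hA : ‖A‖ ≤ 1) {μ s : ℝ}
    (hμ : ∀ i j, ‖A i j‖ ≤ μ) (hs0 : 0 ≤ s) (hs1 : s ≤ 1) {k : ℕ} (hk : 1 ≤ k)
    (T : Finset (Fin n)) :
    ex s (fun f : Fin n → Bool => ‖projOf T * (bernM f * A * bernM f) * projOf Tᶜ‖ ^ (2 * k)) ≤
      n * (n + 1) * (8 * (k * (k * μ ^ 2 + 6 * s))) ^ k := by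
  have hk1 : (1 : ℝ) ≤ k := by exact_mod_cast hk
  have hk0 : k ≠ 0 := by omega
  set θ := k * μ ^ 2 + 6 * s with hθ
  have hθ0 : 0 ≤ θ := by positivity
  set ℓ : Fin n → (Fin n → Bool) → ℝ := fun j f => ∑ i, if f i then ‖A i j‖ ^ 2 else 0 with hℓ
  have hℓ0 : ∀ j f, 0 ≤ ℓ j f := fun j f => Finset.sum_nonneg fun i _ => by
    split_ifs <;> positivity
  rw [← ex_piecewise s T]
  have hf : ∀ f : Fin n → Bool, ex s (fun g : Fin n → Bool =>
      ‖projOf T * (bernM (T.piecewise f g) * A * bernM (T.piecewise f g)) * projOf Tᶜ‖ ^ (2 * k)) ≤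
      n * 4 ^ k * k ^ k * (∑ j, ℓ j f ^ k) + n * 4 ^ k * (6 * s) ^ k := by
    intro f
    set B := projOf T * bernM f * A * projOf Tᶜ with hB
    have hsum0 : 0 ≤ ∑ j, ℓ j f ^ k := Finset.sum_nonneg fun j _ => pow_nonneg (hℓ0 j f) k
    -- `L` is the `ℓ_k` norm of the squared column lengths, an upper bound for their maximum.
    obtain ⟨L, hL0, hLk⟩ : ∃ L : ℝ, 0 ≤ L ∧ L ^ k = ∑ j, ℓ j f ^ k :=
      ⟨(∑ j, ℓ j f ^ k) ^ ((k : ℝ)⁻¹), Real.rpow_nonneg hsum0 _,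
        Real.rpow_inv_natCast_pow hsum0 hk0⟩
    have hBn : ‖B‖ ≤ 1 := by
      refine le_trans (norm_sandwich_le A ?_ (norm_projOf_le _)) hA
      calc ‖projOf T * bernM f‖ ≤ ‖projOf T‖ * ‖bernM f‖ := norm_mul_le _ _
        _ ≤ 1 := mul_le_one₀ (norm_projOf_le T) (norm_nonneg _) (norm_bernM_le f)
    have hcol : ∀ j, ∑ i, ‖B i j‖ ^ 2 ≤ L := by
      intro j
      have h1 : ∑ i, ‖B i j‖ ^ 2 ≤ ℓ j f := by
        refine Finset.sum_le_sum fun i _ => ?_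
        rw [hB, projOf, projOf, bernM, Matrix.diagonal_mul_diagonal, Matrix.mul_diagonal,
          Matrix.diagonal_mul]
        by_cases h1 : i ∈ T <;> by_cases h2 : f i <;> by_cases h3 : j ∈ Tᶜ <;>
          simp [h1, h2, h3]
      have h2 : ℓ j f ≤ L := by
        refine le_of_pow_le_pow_left₀ hk0 hL0 ?_
        rw [hLk]
        exact Finset.single_le_sum (f := fun j => ℓ j f ^ k)
          (fun j _ => pow_nonneg (hℓ0 j f) k) (Finset.mem_univ j)
      exact h1.trans h2
    have hch := chernoff_trace B (L := L) (θ := k * L + 6 * s) hs0 hs1 hL0 hcol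
      (fun u hu => hu ▸ sum_vecMul_sq_le B hBn u) hk (by linarith)
      (by have : 0 ≤ k * L := by positivity
          linarith)
    have hpt : ∀ g : Fin n → Bool,
        ‖projOf T * (bernM (T.piecewise f g) * A * bernM (T.piecewise f g)) * projOf Tᶜ‖ ^ (2 * k) ≤
        (Matrix.trace ((B * bernM g * Bᴴ) ^ k)).re := by
      intro g
      have e1 : projOf T * (bernM (T.piecewise f g) * A * bernM (T.piecewise f g)) * projOf Tᶜ =
          B * bernM g := by
        calc _ = (projOf T * bernM (T.piecewise f g)) * A *
              (bernM (T.piecewise f g) * projOf Tᶜ) := by simp only [Matrix.mul_assoc]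
          _ = _ := by
              rw [projOf_mul_bernM_piecewise, bernM_piecewise_mul_projOf, hB]
              simp only [Matrix.mul_assoc]
      have e2 : B * bernM g * Bᴴ = (B * bernM g) * (B * bernM g)ᴴ := by
        rw [Matrix.conjTranspose_mul B (bernM g), bernM_conjTranspose]
        calc B * bernM g * Bᴴ = B * (bernM g * bernM g) * Bᴴ := by rw [bernM_sq]
          _ = _ := by simp only [Matrix.mul_assoc]
      have e3 : ‖B * bernM g * Bᴴ‖ = ‖B * bernM g‖ ^ 2 := by
        have := Matrix.l2_opNorm_conjTranspose_mul_self (B * bernM g)ᴴ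
        rw [Matrix.conjTranspose_conjTranspose, Matrix.l2_opNorm_conjTranspose] at this
        rw [e2, this, sq]
      rw [e1, pow_mul, ← e3]
      exact norm_pow_le_trace (bern_sandwich_psd B g) hk
    refine (ex_mono hs0 hs1 hpt).trans (hch.trans ?_)
    rw [Fintype.card_fin, ← hLk]
    have h6 : 0 ≤ 6 * s := by linarith
    have hkL : 0 ≤ k * L := by positivity
    have hadd : (k * L + 6 * s) ^ k ≤ 2 ^ k * ((k * L) ^ k + (6 * s) ^ k) := by
      refine (add_pow_le hkL h6 k).trans ?_
      gcongr
      · norm_num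
      · omega
    calc (n : ℝ) * (2 * (k * L + 6 * s)) ^ k = n * 2 ^ k * (k * L + 6 * s) ^ k := by
          rw [mul_pow]; ring
      _ ≤ n * 2 ^ k * (2 ^ k * ((k * L) ^ k + (6 * s) ^ k)) := by gcongr
      _ = n * 4 ^ k * ((k * L) ^ k + (6 * s) ^ k) := by
          rw [show (4 : ℝ) = 2 * 2 by norm_num, mul_pow 2 2]; ring
      _ = _ := by rw [mul_pow (k : ℝ) L]; ring
  have hcolE : ∀ j, ex s (fun f => ℓ j f ^ k) ≤ (2 * θ) ^ k := fun j =>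
    ex_col_pow_le A hA hμ hs0 hs1 hk j
  have hn0 : (0 : ℝ) ≤ n := Nat.cast_nonneg n
  refine (ex_mono hs0 hs1 hf).trans ?_
  rw [ex_add, ex_const, ex_const_mul, ex_sum]
  have h6k : (6 * s) ^ k ≤ (2 * (k * θ)) ^ k := by
    refine pow_le_pow_left₀ (by linarith) ?_ k
    have h1 : 6 * s ≤ θ := by
      have : 0 ≤ k * μ ^ 2 := by positivity
      linarith
    have h2 : θ ≤ k * θ := le_mul_of_one_le_left hθ0 hk1
    linarith
  calc n * 4 ^ k * k ^ k * (∑ j, ex s (fun f => ℓ j f ^ k)) + n * 4 ^ k * (6 * s) ^ k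
      ≤ n * 4 ^ k * k ^ k * (∑ _j : Fin n, (2 * θ) ^ k) + n * 4 ^ k * (2 * (k * θ)) ^ k := by
        refine add_le_add ?_ (mul_le_mul_of_nonneg_left h6k (by positivity))
        exact mul_le_mul_of_nonneg_left (Finset.sum_le_sum fun j _ => hcolE j) (by positivity)
    _ = n * (n + 1) * (8 * (k * θ)) ^ k := by
        rw [Finset.sum_const, Finset.card_univ, Fintype.card_fin, nsmul_eq_mul,
          show (8 : ℝ) * (k * θ) = 4 * (k * (2 * θ)) by ring,
          show (2 : ℝ) * (k * θ) = k * (2 * θ) by ring, mul_pow 4, mul_pow (k : ℝ)]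
        ring

/-- Decoupling: averaging over uniformly random `T`, the blocks `T × Tᶜ` recover a quarter of the
off-diagonal part. -/
lemma decouple_norm_le {n : ℕ} (W : Matrix (Fin n) (Fin n) ℂ) {μ : ℝ} (hμ0 : 0 ≤ μ)
    (hW : ∀ i, ‖W i i‖ ≤ μ) :
    ‖W‖ ≤ μ + 4 * ex (1 / 2) (fun η : Fin n → Bool =>
      ‖projOf (Finset.univ.filter fun i => η i) * W * projOf (Finset.univ.filter fun i => η i)ᶜ‖) := by
  have hcoef : ∀ i j : Fin n, ex (1 / 2) (fun η : Fin n → Bool =>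
      (if η i then (1:ℝ) else 0) * (if η j then 0 else 1)) = if i = j then 0 else 1 / 4 := by
    intro i j
    by_cases hij : i = j
    · subst hij
      have e : (fun η : Fin n → Bool => (if η i then (1:ℝ) else 0) * (if η i then 0 else 1)) =
          fun _ => 0 := by
        funext η
        by_cases h : η i <;> simp [h]
      rw [if_pos rfl, e, ex_const]
    · rw [if_neg hij]
      have e : (fun η : Fin n → Bool => (if η i then (1:ℝ) else 0) * (if η j then 0 else 1)) =
          fun η => (∏ l ∈ {i}, if η l then (1:ℝ) else 0) +
            (-1) * ∏ l ∈ {i, j}, if η l then (1:ℝ) else 0 := by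
        funext η
        rw [Finset.prod_pair hij, Finset.prod_singleton]
        by_cases h : η i <;> by_cases h' : η j <;> simp [h, h']
      rw [e, ex_add, ex_const_mul, ex_prod, ex_prod, Finset.card_pair hij, Finset.card_singleton]
      norm_num
  have hdec : W = Matrix.diagonal (fun i => W i i) + (4 : ℂ) • ∑ η : Fin n → Bool,
      ((bw (1 / 2) η : ℝ) : ℂ) • (projOf (Finset.univ.filter fun i => η i) * W *
        projOf (Finset.univ.filter fun i => η i)ᶜ) := by
    ext i j
    have h := congrArg (fun x : ℝ => (x : ℂ)) (hcoef i j)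
    rw [Matrix.add_apply, Matrix.smul_apply, Matrix.sum_apply]
    have e : ∀ η : Fin n → Bool, (((bw (1 / 2) η : ℝ) : ℂ) •
        (projOf (Finset.univ.filter fun i => η i) * W *
        projOf (Finset.univ.filter fun i => η i)ᶜ)) i j =
        ((bw (1/2) η * ((if η i then (1:ℝ) else 0) * (if η j then 0 else 1)) : ℝ) : ℂ) * W i j := by
      intro η
      rw [Matrix.smul_apply, projOf, projOf, Matrix.mul_diagonal, Matrix.diagonal_mul]
      by_cases h : η i <;> by_cases h' : η j <;> simp [h, h']
    simp_rw [e]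
    rw [← Finset.sum_mul, ← Complex.ofReal_sum]
    unfold ex at h hcoef
    rw [hcoef i j]
    by_cases hij : i = j
    · subst hij; simp
    · simp [hij]
  have hbw : ∀ η : Fin n → Bool, 0 ≤ bw (1 / 2) η := bw_nonneg (by norm_num) (by norm_num)
  have hd : ‖Matrix.diagonal (fun i => W i i)‖ ≤ μ := by
    rw [Matrix.l2_opNorm_diagonal, pi_norm_le_iff_of_nonneg hμ0]
    exact hW
  conv_lhs => rw [hdec]
  refine (norm_add_le _ _).trans (add_le_add hd ?_)
  rw [norm_smul]
  refine mul_le_mul (by simp) ?_ (norm_nonneg _) (by norm_num)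
  refine (norm_sum_le _ _).trans (Finset.sum_le_sum fun η _ => ?_)
  rw [norm_smul, Complex.norm_real, Real.norm_of_nonneg (hbw η)]

/-- Moment bound at an arbitrary selection probability `s`, obtained by decoupling. It is useful only
while `k * (k * μ² + s)` is small, that is for `s` well below `1 / log n`. -/
lemma moment_le {n : ℕ} (A : Matrix (Fin n) (Fin n) ℂ) (hA : ‖A‖ ≤ 1) {μ s : ℝ} (hμ0 : 0 ≤ μ)
    (hμ : ∀ i j, ‖A i j‖ ≤ μ) (hs0 : 0 ≤ s) (hs1 : s ≤ 1) {k : ℕ} (hk : 1 ≤ k) :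
    ex s (fun f : Fin n → Bool => ‖bernM f * A * bernM f‖ ^ (2 * k)) ≤
      (1 + n * (n + 1)) * (512 * (k * (k * μ ^ 2 + 6 * s))) ^ k := by
  have hk1 : (1 : ℝ) ≤ k := by exact_mod_cast hk
  set θ := k * μ ^ 2 + 6 * s with hθ
  have hθ0 : 0 ≤ θ := by positivity
  have hμθ : μ ^ 2 ≤ k * θ := by
    have h1 : μ ^ 2 ≤ k * μ ^ 2 := le_mul_of_one_le_left (sq_nonneg μ) hk1
    have h2 : k * μ ^ 2 ≤ θ := by linarith
    exact (h1.trans h2).trans (le_mul_of_one_le_left hθ0 hk1)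
  let blk : (Fin n → Bool) → (Fin n → Bool) → ℝ := fun f η =>
    ‖projOf (Finset.univ.filter fun i => η i) * (bernM f * A * bernM f) *
      projOf (Finset.univ.filter fun i => η i)ᶜ‖
  have hhalf0 : (0:ℝ) ≤ 1 / 2 := by norm_num
  have hhalf1 : (1/2:ℝ) ≤ 1 := by norm_num
  have hpt : ∀ f : Fin n → Bool, ‖bernM f * A * bernM f‖ ^ (2 * k) ≤
      4 ^ k * μ ^ (2 * k) + 64 ^ k * ex (1 / 2) (fun η => blk f η ^ (2 * k)) := by
    intro f
    have h1 : ‖bernM f * A * bernM f‖ ≤ μ + 4 * ex (1 / 2) (blk f) := by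
      refine decouple_norm_le _ hμ0 fun i => ?_
      rw [bernM, Matrix.mul_diagonal, Matrix.diagonal_mul]
      by_cases h : f i
      · simpa [h] using hμ i i
      · simpa [h] using hμ0
    have hE0 : 0 ≤ ex (1 / 2) (blk f) := ex_nonneg hhalf0 hhalf1 fun η => norm_nonneg _
    have h2 : ex (1 / 2) (blk f) ^ (2 * k) ≤ ex (1 / 2) (fun η => blk f η ^ (2 * k)) := by
      exact Real.pow_arith_mean_le_arith_mean_pow _ _ _
        (fun η _ => bw_nonneg hhalf0 hhalf1 η) (sum_bw _) (fun η _ => norm_nonneg _) _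
    calc ‖bernM f * A * bernM f‖ ^ (2 * k) ≤ (μ + 4 * ex (1 / 2) (blk f)) ^ (2 * k) := by gcongr
      _ ≤ 2 ^ (2 * k - 1) * (μ ^ (2 * k) + (4 * ex (1 / 2) (blk f)) ^ (2 * k)) :=
          add_pow_le hμ0 (by positivity) _
      _ ≤ 2 ^ (2 * k) * (μ ^ (2 * k) + (4 * ex (1 / 2) (blk f)) ^ (2 * k)) := by
          gcongr
          · norm_num
          · omega
      _ = 4 ^ k * μ ^ (2 * k) + 64 ^ k * ex (1 / 2) (blk f) ^ (2 * k) := by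
          rw [mul_pow 4, pow_mul 2, pow_mul 4, show (64 : ℝ) = 2 ^ 2 * 4 ^ 2 by norm_num,
            mul_pow (2 ^ 2 : ℝ)]
          norm_num
          ring
      _ ≤ _ := by gcongr
  refine (ex_mono hs0 hs1 hpt).trans ?_
  rw [ex_add, ex_const, ex_const_mul]
  have hswap : ex s (fun f => ex (1 / 2) (fun η => blk f η ^ (2 * k))) ≤
      n * (n + 1) * (8 * (k * θ)) ^ k := by
    have e : ex s (fun f => ex (1 / 2) (fun η => blk f η ^ (2 * k))) =
        ex (1 / 2) (fun η => ex s (fun f => blk f η ^ (2 * k))) := by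
      unfold ex
      simp only [Finset.mul_sum]
      rw [Finset.sum_comm]
      exact Finset.sum_congr rfl fun _ _ => Finset.sum_congr rfl fun _ _ => by ring
    rw [e]
    refine (ex_mono hhalf0 hhalf1 fun η => ?_).trans_eq (ex_const _ _)
    exact block_moment_le A hA hμ hs0 hs1 hk _
  calc 4 ^ k * μ ^ (2 * k) + 64 ^ k * ex s (fun f => ex (1 / 2) (fun η => blk f η ^ (2 * k)))
      ≤ 4 ^ k * (k * θ) ^ k + 64 ^ k * (n * (n + 1) * (8 * (k * θ)) ^ k) := by
        rw [pow_mul]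
        gcongr
    _ = (4 * (k * θ)) ^ k + n * (n + 1) * (512 * (k * θ)) ^ k := by
        rw [show (512 : ℝ) * (k * θ) = 64 * (8 * (k * θ)) by ring, mul_pow 64, mul_pow 4]
        ring
    _ ≤ (512 * (k * θ)) ^ k + n * (n + 1) * (512 * (k * θ)) ^ k := by
        gcongr
        norm_num
    _ = _ := by ring

/-! ### Choice of parameters -/

/-- For large `n`, a negative power of `log n` absorbs any constant `C`. -/
lemma eventually_log_large {γ : ℝ} (hγ : 0 < γ) (C : ℝ) {c : ℝ} (hc : 0 < c) :
    ∃ N : ℕ, ∀ n : ℕ, N ≤ n →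
      1 ≤ Real.log n ∧ C * Real.log n ^ (-(γ / (1 + γ))) ≤ c := by
  have hlog : Filter.Tendsto (fun n : ℕ => Real.log n) Filter.atTop Filter.atTop :=
    Real.tendsto_log_atTop.comp tendsto_natCast_atTop_atTop
  have h0 : 0 < γ / (1 + γ) := by positivity
  have h1 : Filter.Tendsto (fun n : ℕ => C * Real.log n ^ (-(γ / (1 + γ)))) Filter.atTop
      (nhds 0) := by
    simpa using ((tendsto_rpow_neg_atTop h0).comp hlog).const_mul C
  exact Filter.eventually_atTop.mp
    ((hlog.eventually_ge_atTop 1).and ((h1.eventually_lt_const hc).mono fun _ h => h.le))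

lemma natCast_le_three_pow {n : ℕ} (hn : (0 : ℝ) < n) : (n : ℝ) ≤ 3 ^ ⌈Real.log n⌉₊ := by
  calc (n : ℝ) = Real.exp (Real.log n) := (Real.exp_log hn).symm
    _ ≤ Real.exp (⌈Real.log n⌉₊ * 1) := Real.exp_le_exp.mpr (by rw [mul_one]; exact Nat.le_ceil _)
    _ = Real.exp 1 ^ ⌈Real.log n⌉₊ := Real.exp_nat_mul _ _
    _ ≤ _ := by
      gcongr
      exact Real.exp_one_lt_three.le

/-- For entries of size `(log n)^{-(1+γ)}` and selector probabilities up to `(log n)^{-(1+2γ)}`,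
the moment of order `2⌈log n⌉` is at most `(C (log n)^{-2γ})^{⌈log n⌉}`, even after multiplication by
`n`. The constant is `663552 = 81 · 512 · 16`: the polynomial factors in `n` are at most
`81 ^ ⌈log n⌉`, `512` comes from `moment_le`, and `16` from rounding `log n` up. -/
lemma small_moment_le {n : ℕ} {γ : ℝ} (hγ : 0 < γ) (hℓ : 1 ≤ Real.log n)
    (A : Matrix (Fin n) (Fin n) ℂ) (hA : ‖A‖ ≤ 1)
    (hμ : ∀ i j, ‖A i j‖ ≤ Real.log n ^ (-(1 + γ))) {s : ℝ} (hs0 : 0 ≤ s)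
    (hs : s ≤ Real.log n ^ (-(1 + 2 * γ))) :
    (n : ℝ) * ex s (fun f : Fin n → Bool => ‖bernM f * A * bernM f‖ ^ (2 * ⌈Real.log n⌉₊)) ≤
      (663552 * Real.log n ^ (-(2 * γ))) ^ ⌈Real.log n⌉₊ := by
  set ℓ := Real.log n with hℓdef
  set k := ⌈ℓ⌉₊ with hkdef
  have hℓ0 : 0 < ℓ := by linarith
  have hk : 1 ≤ k := Nat.one_le_ceil_iff.mpr hℓ0
  have hk2 : (k : ℝ) ≤ 2 * ℓ := by
    have := Nat.ceil_lt_add_one hℓ0.le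
    linarith
  have hn : (0 : ℝ) < n := by
    rcases Nat.eq_zero_or_pos n with h | h
    · rw [hℓdef, h] at hℓ; norm_num at hℓ
    · exact_mod_cast h
  have hn1 : (1 : ℝ) ≤ n := by exact_mod_cast (by exact_mod_cast hn : 0 < n)
  have hn3 : (n : ℝ) ≤ 3 ^ k := natCast_le_three_pow hn
  have hs1 : s ≤ 1 := hs.trans (Real.rpow_le_one_of_one_le_of_nonpos hℓ (by linarith))
  have h := moment_le A hA (Real.rpow_nonneg hℓ0.le _) hμ hs0 hs1 hk
  have hθ : (k : ℝ) * (k * (ℓ ^ (-(1 + γ))) ^ 2 + 6 * s) ≤ 16 * ℓ ^ (-(2 * γ)) := by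
    have e1 : ℓ * (ℓ * (ℓ ^ (-(1 + γ))) ^ 2) = ℓ ^ (-(2 * γ)) := by
      rw [← Real.rpow_natCast, ← Real.rpow_mul hℓ0.le, ← Real.rpow_one_add' hℓ0.le,
        ← Real.rpow_one_add' hℓ0.le]
      · congr 1; push_cast; ring
      · push_cast; nlinarith
      · push_cast; nlinarith
    have e2 : ℓ * ℓ ^ (-(1 + 2 * γ)) = ℓ ^ (-(2 * γ)) := by
      rw [← Real.rpow_one_add' hℓ0.le]
      · congr 1; ring
      · nlinarith
    calc (k : ℝ) * (k * (ℓ ^ (-(1 + γ))) ^ 2 + 6 * s)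
        ≤ (2 * ℓ) * ((2 * ℓ) * (ℓ ^ (-(1 + γ))) ^ 2 + 6 * ℓ ^ (-(1 + 2 * γ))) := by gcongr
      _ = 4 * (ℓ * (ℓ * (ℓ ^ (-(1 + γ))) ^ 2)) + 12 * (ℓ * ℓ ^ (-(1 + 2 * γ))) := by ring
      _ = _ := by rw [e1, e2]; ring
  have hcube : (n : ℝ) * (1 + n * (n + 1)) ≤ 81 ^ k := by
    have h3 : (3 : ℝ) ≤ 3 ^ k := le_self_pow₀ (by norm_num) (by omega)
    calc (n : ℝ) * (1 + n * (n + 1)) ≤ n * (3 * n ^ 2) := by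
          gcongr; nlinarith
      _ = 3 * n ^ 3 := by ring
      _ ≤ 3 ^ k * (3 ^ k) ^ 3 := by gcongr
      _ = 81 ^ k := by
          rw [← pow_mul, mul_comm k 3, pow_mul, ← mul_pow]; norm_num
  have hθ0 : 0 ≤ (k : ℝ) * (k * (ℓ ^ (-(1 + γ))) ^ 2 + 6 * s) := by positivity
  calc (n : ℝ) * ex s (fun f : Fin n → Bool => ‖bernM f * A * bernM f‖ ^ (2 * k))
      ≤ n * ((1 + n * (n + 1)) *
          (512 * (k * (k * (ℓ ^ (-(1 + γ))) ^ 2 + 6 * s))) ^ k) := by gcongr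
    _ = n * (1 + n * (n + 1)) * (512 * (k * (k * (ℓ ^ (-(1 + γ))) ^ 2 + 6 * s))) ^ k := by ring
    _ ≤ 81 ^ k * (512 * (16 * ℓ ^ (-(2 * γ)))) ^ k := by gcongr
    _ = _ := by rw [← mul_pow]; congr 1; ring

/-- The estimate at the constant sampling rate `δ`, in terms of integer powers. The constant is
`42467328 = 64 · 663552`, and `0.0192 = 64 · 3 · 0.01²`. -/
lemma moment_extrapolated_le {n : ℕ} {γ ε δ : ℝ} (hγ : 0 < γ) (hε : 0 < ε)
    (hℓ : 1 ≤ Real.log n)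
    (hsmall : 42467328 * Real.log n ^ (-(γ / (1 + γ))) ≤ 0.0192 * ε ^ 2)
    (hδ0 : 0 < δ) (hδ1 : δ ≤ 1) (hδ : δ ^ (γ / (2 * (1 + γ))) ≤ 0.01 * ε)
    (A : Matrix (Fin n) (Fin n) ℂ) (hA : ‖A‖ ≤ 1)
    (hμ : ∀ i j, ‖A i j‖ ≤ Real.log n ^ (-(1 + γ))) :
    ex δ (fun f : Fin n → Bool => ‖bernM f * A * bernM f‖ ^ (2 * ⌈Real.log n⌉₊)) ≤
      ε ^ (2 * ⌈Real.log n⌉₊) := by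
  have hext := extrapolate A hA (M := (663552 * Real.log n ^ (-(2 * γ))) ^ ⌈Real.log n⌉₊)
    (k := ⌈Real.log n⌉₊) (ρ := Real.log n ^ (-(1 + 2 * γ))) (δ := δ)
    (Nat.one_le_ceil_iff.mpr (by linarith)) (Real.rpow_pos_of_pos (by linarith) _)
    (Real.rpow_le_one_of_one_le_of_nonpos hℓ (by linarith))
    (fun s hs0 hs => small_moment_le hγ hℓ A hA hμ hs0 hs) hδ0.le hδ1
  set ℓ := Real.log n with hℓdef
  set k := ⌈ℓ⌉₊ with hkdef
  have hℓ0 : 0 < ℓ := by linarith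
  have hk : 1 ≤ k := Nat.one_le_ceil_iff.mpr hℓ0
  have hn : (0 : ℝ) < n := by
    rcases Nat.eq_zero_or_pos n with h | h
    · rw [hℓdef, h] at hℓ; norm_num at hℓ
    · exact_mod_cast h
  have hn3 : (n : ℝ) ≤ 3 ^ k := natCast_le_three_pow hn
  set lam := γ / (2 * (1 + γ)) with hlam
  have hterm : ∀ t ∈ Finset.range (2 * k + 1),
      64 ^ k * min ((663552 * ℓ ^ (-(2 * γ))) ^ k * ((ℓ ^ (-(1 + 2 * γ)))⁻¹) ^ t) n * δ ^ t ≤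
        (0.0192 * ε ^ 2) ^ k := by
    intro t _
    -- For small `t` the coefficient is small by the bound near `0`; for large `t` the factor `δ ^ t`
    -- is small. The split at `t = 2 * k * lam` makes `δ ^ lam ≤ 0.01 * ε` exactly what is needed.
    rcases le_or_gt (t : ℝ) (lam * (2 * k)) with ht | ht
    · have h1 : ((ℓ ^ (-(1 + 2 * γ)))⁻¹) ^ t ≤ (ℓ ^ ((1 + 2 * γ) * (2 * lam))) ^ k := by
        rw [← Real.rpow_neg hℓ0.le, neg_neg, ← Real.rpow_natCast, ← Real.rpow_natCast,
          ← Real.rpow_mul hℓ0.le, ← Real.rpow_mul hℓ0.le]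
        refine Real.rpow_le_rpow_of_exponent_le hℓ ?_
        nlinarith
      have e : ℓ ^ (-(2 * γ)) * ℓ ^ ((1 + 2 * γ) * (2 * lam)) = ℓ ^ (-(γ / (1 + γ))) := by
        rw [← Real.rpow_add hℓ0]
        congr 1
        rw [hlam]
        field_simp
        ring
      calc 64 ^ k * min ((663552 * ℓ ^ (-(2 * γ))) ^ k * ((ℓ ^ (-(1 + 2 * γ)))⁻¹) ^ t) n * δ ^ t
          ≤ 64 ^ k * ((663552 * ℓ ^ (-(2 * γ))) ^ k * (ℓ ^ ((1 + 2 * γ) * (2 * lam))) ^ k) * 1 := by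
            gcongr
            · exact (min_le_left _ _).trans (by gcongr)
            · exact pow_le_one₀ hδ0.le hδ1
        _ = (42467328 * (ℓ ^ (-(2 * γ)) * ℓ ^ ((1 + 2 * γ) * (2 * lam)))) ^ k := by
            rw [mul_one, ← mul_pow, ← mul_pow]; congr 1; ring
        _ ≤ _ := by
            rw [e]; gcongr
    · have h1 : δ ^ t ≤ (0.01 * ε) ^ (2 * k) := by
        calc δ ^ t = δ ^ (t : ℝ) := (Real.rpow_natCast _ _).symm
          _ ≤ δ ^ (lam * (2 * k)) := Real.rpow_le_rpow_of_exponent_ge hδ0 hδ1 ht.le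
          _ = (δ ^ lam) ^ (2 * k) := by
              rw [Real.rpow_mul hδ0.le, ← Real.rpow_natCast]; push_cast; rfl
          _ ≤ _ := by gcongr
      calc 64 ^ k * min ((663552 * ℓ ^ (-(2 * γ))) ^ k * ((ℓ ^ (-(1 + 2 * γ)))⁻¹) ^ t) n * δ ^ t
          ≤ 64 ^ k * 3 ^ k * (0.01 * ε) ^ (2 * k) := by
            gcongr
            exact (min_le_right _ _).trans hn3
        _ = _ := by
            rw [pow_mul, ← mul_pow, ← mul_pow]; congr 1; ring
  refine hext.trans ((Finset.sum_le_sum hterm).trans ?_)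
  rw [Finset.sum_const, Finset.card_range, nsmul_eq_mul, mul_pow, ← mul_assoc, ← pow_mul]
  refine mul_le_of_le_one_left (by positivity) ?_
  have hb : (1 : ℝ) + k * 2 ≤ (1 + 2) ^ k := one_add_mul_le_pow (by norm_num) k
  calc ((2 * k + 1 : ℕ) : ℝ) * 0.0192 ^ k ≤ 3 ^ k * 0.0192 ^ k := by
        gcongr
        push_cast
        norm_num at hb
        linarith
    _ ≤ 1 := by
        rw [← mul_pow]
        exact pow_le_one₀ (by norm_num) (by norm_num)

lemma specNorm_moment_root_le {n : ℕ} {ε δ : ℝ} (hε : 0 < ε) {k : ℕ} (hk : 1 ≤ k)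
    (A : Matrix (Fin n) (Fin n) ℂ) (hδ0 : 0 ≤ δ) (hδ1 : δ ≤ 1)
    (h : ex δ (fun f : Fin n → Bool => ‖bernM f * A * bernM f‖ ^ (2 * k)) ≤ ε ^ (2 * k)) :
    (∑ f : Fin n → Bool, bw δ f * specNorm (bernM f * A * bernM f) ^ ((2 * k : ℕ) : ℝ)) ^
      (1 / ((2 * k : ℕ) : ℝ)) ≤ ε := by
  simp_rw [specNorm_eq, Real.rpow_natCast]
  rw [one_div, Real.rpow_inv_le_iff_of_pos ?_ hε.le ?_, Real.rpow_natCast]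
  · exact h
  · exact ex_nonneg hδ0 hδ1 fun f => by positivity
  · exact_mod_cast (by omega : 0 < 2 * k)

end

/-- The main moment estimate behind the Bourgain–Tzafriri paving theorem. -/
theorem main_moment_estimate (γ ε : ℝ) (hγ : 0 < γ) (hε : ε ∈ Set.Ioo (0:ℝ) 1) :
    ∃ N : ℕ, ∀ n : ℕ, N ≤ n →
      ∀ m : ℕ, m = ⌈(0.01 * ε) ^ (-(2 * (1 + γ) / γ))⌉₊ →
      ∀ δ : ℝ, δ = 1 / (m : ℝ) →
      ∀ p : ℕ, p = 2 * ⌈Real.log n⌉₊ →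
      ∀ A : Matrix (Fin n) (Fin n) ℂ,
        specNorm A = 1 →
        (∀ j k : Fin n, ‖A j k‖ ≤ (Real.log n) ^ (-(1 + γ))) →
        (∑ f : Fin n → Bool, bw δ f * specNorm (bernM f * A * bernM f) ^ (p:ℝ)) ^ (1/(p:ℝ))
          ≤ ε := by
  have hε0 := hε.1
  obtain ⟨N, hN⟩ := eventually_log_large hγ 42467328
    (show (0 : ℝ) < 0.0192 * ε ^ 2 by positivity)
  refine ⟨N, fun n hn m hm δ hδ p hp A hA hμ => ?_⟩
  obtain ⟨hℓ, hsmall⟩ := hN n hn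
  set q : ℝ := 0.01 * ε with hq
  have hq0 : 0 < q := by positivity
  have hqm : q ^ (-(2 * (1 + γ) / γ)) ≤ m := hm ▸ Nat.le_ceil _
  have hpos : 0 < q ^ (-(2 * (1 + γ) / γ)) := Real.rpow_pos_of_pos hq0 _
  have hm0 : (0 : ℝ) < m := hpos.trans_le hqm
  have hm1 : (1 : ℝ) ≤ m := by exact_mod_cast (by exact_mod_cast hm0 : 0 < m)
  have hδ0 : 0 < δ := by rw [hδ]; positivity
  have hδ1 : δ ≤ 1 := by rw [hδ, div_le_one hm0]; exact hm1
  have hδq : δ ^ (γ / (2 * (1 + γ))) ≤ q := by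
    have h1 : δ ≤ q ^ (2 * (1 + γ) / γ) := by
      rw [hδ, one_div, ← neg_neg (2 * (1 + γ) / γ), Real.rpow_neg hq0.le]
      exact inv_anti₀ hpos hqm
    calc δ ^ (γ / (2 * (1 + γ))) ≤ (q ^ (2 * (1 + γ) / γ)) ^ (γ / (2 * (1 + γ))) :=
          Real.rpow_le_rpow hδ0.le h1 (by positivity)
      _ = q := by
          rw [← Real.rpow_mul hq0.le,
            show 2 * (1 + γ) / γ * (γ / (2 * (1 + γ))) = 1 by field_simp, Real.rpow_one]
  subst hp
  refine specNorm_moment_root_le hε0 (Nat.one_le_ceil_iff.mpr (by linarith)) A hδ0.le hδ1 ?_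
  rw [specNorm_eq] at hA
  exact moment_extrapolated_le hγ hε0 hℓ hsmall hδ0 hδ1 hδq A hA.le hμ
end

section
/- Fix γ > 0 and ε ∈ (0,1). There is a constant m = m(γ, ε) ≤ C ε^{−C/min{1,γ}} (C a universal constant) such that for all sufficiently large n: every n×n matrix A with ‖A‖ = 1 and |a_{jk}| ≤ (log n)^{−(1+γ)} for all j,k admits a partition of {1,...,n} into m blocks σ_1,...,σ_m with ‖Σ_{j=1}^m P_{σ_j} A P_{σ_j}‖ ≤ ε, where P_{σ_j} is the diagonal projector onto the coordinates in σ_j. -/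
/-!
A matrix of norm `1` with small *diagonal* can be paved with a number of blocks that is polynomial
in `1 / ε`; the logarithmic bound on the entries is needed only to make the diagonal small for
large `n`. The one-sided estimate is proved by the method of interlacing polynomials with barrier
functions of Marcus, Spielman and Srivastava, in a form where `r = 2 ^ ℓ` colours are reduced to
one by successive halvings.

Let `A` be Hermitian with `-1 ≤ A ≤ 1`, and consider `F(z) = ∏_{c < r} det (Z_c - A)`, where `Z_c`
is the diagonal matrix with entries `z (i, c)`. It is multi-affine, real stable, and differentiating
in `z (i, c)` deletes row and column `i` from the `c`-th factor. Hence a colouring `c : ι → ℕ`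
corresponds to differentiating `F` in all variables `z (i, d)` with `d ≠ c i`, and what remains is
the product of the characteristic polynomials of the blocks.

* *Merging.* Replacing `F` by the derivative of its restriction to `z b = z a` (`merge a b F`)
  removes the variable `b` and preserves stability of `F` and of all its mixed derivatives
  (`merge_nv`, `Good.merge`).
* *Barrier.* Real stability gives the Rayleigh inequality `F * ∂_a ∂_b F ≤ ∂_a F * ∂_b F` at real
  points (`rayleigh`). If `x` lies above the roots, in the sense that all mixed derivatives are
  positive there, and `∂_k F ≤ φ F` at `x`, then after the merge the coordinate `a` can be lowered
  by `1 / (4 φ)`; the barrier of `a` becomes `4 φ / 3` and the others do not grow (`merge_step`,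
  resting on the inequality `numeric`).
* *Selection.* If the merged polynomial admits a colouring for which the constant point `e` is
  above the roots, so does the original one (`Sel.unmerge`): the Rayleigh inequality propagates the
  sign of a single first derivative to all mixed derivatives.

Starting at the constant point `2`, where the barrier is `((2 - A)⁻¹) i i ≤ (2 + A i i) / 3 ≤ 7 / 10`
once the diagonal of `A` is at most `1 / 10`, five halvings lead to a point below `19 / 20`
(`endpt_five`), so `32` colours give a pinching of `A` that is at most `19 / 20` (`one_sided`).
A second application, to the negative of this pinching, bounds it from below as well (`two_sided`);
rescaling and iterating `t` times gives norm at most `(19 / 20) ^ t` with `1024 ^ t` colours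
(`two_sided_iterate`), and a general matrix is the combination `X + i Y` of Hermitian ones
(`paving`). Choosing the least admissible `t` makes the number of colours at most
`C * ε ^ (-271)` (`exists_exponent`).
-/

open scoped BigOperators

/-! ### Multi-affine functions and merging of variables -/

namespace Pav

variable {κ : Type*} [DecidableEq κ]

/-- The partial derivative in the variable `a` of a function that is affine in `z a`, encoded as
the difference of the values at `z a = 1` and `z a = 0`. -/
def dd (a : κ) (F : (κ → ℂ) → ℂ) : (κ → ℂ) → ℂ := fun z =>
  F (Function.update z a 1) - F (Function.update z a 0)

theorem dd_comm (a b : κ) (F : (κ → ℂ) → ℂ) : dd a (dd b F) = dd b (dd a F) := by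
  rcases eq_or_ne a b with rfl | h
  · rfl
  · funext z
    simp only [dd, Function.update_comm h]
    ring

instance : LeftCommutative (dd : κ → ((κ → ℂ) → ℂ) → (κ → ℂ) → ℂ) := ⟨dd_comm⟩

/-- The mixed partial derivative in all variables of `S`. The fold over a multiset is well defined
because the operators `dd a` commute. -/
def DD (S : Finset κ) (F : (κ → ℂ) → ℂ) : (κ → ℂ) → ℂ := S.1.foldr dd F

@[simp] theorem DD_empty (F : (κ → ℂ) → ℂ) : DD ∅ F = F := rfl

theorem DD_insert {a : κ} {S : Finset κ} (h : a ∉ S) (F : (κ → ℂ) → ℂ) :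
    DD (insert a S) F = dd a (DD S F) := by
  simp [DD, Finset.insert_val_of_notMem h]

theorem DD_dd (S : Finset κ) (a : κ) (F : (κ → ℂ) → ℂ) : DD S (dd a F) = dd a (DD S F) := by
  induction S using Finset.induction_on with
  | empty => rfl
  | insert b S hb ih => rw [DD_insert hb, DD_insert hb, ih, dd_comm]

theorem DD_DD {S T : Finset κ} (h : Disjoint S T) (F : (κ → ℂ) → ℂ) :
    DD S (DD T F) = DD (S ∪ T) F := by
  induction S using Finset.induction_on with
  | empty => simp
  | insert b S hb ih =>
    rw [Finset.disjoint_insert_left] at h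
    rw [DD_insert hb, ih h.2, Finset.insert_union, DD_insert]
    simp [hb, h.1]

/-- `F` is multi-affine: affine in each variable separately. -/
def MA (F : (κ → ℂ) → ℂ) : Prop := ∀ (z : κ → ℂ) (a : κ) (t : ℂ),
  F (Function.update z a t) = F (Function.update z a 0) + t * dd a F z

theorem dd_update_self (a : κ) (F : (κ → ℂ) → ℂ) (z : κ → ℂ) (t : ℂ) :
    dd a F (Function.update z a t) = dd a F z := by simp [dd]

theorem MA.shift {F : (κ → ℂ) → ℂ} (h : MA F) (z : κ → ℂ) (a : κ) (s t : ℂ) :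
    F (Function.update z a t) = F (Function.update z a s) + (t - s) * dd a F z := by
  rw [h z a t, h z a s]; ring

theorem MA.shift' {F : (κ → ℂ) → ℂ} (h : MA F) (z : κ → ℂ) (a : κ) (u : ℂ) :
    F (Function.update z a (z a + u)) = F z + u * dd a F z := by
  rw [h.shift z a (z a)]; simp

theorem MA.dd {F : (κ → ℂ) → ℂ} (h : MA F) (a : κ) : MA (dd a F) := by
  intro z b t
  rcases eq_or_ne a b with rfl | hab
  · have : Pav.dd a (Pav.dd a F) z = 0 := by simp [Pav.dd]
    rw [dd_update_self, dd_update_self, this]; ring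
  · have : Pav.dd b (Pav.dd a F) z = Pav.dd a (Pav.dd b F) z := by rw [dd_comm]
    rw [this]
    simp only [Pav.dd, Function.update_comm hab.symm]
    rw [h _ b t, h _ b t, ← sub_eq_zero]
    simp only [Pav.dd, Function.update_comm hab.symm]
    ring

theorem MA.DD {F : (κ → ℂ) → ℂ} (h : MA F) (S : Finset κ) : MA (DD S F) := by
  induction S using Finset.induction_on with
  | empty => exact h
  | insert b S hb ih => rw [DD_insert hb]; exact ih.dd b

/-- The derivative of the restriction of `F` to `z b = z a` with respect to the common variable,
which is again called `a`; the result does not depend on `z b`. -/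
def merge (a b : κ) (F : (κ → ℂ) → ℂ) : (κ → ℂ) → ℂ := fun z =>
  dd a F (Function.update z b (z a)) + dd b F (Function.update z b (z a))

theorem dd_merge_of_ne {a b k : κ} (hka : k ≠ a) (hkb : k ≠ b) (F : (κ → ℂ) → ℂ) :
    dd k (merge a b F) = merge a b (dd k F) := by
  funext z
  simp only [merge, dd, Function.update_of_ne hka.symm]
  simp only [Function.update_comm hka, Function.update_comm hkb]
  ring

theorem DD_merge {a b : κ} {S : Finset κ} (ha : a ∉ S) (hb : b ∉ S) (F : (κ → ℂ) → ℂ) :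
    DD S (merge a b F) = merge a b (DD S F) := by
  induction S using Finset.induction_on with
  | empty => rfl
  | insert k S hk ih =>
    simp only [Finset.mem_insert, not_or] at ha hb
    rw [DD_insert hk, DD_insert hk, ih ha.2 hb.2,
      dd_merge_of_ne (Ne.symm ha.1) (Ne.symm hb.1)]

/-- The merged polynomial is affine in the variable `a`, with slope `2 ∂_a ∂_b F`. -/
theorem merge_apply {a b : κ} (hab : a ≠ b) (F : (κ → ℂ) → ℂ) (h : MA F) (z : κ → ℂ) (t : ℂ) :
    merge a b F (Function.update z a t) =
      (dd a F (Function.update z b 0) + dd b F (Function.update z a 0))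
        + 2 * t * dd a (dd b F) z := by
  have e1 : dd a F (Function.update (Function.update z a t) b t) =
      dd a F (Function.update z b 0) + t * dd b (dd a F) z := by
    rw [Function.update_comm hab, dd_update_self, (h.dd a) z b t]
  have e2 : dd b F (Function.update (Function.update z a t) b t) =
      dd b F (Function.update z a 0) + t * dd a (dd b F) z := by
    rw [dd_update_self, (h.dd b) z a t]
  simp only [merge, Function.update_self]
  rw [e1, e2, dd_comm b a]; ring

theorem dd_merge_self {a b : κ} (hab : a ≠ b) (F : (κ → ℂ) → ℂ) (h : MA F) :
    dd a (merge a b F) = fun z => 2 * dd a (dd b F) z := by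
  funext z
  conv_lhs => unfold dd
  rw [merge_apply hab F h, merge_apply hab F h]; ring

theorem merge_MA {a b : κ} (hab : a ≠ b) (F : (κ → ℂ) → ℂ) (h : MA F) : MA (merge a b F) := by
  intro z k t
  rcases eq_or_ne k a with rfl | hka
  · rw [merge_apply hab F h, merge_apply hab F h, dd_merge_self hab F h]; ring
  · rcases eq_or_ne k b with rfl | hkb
    · simp [merge, dd, Function.update_of_ne hab]
    · rw [dd_merge_of_ne hka hkb]
      simp only [merge, Function.update_of_ne hka.symm, Function.update_comm hkb]
      rw [(h.dd a) _ k t, (h.dd b) _ k t, dd_comm a k, dd_comm b k]; ring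

theorem dd_smul (a : κ) (F : (κ → ℂ) → ℂ) (c : ℂ) :
    dd a (fun z => c * F z) = fun z => c * dd a F z := by
  funext z; simp [dd]; ring

theorem DD_smul (S : Finset κ) (F : (κ → ℂ) → ℂ) (c : ℂ) :
    DD S (fun z => c * F z) = fun z => c * DD S F z := by
  induction S using Finset.induction_on with
  | empty => rfl
  | insert k S hk ih => rw [DD_insert hk, DD_insert hk, ih, dd_smul]

/-- Differentiating the merged polynomial in the merged variable amounts, up to a factor `2`, to
differentiating `F` in both variables. -/
theorem DD_insert_merge {a b : κ} {S : Finset κ} (hab : a ≠ b) (ha : a ∉ S) (hb : b ∉ S)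
    (F : (κ → ℂ) → ℂ) (h : MA F) :
    DD (insert a S) (merge a b F) = fun z => 2 * DD (insert a (insert b S)) F z := by
  rw [DD_insert ha, DD_merge ha hb, dd_merge_self hab _ (h.DD S), DD_insert, DD_insert hb]
  simp [hab, ha]

/-! ### Real stability and the Rayleigh inequality -/

/-- All coordinates lie in the open upper half-plane. -/
def Up (z : κ → ℂ) : Prop := ∀ k, 0 < (z k).im

/-- `F` is a multi-affine function of the variables in `U` only, real on real points, and it and
all its mixed derivatives have no zero in the upper half-plane. Stability is required of the mixed
derivatives as well, which makes the notion closed under differentiation by definition. -/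
structure Good (U : Finset κ) (F : (κ → ℂ) → ℂ) : Prop where
  ma : MA F
  cont : Continuous F
  real : ∀ x : κ → ℝ, (F (fun k => (x k : ℂ))).im = 0
  dep : ∀ z z' : κ → ℂ, (∀ k ∈ U, z k = z' k) → F z = F z'
  nv : ∀ S ⊆ U, ∀ z, Up z → DD S F z ≠ 0

theorem upd_ofReal (x : κ → ℝ) (a : κ) (t : ℝ) :
    Function.update (fun k => (x k : ℂ)) a (t : ℂ) =
      fun k => ((Function.update x a t k : ℝ) : ℂ) := by
  funext k
  by_cases h : k = a
  · subst h; simp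
  · simp [h]

theorem real_dd {F : (κ → ℂ) → ℂ} (h : ∀ x : κ → ℝ, (F (fun k => (x k : ℂ))).im = 0) (a : κ)
    (x : κ → ℝ) : (dd a F (fun k => (x k : ℂ))).im = 0 := by
  have h1 := h (Function.update x a 1)
  have h0 := h (Function.update x a 0)
  rw [← upd_ofReal] at h1 h0
  simp only [dd, Complex.sub_im]
  push_cast at h1 h0
  rw [h1, h0, sub_zero]

theorem Good.dd {U : Finset κ} {F : (κ → ℂ) → ℂ} (h : Good U F) {a : κ} (ha : a ∈ U) :
    Good (U.erase a) (dd a F) where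
  ma := h.ma.dd a
  cont := by
    have := h.cont
    unfold Pav.dd
    fun_prop
  real := real_dd h.real a
  dep := by
    intro z z' hz
    unfold Pav.dd
    congr 1 <;>
    · apply h.dep
      intro k hk
      by_cases hka : k = a
      · subst hka; simp
      · simp [hka]; exact hz k (Finset.mem_erase.2 ⟨hka, hk⟩)
  nv := by
    intro S hS z hz
    have haS : a ∉ S := fun hh => by simpa using hS hh
    rw [DD_dd, ← DD_insert haS]
    refine h.nv _ ?_ z hz
    exact Finset.insert_subset ha (hS.trans (Finset.erase_subset _ _))

theorem Good.DD {U : Finset κ} {F : (κ → ℂ) → ℂ} (h : Good U F) {S : Finset κ} (hS : S ⊆ U) :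
    Good (U \ S) (DD S F) := by
  induction S using Finset.induction_on with
  | empty => simpa using h
  | insert b S hb ih =>
    have := ih ((Finset.subset_insert _ _).trans hS)
    rw [DD_insert hb, show U \ insert b S = (U \ S).erase b by ext; simp; tauto]
    exact this.dd (by simp [hb]; exact hS (by simp))

/-- Merging preserves stability. With `w` the point with both coordinates equal to `z a`, a zero of
the merged polynomial removes the linear term of `u ↦ F(w + u (e_a + e_b))`, so this quadratic is
even in `u`; one of its two roots `± u` has non-negative imaginary part, which contradicts the
stability of `F`. -/
theorem merge_nv {a b : κ} (hab : a ≠ b) (F : (κ → ℂ) → ℂ) (h : MA F)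
    (h1 : ∀ z, Up z → F z ≠ 0) (h2 : ∀ z, Up z → dd a (dd b F) z ≠ 0) (z : κ → ℂ)
    (hz : Up z) : merge a b F z ≠ 0 := by
  intro h0
  -- centre the quadratic at the common value `z a`
  set w := Function.update z b (z a) with hw
  have hwU : Up w := by
    intro k; by_cases hk : k = b
    · subst hk; simp [hw, hz a]
    · simp [hw, hk, hz k]
  have key : ∀ u : ℂ, F (Function.update (Function.update w a (z a + u)) b (z a + u)) =
      F w + u ^ 2 * dd a (dd b F) w := by
    intro u
    have e1 : (Function.update w a (z a + u)) b = z a := by simp [hw, hab.symm]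
    have e2 : w a = z a := by simp [hw, hab]
    have := h.shift' (Function.update w a (z a + u)) b u
    rw [e1] at this
    rw [this]
    have t1 := h.shift' w a u
    have t2 := (h.dd b).shift' w a u
    rw [e2] at t1 t2
    rw [t1, t2]
    have : dd a F w + dd b F w = 0 := h0
    linear_combination u * this
  have hδ := h2 w hwU
  obtain ⟨u, hu⟩ := IsAlgClosed.exists_pow_nat_eq (-(F w) / dd a (dd b F) w) (n := 2) (by norm_num)
  have : ∃ v : ℂ, 0 ≤ v.im ∧ F w + v ^ 2 * dd a (dd b F) w = 0 := by
    have hz0 : F w + u ^ 2 * dd a (dd b F) w = 0 := by rw [hu]; field_simp; ring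
    rcases le_total 0 u.im with hh | hh
    · exact ⟨u, hh, hz0⟩
    · exact ⟨-u, by simpa using hh, by simpa using hz0⟩
  obtain ⟨v, hv, hv0⟩ := this
  rw [← key v] at hv0
  refine h1 _ ?_ hv0
  have hza := hz a
  intro k
  by_cases hk : k = b
  · subst hk; simp; linarith
  · by_cases hk' : k = a
    · subst hk'; simp [hk]; linarith
    · simp [hk, hk', hwU k]

theorem Good.merge {U : Finset κ} {F : (κ → ℂ) → ℂ} (h : Good U F) {a b : κ} (hab : a ≠ b)
    (ha : a ∈ U) (hb : b ∈ U) : Good (U.erase b) (merge a b F) where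
  ma := merge_MA hab F h.ma
  cont := by
    have := h.cont
    unfold Pav.merge Pav.dd
    fun_prop
  real := by
    intro x
    have e := upd_ofReal x b (x a)
    simp only [Pav.merge, Complex.add_im]
    rw [e, real_dd h.real, real_dd h.real, add_zero]
  dep := by
    intro z z' hz
    have haa : z a = z' a := hz a (by simp [hab, ha])
    unfold Pav.merge
    have : ∀ k ∈ U, Function.update z b (z a) k = Function.update z' b (z' a) k := by
      intro k hk
      by_cases hkb : k = b
      · subst hkb; simp [haa]
      · simp [hkb]; exact hz k (by simp [hk, hkb])
    have h1 : ∀ c, Pav.dd c F (Function.update z b (z a)) = Pav.dd c F (Function.update z' b (z' a)) := by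
      intro c
      unfold Pav.dd
      congr 1 <;>
      · apply h.dep
        intro k hk
        by_cases hka : k = c
        · subst hka; simp
        · simp only [Function.update_of_ne hka]; exact this k hk
    rw [h1, h1]
  nv := by
    intro S hS z hz
    have hbS : b ∉ S := fun hh => by simpa using hS hh
    have hSU : S ⊆ U := hS.trans (Finset.erase_subset _ _)
    by_cases haS : a ∈ S
    · rw [← Finset.insert_erase haS,
        DD_insert_merge hab (by simp) (by simp [hbS]) F h.ma]
      simp only [ne_eq, mul_eq_zero, OfNat.ofNat_ne_zero, false_or]
      refine h.nv _ ?_ z hz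
      intro k hk
      simp only [Finset.mem_insert, Finset.mem_erase] at hk
      rcases hk with rfl | rfl | hk
      exacts [ha, hb, hSU hk.2]
    · rw [DD_merge haS hbS]
      refine merge_nv hab _ (h.ma.DD S) (h.nv S hSU) ?_ z hz
      rw [← DD_insert hbS, ← DD_insert (by simp [hab, haS])]
      exact h.nv _ (Finset.insert_subset ha (Finset.insert_subset hb hSU))

/-- The value of `F` at a real point, as a real number. -/
def Rv (F : (κ → ℂ) → ℂ) (x : κ → ℝ) : ℝ := (F (fun k => (x k : ℂ))).re

theorem Good.coe_Rv {U : Finset κ} {F : (κ → ℂ) → ℂ} (h : Good U F) (x : κ → ℝ) :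
    F (fun k => (x k : ℂ)) = (Rv F x : ℂ) := by
  apply Complex.ext <;> simp [Rv, h.real x]

theorem Rv_shift {F : (κ → ℂ) → ℂ} (h : MA F) (x : κ → ℝ) (a : κ) (u : ℝ) :
    Rv F (Function.update x a (x a + u)) = Rv F x + u * Rv (dd a F) x := by
  unfold Rv
  rw [← upd_ofReal]
  push_cast
  rw [h.shift' (fun k => (x k : ℂ)) a u]
  simp

/-- The Rayleigh inequality for real stable multi-affine polynomials. Were it false at `x`, the
equation `F(x + u e_a + i e_b) = 0` would have a solution `u` in the upper half-plane, and this
persists when all coordinates of `x` are moved slightly into the upper half-plane. -/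
theorem rayleigh {U : Finset κ} {F : (κ → ℂ) → ℂ} (h : Good U F) {a b : κ} (hab : a ≠ b)
    (x : κ → ℝ) : Rv F x * Rv (dd a (dd b F)) x ≤ Rv (dd a F) x * Rv (dd b F) x := by
  by_contra! hlt
  have hc := h.cont
  have hca : Continuous (dd a F) := by unfold dd; fun_prop
  have hcb : Continuous (dd b F) := by unfold dd; fun_prop
  have hcab : Continuous (dd a (dd b F)) := by unfold dd; fun_prop
  let p : ℝ → κ → ℂ := fun η k => (x k : ℂ) + (η : ℂ) * Complex.I
  have hp : Continuous p := by fun_prop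
  have hp0 : p 0 = fun k => (x k : ℂ) := by funext k; simp [p]
  have r1 := h.coe_Rv x
  have ra : dd a F (fun k => (x k : ℂ)) = (Rv (dd a F) x : ℂ) := by
    apply Complex.ext <;> simp [Rv, real_dd h.real a x]
  have rb : dd b F (fun k => (x k : ℂ)) = (Rv (dd b F) x : ℂ) := by
    apply Complex.ext <;> simp [Rv, real_dd h.real b x]
  have rab : dd a (dd b F) (fun k => (x k : ℂ)) = (Rv (dd a (dd b F)) x : ℂ) := by
    apply Complex.ext <;> simp [Rv, real_dd (real_dd h.real b) a x]
  generalize Rv F x = α at *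
  generalize Rv (dd a F) x = β at *
  generalize Rv (dd b F) x = γ at *
  generalize Rv (dd a (dd b F)) x = δ at *
  have hn : 0 < β ^ 2 + δ ^ 2 := by
    by_contra! hh
    have h1 : β = 0 := by nlinarith [sq_nonneg β, sq_nonneg δ]
    have h2 : δ = 0 := by nlinarith [sq_nonneg β, sq_nonneg δ]
    subst h1 h2; simp at hlt
  let den : ℝ → ℂ := fun η => dd a F (p η) + Complex.I * dd a (dd b F) (p η)
  let u : ℝ → ℂ := fun η => -(F (p η) + Complex.I * dd b F (p η)) / den η
  have hden : Continuous den := by fun_prop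
  have hden0 : den 0 ≠ 0 := by
    simp only [den, hp0, ra, rab]
    intro hh
    have h1 := congrArg Complex.re hh
    have h2 := congrArg Complex.im hh
    simp at h1 h2
    subst h1 h2; simp at hn
  have hu : ContinuousAt u 0 := by
    apply ContinuousAt.div _ hden.continuousAt hden0
    fun_prop
  have hu0 : 0 < (u 0).im := by
    have : u 0 = ((-(α * β + γ * δ) / (β ^ 2 + δ ^ 2) : ℝ) : ℂ) +
        (((α * δ - β * γ) / (β ^ 2 + δ ^ 2) : ℝ) : ℂ) * Complex.I := by
      simp only [u]
      rw [div_eq_iff hden0]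
      simp only [den, hp0, ra, rab, r1, rb]
      have hn' : ((β : ℂ) ^ 2 + (δ : ℂ) ^ 2) ≠ 0 := by exact_mod_cast hn.ne'
      push_cast
      field_simp
      ring_nf
      rw [Complex.I_sq]; ring
    rw [this, Complex.add_im, Complex.ofReal_im, Complex.mul_I_im, Complex.ofReal_re, zero_add]
    exact div_pos (by linarith) hn
  have ev1 : ∀ᶠ η in nhdsWithin (0 : ℝ) (Set.Ioi 0), 0 < (u η).im :=
    nhdsWithin_le_nhds ((Complex.continuous_im.continuousAt.comp hu).eventually (lt_mem_nhds hu0))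
  have ev2 : ∀ᶠ η in nhdsWithin (0 : ℝ) (Set.Ioi 0), den η ≠ 0 :=
    nhdsWithin_le_nhds (hden.continuousAt.eventually_ne hden0)
  obtain ⟨η, ⟨e1, e2⟩, hη⟩ := ((ev1.and ev2).and self_mem_nhdsWithin).exists
  have hη : 0 < η := hη
  set q := p η with hq
  have hFz : F (Function.update (Function.update q a (q a + u η)) b (q b + Complex.I)) = 0 := by
    have e3 : (Function.update q a (q a + u η)) b = q b := by simp [hab.symm]
    have := h.ma.shift' (Function.update q a (q a + u η)) b Complex.I
    rw [e3] at this
    rw [this, h.ma.shift', (h.ma.dd b).shift']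
    have : u η * den η = -(F q + Complex.I * dd b F q) := by
      exact div_mul_cancel₀ _ e2
    simp only [den] at this
    linear_combination this
  refine h.nv ∅ (by simp) _ ?_ hFz
  have hqk : ∀ k, (q k).im = η := by intro k; simp [hq, p]
  intro k
  by_cases hk : k = b
  · subst hk; simp [hqk]; linarith
  · by_cases hk' : k = a
    · subst hk'; simp [hk, hqk]; linarith
    · simp [hk, hk', hqk, hη]

end Pav

/-! ### Barrier estimates -/

namespace Pav

variable {κ : Type*} [DecidableEq κ]

/-- `x` lies above the roots of `F`: all mixed derivatives of `F` are positive at `x`. -/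
def Pos (U : Finset κ) (F : (κ → ℂ) → ℂ) (x : κ → ℝ) : Prop :=
  ∀ S ⊆ U, 0 < Rv (DD S F) x

/-- An upper bound for the barrier `∂_k F / F` at a point above the roots is inherited by all mixed
derivatives of `F`. -/
theorem barrier_mono {U : Finset κ} {F : (κ → ℂ) → ℂ} (h : Good U F) {x : κ → ℝ}
    (hp : Pos U F x) {k : κ} {φ : ℝ} (hφ : Rv (dd k F) x ≤ φ * Rv F x)
    {S : Finset κ} (hS : S ⊆ U) (hkS : k ∉ S) :
    Rv (dd k (DD S F)) x ≤ φ * Rv (DD S F) x := by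
  induction S using Finset.induction_on with
  | empty => exact hφ
  | insert a S ha ih =>
    have hSU := (Finset.subset_insert _ _).trans hS
    have haU : a ∈ U := hS (by simp)
    simp only [Finset.mem_insert, not_or] at hkS
    have ih := ih hSU hkS.2
    have r := rayleigh (h.DD hSU) hkS.1 x
    have p1 := hp S hSU
    have p2 := hp (insert a S) hS
    rw [DD_insert ha] at p2 ⊢
    nlinarith

/-- The inequality that keeps the remaining barriers under control in a merge. The numbers stand for
`F`, its derivatives in two variables `1, 2` and a third one `k`, at a point above the roots. The
hypothesis `r` is the Rayleigh inequality for `1, 2` along the line in direction `k`; its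
discriminant bounds the only term of the wrong sign. The conclusion says that
`∂_k G / G ≤ ∂_k F / F` for the merged polynomial `G` at the lowered point. -/
theorem numeric {f f1 f2 fk f12 f1k f2k f12k φ : ℝ} (hf : 0 < f) (hk : 0 < fk)
    (h1k : 0 < f1k) (h2k : 0 < f2k) (h12k : 0 < f12k) (hφ : 0 < φ)
    (r1 : f * f1k ≤ f1 * fk) (r2 : f * f2k ≤ f2 * fk)
    (r : ∀ τ : ℝ, (f + τ * fk) * (f12 + τ * f12k) ≤ (f1 + τ * f1k) * (f2 + τ * f2k))
    (b1 : f1 ≤ φ * f) (b2 : f2 ≤ φ * f) :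
    (f1k + f2k - 2 * (1 / (4 * φ)) * f12k) * f ≤ (f1 + f2 - 2 * (1 / (4 * φ)) * f12) * fk := by
  obtain ⟨d1, hd1⟩ : ∃ d, f1 = d + f / fk * f1k := ⟨f1 - f / fk * f1k, by ring⟩
  obtain ⟨d2, hd2⟩ : ∃ d, f2 = d + f / fk * f2k := ⟨f2 - f / fk * f2k, by ring⟩
  obtain ⟨d, hd⟩ : ∃ d, f12 = d + f / fk * f12k := ⟨f12 - f / fk * f12k, by ring⟩
  obtain ⟨σ, hσ⟩ : ∃ σ, f = σ * fk := ⟨f / fk, by field_simp⟩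
  have hσ' : f / fk = σ := by rw [hσ]; field_simp
  rw [hσ'] at hd1 hd2 hd
  subst hd1 hd2 hd
  have hσ0 : 0 < σ := by rw [← hσ']; positivity
  have n1 : 0 ≤ d1 := by
    have : 0 ≤ d1 * fk := by rw [hσ] at r1; nlinarith
    exact nonneg_of_mul_nonneg_left this hk
  have n2 : 0 ≤ d2 := by
    have : 0 ≤ d2 * fk := by rw [hσ] at r2; nlinarith
    exact nonneg_of_mul_nonneg_left this hk
  -- Rayleigh along the line `τ = t - σ`, centred at the zero of `f + τ fk`, is a quadratic in `t`.
  have hdisc := discrim_le_zero (a := f1k * f2k - fk * f12k)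
    (b := d1 * f2k + d2 * f1k - fk * d) (c := d1 * d2) (by
      intro t
      have := r (t - σ)
      rw [hσ] at this
      nlinarith)
  rw [discrim] at hdisc
  have q0 : (d1 * f2k + d2 * f1k - fk * d) ^ 2 ≤ (d1 * f2k + d2 * f1k) ^ 2 := by
    have : 0 ≤ d1 * d2 * (fk * f12k) := by positivity
    nlinarith [sq_nonneg (d1 * f2k - d2 * f1k)]
  have q1 : fk * d ≤ 2 * (d1 * f2k + d2 * f1k) := by
    have := abs_le_of_sq_le_sq q0 (by positivity)
    linarith [neg_le_of_abs_le this]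
  -- `f1k / fk ≤ f1 / f ≤ φ`, and likewise for the index `2`
  have g1 : f1k ≤ φ * fk := by
    rw [hσ] at b1
    have : f1k * σ ≤ φ * fk * σ := by nlinarith
    exact le_of_mul_le_mul_right this hσ0
  have g2 : f2k ≤ φ * fk := by
    rw [hσ] at b2
    have : f2k * σ ≤ φ * fk * σ := by nlinarith
    exact le_of_mul_le_mul_right this hσ0
  have q2 : fk * d ≤ fk * (2 * φ * (d1 + d2)) := by
    nlinarith [mul_le_mul_of_nonneg_left g1 n2, mul_le_mul_of_nonneg_left g2 n1]
  have q3 : d ≤ 2 * φ * (d1 + d2) := le_of_mul_le_mul_left q2 hk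
  have q4 : 2 * (1 / (4 * φ)) * d ≤ d1 + d2 := by
    rw [show 2 * (1 / (4 * φ)) * d = d / (2 * φ) by field_simp; ring]
    rw [div_le_iff₀ (by positivity)]; linarith
  rw [hσ]
  generalize 1 / (4 * φ) = s at *
  have : 0 ≤ fk * (d1 + d2 - 2 * s * d) := mul_nonneg hk.le (by linarith)
  nlinarith

theorem Pos.dd {U : Finset κ} {F : (κ → ℂ) → ℂ} {x : κ → ℝ} (h : Pos U F x) {a : κ}
    (ha : a ∈ U) : Pos (U.erase a) (dd a F) x := by
  intro S hS
  have haS : a ∉ S := fun hh => by simpa using hS hh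
  rw [DD_dd, ← DD_insert haS]
  exact h _ (Finset.insert_subset ha (hS.trans (Finset.erase_subset _ _)))

theorem Pos.pos {U : Finset κ} {F : (κ → ℂ) → ℂ} {x : κ → ℝ} (h : Pos U F x) : 0 < Rv F x :=
  h ∅ (by simp)

theorem Rv_dd_update (F : (κ → ℂ) → ℂ) (x : κ → ℝ) (a : κ) (t : ℝ) :
    Rv (dd a F) (Function.update x a t) = Rv (dd a F) x := by
  unfold Rv
  rw [← upd_ofReal, dd_update_self]

theorem Rv_merge {a b : κ} (hab : a ≠ b) {F : (κ → ℂ) → ℂ} (h : MA F) (x : κ → ℝ)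
    (hx : x a = x b) (s : ℝ) :
    Rv (merge a b F) (Function.update x a (x a - s)) =
      Rv (dd a F) x + Rv (dd b F) x - 2 * s * Rv (dd a (dd b F)) x := by
  unfold Rv
  rw [← upd_ofReal, merge_apply hab F h]
  have t1 := (h.dd a).shift (fun k => (x k : ℂ)) b 0 (x b)
  have t2 := (h.dd b).shift (fun k => (x k : ℂ)) a 0 (x a)
  simp only [Function.update_eq_self] at t1 t2
  have t1' : dd a F (fun k => (x k : ℂ)) = dd a F (Function.update (fun k => (x k : ℂ)) b 0) +
    ((x b : ℂ) - 0) * dd b (dd a F) (fun k => (x k : ℂ)) := by rw [← t1]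
  have t2' : dd b F (fun k => (x k : ℂ)) = dd b F (Function.update (fun k => (x k : ℂ)) a 0) +
    ((x a : ℂ) - 0) * dd a (dd b F) (fun k => (x k : ℂ)) := by rw [← t2]
  rw [dd_comm b a] at t1'
  rw [t1', t2', ← hx]
  simp
  ring

/-- One barrier step: if `x` is above the roots of `F` with barriers at most `φ`, and the two merged
variables have equal coordinates and equal bounds `ψ`, then the merged polynomial is above its roots
after lowering the coordinate `a` by `1 / (4 ψ)`, with bound `4 ψ / 3` at `a` and unchanged bounds
elsewhere. -/
theorem merge_step {U : Finset κ} {F : (κ → ℂ) → ℂ} (h : Good U F) {x : κ → ℝ}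
    (hp : Pos U F x) {φ : κ → ℝ} (hφ : ∀ k ∈ U, Rv (dd k F) x ≤ φ k * Rv F x)
    {a b : κ} (hab : a ≠ b) (ha : a ∈ U) (hb : b ∈ U) (hx : x a = x b) {ψ : ℝ} (hψ : 0 < ψ)
    (hφa : φ a = ψ) (hφb : φ b = ψ) :
    Pos (U.erase b) (merge a b F) (Function.update x a (x a - 1 / (4 * ψ))) ∧
    ∀ k ∈ U.erase b, Rv (dd k (merge a b F)) (Function.update x a (x a - 1 / (4 * ψ))) ≤
      Function.update φ a (4 * ψ / 3) k *
        Rv (merge a b F) (Function.update x a (x a - 1 / (4 * ψ))) := by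
  have hs : ∀ c, 2 * (1 / (4 * ψ)) * c = c / (2 * ψ) := by intro c; field_simp; ring
  have low : ∀ S ⊆ U.erase b, a ∉ S → 0 < Rv (dd a (DD S F)) x + Rv (dd b (DD S F)) x ∧
      3 / 4 * (Rv (dd a (DD S F)) x + Rv (dd b (DD S F)) x) ≤
        Rv (merge a b (DD S F)) (Function.update x a (x a - 1 / (4 * ψ))) := by
    intro S hS haS
    have hbS : b ∉ S := fun hh => by simpa using hS hh
    have hSU := hS.trans (Finset.erase_subset _ _)
    rw [Rv_merge hab (h.ma.DD S) x hx, hs]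
    have p1 := hp _ (Finset.insert_subset ha hSU)
    have p2 := hp _ (Finset.insert_subset hb hSU)
    rw [DD_insert haS] at p1
    rw [DD_insert hbS] at p2
    have b1 := barrier_mono h hp (hφ a ha) (Finset.insert_subset hb hSU) (by simp [hab, haS])
    have b2 := barrier_mono h hp (hφ b hb) (Finset.insert_subset ha hSU) (by simp [hab.symm, hbS])
    rw [DD_insert hbS, hφa] at b1
    rw [DD_insert haS, hφb, dd_comm] at b2
    refine ⟨by linarith, ?_⟩
    have : Rv (dd a (dd b (DD S F))) x / (2 * ψ) ≤
      1 / 4 * (Rv (dd a (DD S F)) x + Rv (dd b (DD S F)) x) := by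
      rw [div_le_iff₀ (by positivity)]; linarith
    linarith
  have hpos : Pos (U.erase b) (merge a b F) (Function.update x a (x a - 1 / (4 * ψ))) := by
    intro S hS
    have hbS : b ∉ S := fun hh => by simpa using hS hh
    have hSU := hS.trans (Finset.erase_subset _ _)
    by_cases haS : a ∈ S
    · have := hp _ (Finset.insert_subset hb hSU)
      rw [← Finset.insert_erase haS, DD_insert_merge hab (by simp) (by simp [hbS]) F h.ma]
      rw [DD_insert (by simp [hab])]
      have e : Rv (fun z => 2 * dd a (DD (insert b (S.erase a)) F) z)
          (Function.update x a (x a - 1 / (4 * ψ))) =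
          2 * Rv (dd a (DD (insert b (S.erase a)) F)) x := by
        rw [← Rv_dd_update _ x a (x a - 1 / (4 * ψ))]
        simp [Rv]
      rw [e, ← DD_insert (by simp [hab]), Finset.insert_comm, Finset.insert_erase haS]
      linarith
    · rw [DD_merge haS hbS]
      have := low S hS haS
      linarith
  refine ⟨hpos, ?_⟩
  intro k hk
  have hkb : k ≠ b := (Finset.mem_erase.1 hk).1
  have hkU : k ∈ U := (Finset.mem_erase.1 hk).2
  rcases eq_or_ne k a with rfl | hka
  · rw [Function.update_self, dd_merge_self hab F h.ma]
    have e : Rv (fun z => 2 * dd k (dd b F) z)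
          (Function.update x k (x k - 1 / (4 * ψ))) = 2 * Rv (dd k (dd b F)) x := by
      rw [← Rv_dd_update _ x k (x k - 1 / (4 * ψ))]
      simp [Rv]
    rw [e]
    have l := (low ∅ (by simp) (by simp)).2
    simp only [DD_empty] at l
    have b1 := barrier_mono h hp (hφ k ha) (S := {b}) (by simpa using hb) (by simp [hab])
    have b2 := barrier_mono h hp (hφ b hb) (S := {k}) (by simpa using ha) (by simp [hab.symm])
    rw [show DD {b} F = dd b F from rfl, hφa] at b1
    rw [show DD {k} F = dd k F from rfl, hφb, dd_comm] at b2
    nlinarith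
  · rw [Function.update_of_ne hka, dd_merge_of_ne hka hkb]
    have l := hpos.pos
    have hpk := hp.dd hkU
    have hak : a ∈ U.erase k := by simp [ha, hka.symm]
    have hbk : b ∈ U.erase k := by simp [hb, hkb.symm]
    have n := numeric (φ := ψ) hp.pos hpk.pos (hpk.dd hak).pos (hpk.dd hbk).pos
      ((hpk.dd hbk).dd (a := a) (by simp [hab, hak])).pos hψ
      (rayleigh h hka.symm x) (rayleigh h hkb.symm x)
      (f12 := Rv (dd a (dd b F)) x) (by
        intro τ
        have := rayleigh h hab (Function.update x k (x k + τ))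
        rw [Rv_shift h.ma, Rv_shift (h.ma.dd a), Rv_shift (h.ma.dd b),
          Rv_shift ((h.ma.dd b).dd a), dd_comm k a, dd_comm k a, dd_comm k b] at this
        exact this) (by rw [← hφa]; exact hφ a ha) (by rw [← hφb]; exact hφ b hb)
    rw [← Rv_merge hab h.ma x hx, ← Rv_merge hab (h.ma.dd k) x hx] at n
    have hf := hp.pos
    have := hφ k hkU
    refine le_of_mul_le_mul_right (n.trans ?_) hf
    nlinarith

end Pav

/-! ### Choosing colours by undoing merges -/

namespace Pav

section
variable {κ : Type*} [DecidableEq κ]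

/-- If `∂_a ∂_b` of all mixed derivatives of `G` in variables of `W0` is positive at `x`, then
positivity of `∂_b G` propagates to all its mixed derivatives: by Rayleigh for `∂_b G`, adjoining one
variable `k` cannot change the sign. -/
theorem sel_aux {W W0 : Finset κ} {G : (κ → ℂ) → ℂ} (h : Good W G) {a b : κ} (hab : a ≠ b)
    (hb : b ∈ W) (hW : W0 ⊆ W) (ha0 : a ∉ W0) (hb0 : b ∉ W0) {x : κ → ℝ}
    (hδ : ∀ S ⊆ W0, 0 < Rv (dd a (dd b (DD S G))) x) (h0 : 0 < Rv (dd b G) x)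
    {S : Finset κ} (hS : S ⊆ W0) : 0 < Rv (dd b (DD S G)) x := by
  induction S using Finset.induction_on with
  | empty => exact h0
  | insert k S hk ih =>
    have hSW := (Finset.subset_insert _ _).trans hS
    have ih := ih hSW
    have hbS : b ∉ S := fun hh => hb0 (hSW hh)
    have hka : k ≠ a := by rintro rfl; exact ha0 (hS (by simp))
    have d1 := hδ _ hSW
    have d2 := hδ _ hS
    have r := rayleigh ((h.DD (hSW.trans hW)).dd (a := b) (by simp [hb, hbS])) hka x
    rw [DD_insert hk] at d2 ⊢
    rw [dd_comm b k, dd_comm a k] at d2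
    rw [dd_comm b k]
    have := mul_pos ih d2
    exact pos_of_mul_pos_left (this.trans_le r) d1.le

theorem Pos.shift {V : Finset κ} {F : (κ → ℂ) → ℂ} (hF : MA F) {x : κ → ℝ} (h : Pos V F x)
    {k : κ} (hk : k ∈ V) {u : ℝ} (hu : 0 ≤ u) : Pos V F (Function.update x k (x k + u)) := by
  intro S hS
  by_cases hkS : k ∈ S
  · have := h S hS
    rw [← Finset.insert_erase hkS, DD_insert (by simp)] at this ⊢
    rwa [Rv_dd_update]
  · rw [Rv_shift (hF.DD S), ← DD_insert hkS]
    have h1 := h S hS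
    have h2 := h _ (Finset.insert_subset hk hS)
    positivity

theorem Pos.shift_set {V : Finset κ} {F : (κ → ℂ) → ℂ} (hF : MA F) {x : κ → ℝ} (h : Pos V F x)
    {T : Finset κ} (hT : T ⊆ V) {u : ℝ} (hu : 0 ≤ u) :
    Pos V F (fun k => if k ∈ T then x k + u else x k) := by
  induction T using Finset.induction_on with
  | empty => simpa using h
  | insert k T hk ih =>
    have := Pos.shift hF (ih ((Finset.subset_insert _ _).trans hT)) (hT (by simp) : k ∈ V) hu
    convert this using 1
    funext j
    by_cases hj : j = k
    · subst hj; simp [hk]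
    · simp [hj]
end

variable {ι : Type*} [DecidableEq ι]

/-- The constant point `e` is above the roots for some colouring `c`: a variable `(i, c i)` in `U`
is kept for every `i`, `F` is differentiated in all other variables of `U`, and all mixed
derivatives of the result in the kept variables are positive at `e`. -/
def Sel (U : Finset (ι × ℕ)) (F : ((ι × ℕ) → ℂ) → ℂ) (e : ℝ) : Prop :=
  ∃ c : ι → ℕ, (∀ i, (i, c i) ∈ U) ∧
    Pos (U.filter fun k => k.2 = c k.1) (DD (U.filter fun k => ¬ k.2 = c k.1) F) fun _ => e

/-- A colouring for the merged polynomial yields one for `F`. If the merged variable `a` is not kept,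
the same colouring works. If it is kept, then `∂_a G + ∂_b G` is positive at `e`, where `G` is the
derivative of `F` in the discarded variables, so one of the two terms is positive: either `a` is
kept and `b` discarded, or the other way round. -/
theorem Sel.unmerge {U : Finset (ι × ℕ)} {F : ((ι × ℕ) → ℂ) → ℂ} (h : Good U F) {e : ℝ}
    {a b : ι × ℕ} (hab : a ≠ b) (ha : a ∈ U) (hb : b ∈ U) (h1 : a.1 = b.1)
    (hs : Sel (U.erase b) (merge a b F) e) : Sel U F e := by
  obtain ⟨c, hc, hp⟩ := hs
  have hcb : ¬ b.2 = c b.1 := by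
    intro hh
    have := hc b.1
    rw [← hh] at this
    simp at this
  by_cases hca : a.2 = c a.1
  · set V := (U.erase b).filter fun k => k.2 = c k.1 with hV
    set L := (U.erase b).filter fun k => ¬ k.2 = c k.1 with hL
    have hLU : L ⊆ U := (Finset.filter_subset _ _).trans (Finset.erase_subset _ _)
    have hVU : V ⊆ U := (Finset.filter_subset _ _).trans (Finset.erase_subset _ _)
    have haV : a ∈ V := by simp [hV, hab, ha, hca]
    have haL : a ∉ L := by simp [hL, hca]
    have hbL : b ∉ L := by simp [hL]
    have hbV : b ∉ V := by simp [hV]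
    have hVL : Disjoint V L := by
      rw [Finset.disjoint_left]; intro k; simp [hV, hL]; tauto
    have hG := h.DD hLU
    have hU : V ∪ L = U.erase b := Finset.filter_union_filter_not_eq _ _
    rw [DD_merge haL hbL] at hp
    set G := DD L F with hGdef
    set x : ι × ℕ → ℝ := fun _ => e with hx
    have hxu : Function.update x a (x a - 0) = x := by simp
    have p0 : ∀ S ⊆ V.erase a, 0 < Rv (dd a (DD S G)) x + Rv (dd b (DD S G)) x := by
      intro S hS
      have haS : a ∉ S := fun hh => by simpa using hS hh
      have hbS : b ∉ S := fun hh => hbV (Finset.erase_subset _ _ (hS hh))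
      have := hp S (hS.trans (Finset.erase_subset _ _))
      rw [DD_merge haS hbS] at this
      have r := Rv_merge hab (hG.ma.DD S) x rfl 0
      rw [hxu] at r
      rw [r] at this
      linarith
    have pδ : ∀ S ⊆ V.erase a, 0 < Rv (dd a (dd b (DD S G))) x := by
      intro S hS
      have haS : a ∉ S := fun hh => by simpa using hS hh
      have hbS : b ∉ S := fun hh => hbV (Finset.erase_subset _ _ (hS hh))
      have := hp (insert a S) (Finset.insert_subset haV (hS.trans (Finset.erase_subset _ _)))
      rw [DD_insert_merge hab haS hbS _ hG.ma, DD_insert (by simp [hab, haS]), DD_insert hbS] at this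
      have e2 : Rv (fun z => 2 * dd a (dd b (DD S G)) z) x = 2 * Rv (dd a (dd b (DD S G))) x := by
        simp [Rv]
      rw [e2] at this
      linarith
    have hVW : V.erase a ⊆ U \ L := by
      intro k hk
      have hkV := Finset.erase_subset _ _ hk
      simp [hVU hkV, Finset.disjoint_left.1 hVL hkV]
    -- The sign of `∂_b G` decides which of the two variables is kept.
    rcases lt_or_ge 0 (Rv (dd b G) x) with hpos | hneg
    · refine ⟨c, fun i => Finset.erase_subset _ _ (hc i), ?_⟩
      have eL : (U.filter fun k => ¬ k.2 = c k.1) = insert b L := by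
        ext k; simp [hL]; by_cases hk : k = b
        · subst hk; simp [hb, hcb]
        · simp [hk]
      have eV : (U.filter fun k => k.2 = c k.1) = V := by
        ext k; simp [hV]; by_cases hk : k = b
        · subst hk; simp [hcb]
        · simp [hk]
      rw [eL, eV, DD_insert hbL, ← hGdef]
      intro S hS
      by_cases haS : a ∈ S
      · have hS' : S.erase a ⊆ V.erase a := Finset.erase_subset_erase _ hS
        rw [← Finset.insert_erase haS, DD_insert (by simp), DD_dd]
        exact pδ _ hS'
      · rw [DD_dd]
        have hS' : S ⊆ V.erase a := by
          rw [← Finset.erase_eq_of_notMem haS]; exact Finset.erase_subset_erase _ hS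
        exact sel_aux hG hab (by simp [hb, hbL]) hVW (by simp) (by simp [hbV]) pδ hpos hS'
    · have hpos : 0 < Rv (dd a G) x := by
        have := p0 ∅ (by simp)
        simp only [DD_empty] at this
        linarith
      refine ⟨Function.update c a.1 b.2, ?_, ?_⟩
      · intro i
        by_cases hi : i = a.1
        · subst hi; rw [Function.update_self, h1]; exact hb
        · rw [Function.update_of_ne hi]; exact Finset.erase_subset _ _ (hc i)
      have hkb : ∀ k : ι × ℕ, k.1 = a.1 → k.2 = b.2 → k = b := fun k h h' =>
        Prod.ext (h.trans h1) h'
      have hka : ∀ k : ι × ℕ, k.1 = a.1 → k.2 = c a.1 → k = a := fun k h h' =>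
        Prod.ext h (h'.trans hca.symm)
      have hab2 : a.2 ≠ b.2 := fun hh => hab (Prod.ext h1 hh)
      have upd : ∀ k : ι × ℕ, (k.2 = Function.update c a.1 b.2 k.1 ↔
          k = b ∨ (k ≠ a ∧ k.2 = c k.1)) := by
        intro k
        by_cases hk1 : k.1 = a.1
        · rw [hk1, Function.update_self]
          constructor
          · intro hh; exact Or.inl (hkb k hk1 hh)
          · rintro (rfl | ⟨hh, hh'⟩)
            · rfl
            · exact absurd (hka k hk1 hh') hh
        · rw [Function.update_of_ne hk1]
          have q1 : k ≠ a := fun hh => hk1 (by rw [hh])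
          have q2 : k ≠ b := fun hh => hk1 (by rw [hh, h1])
          simp [q1, q2]
      have eL : (U.filter fun k => ¬ k.2 = Function.update c a.1 b.2 k.1) = insert a L := by
        ext k
        simp only [Finset.mem_filter, upd, Finset.mem_insert, hL, Finset.mem_erase]
        by_cases hk : k = a
        · subst hk; simp [ha, hab]
        · simp [hk]; tauto
      have eV : (U.filter fun k => k.2 = Function.update c a.1 b.2 k.1) =
          insert b (V.erase a) := by
        ext k
        simp only [Finset.mem_filter, upd, Finset.mem_insert, hV, Finset.mem_erase]
        by_cases hk : k = b
        · subst hk; simp [hb]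
        · simp [hk]; tauto
      rw [eL, eV, DD_insert haL, ← hGdef]
      have pδ' : ∀ S ⊆ V.erase a, 0 < Rv (dd b (dd a (DD S G))) x := by
        intro S hS; rw [dd_comm]; exact pδ S hS
      intro S hS
      by_cases hbS : b ∈ S
      · have hS' : S.erase b ⊆ V.erase a := by
          intro k hk
          have := hS (Finset.erase_subset _ _ hk)
          rw [Finset.mem_insert] at this
          exact this.resolve_left (Finset.ne_of_mem_erase hk)
        rw [← Finset.insert_erase hbS, DD_insert (by simp), DD_dd]
        exact pδ' _ hS'
      · rw [DD_dd]
        have hS' : S ⊆ V.erase a := (Finset.subset_insert_iff_of_notMem hbS).1 hS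
        exact sel_aux hG hab.symm (by simp [ha, haL]) hVW (by simp [hbV]) (by simp) pδ' hpos hS'
  · refine ⟨c, fun i => Finset.erase_subset _ _ (hc i), ?_⟩
    have eV : (U.filter fun k => k.2 = c k.1) = (U.erase b).filter fun k => k.2 = c k.1 := by
      ext k; simp; by_cases hk : k = b
      · subst hk; simp [hcb]
      · simp [hk]
    rw [eV]
    intro S hS
    have := hp S hS
    have d1 : Disjoint S ((U.erase b).filter fun k => ¬ k.2 = c k.1) := by
      rw [Finset.disjoint_left]; intro k hk
      have := hS hk
      simp at this ⊢; tauto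
    have d2 : Disjoint S (U.filter fun k => ¬ k.2 = c k.1) := by
      rw [Finset.disjoint_left]; intro k hk
      have := hS hk
      simp at this ⊢; tauto
    have hbS : b ∉ S := fun hh => by simpa using hS hh
    rw [DD_DD d1, ← Finset.insert_erase (show a ∈ S ∪ (U.erase b).filter fun k => ¬ k.2 = c k.1 by
        simp [hab, ha, hca]),
      DD_insert_merge hab (by simp) (by simp [hbS]) F h.ma] at this
    rw [DD_DD d2, show S ∪ (U.filter fun k => ¬ k.2 = c k.1) = insert a (insert b
      ((S ∪ (U.erase b).filter fun k => ¬ k.2 = c k.1).erase a)) by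
        ext k; simp
        by_cases hk : k = b
        · subst hk; simp [hb, hcb]
        · by_cases hk' : k = a
          · subst hk'; simp [ha, hca]
          · simp [hk, hk']]
    have e2 : ∀ H : ((ι × ℕ) → ℂ) → ℂ, Rv (fun z => 2 * H z) (fun _ => e) =
        2 * Rv H (fun _ => e) := by
      intro H; simp [Rv]
    rw [e2] at this
    linarith

end Pav

/-! ### Halving the number of colours -/

namespace Pav


theorem Rv_congr {κ : Type*} [DecidableEq κ] {U : Finset κ} {F : (κ → ℂ) → ℂ}
    (h : Good U F) {S : Finset κ} (hS : S ⊆ U) {x y : κ → ℝ} (hxy : ∀ k ∈ U, x k = y k) :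
    Rv (DD S F) x = Rv (DD S F) y := by
  unfold Rv
  rw [(h.DD hS).dep _ (fun k => (y k : ℂ))]
  intro k hk
  rw [hxy k (Finset.sdiff_subset hk)]

variable {ι : Type*} [DecidableEq ι]

/-- The point reached from `β` with barrier bound `φ` after `ℓ` halvings. -/
noncomputable def endpt : ℕ → ℝ → ℝ → ℝ
  | 0, β, _ => β
  | ℓ + 1, β, φ => endpt ℓ (β - 1 / (4 * φ)) (4 * φ / 3)

variable [Fintype ι]

/-- The variables `(i, c)` with `2 ^ ℓ` colours `c`. -/
def block (ι : Type*) [Fintype ι] (ℓ : ℕ) : Finset (ι × ℕ) :=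
  Finset.univ ×ˢ Finset.range (2 ^ ℓ)

/-- The halving scheme: colour `c + 2 ^ ℓ` is merged into colour `c`, for all rows and all
`c < 2 ^ ℓ` one after the other, and the resulting polynomial in half as many variables is treated
by induction. -/
theorem sel_main (ℓ : ℕ) : ∀ (F : (ι × ℕ → ℂ) → ℂ) (β φ : ℝ), Good (block ι ℓ) F → 0 < φ →
    Pos (block ι ℓ) F (fun _ => β) →
    (∀ k ∈ block ι ℓ, Rv (dd k F) (fun _ => β) ≤ φ * Rv F (fun _ => β)) →
    Sel (block ι ℓ) F (endpt ℓ β φ) := by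
  induction ℓ with
  | zero =>
    intro F β φ h hφ hp _
    refine ⟨fun _ => 0, by simp [block], ?_⟩
    have e1 : ((block ι 0).filter fun k => k.2 = 0) = block ι 0 := by
      ext ⟨i, c⟩; simp [block]; exact Eq.symm
    have e2 : ((block ι 0).filter fun k => ¬ k.2 = 0) = ∅ := by
      ext ⟨i, c⟩; simp [block]; exact Eq.symm
    rw [e1, e2]
    exact hp
  | succ ℓ IH =>
    intro F β φ h hφ hp hb
    set s := 1 / (4 * φ) with hs
    set τ : ι × ℕ → ι × ℕ := fun k => (k.1, k.2 + 2 ^ ℓ) with hτ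
    have hτi : Function.Injective τ := by
      intro k k' hk
      simp only [hτ, Prod.mk.injEq, Nat.add_right_cancel_iff] at hk
      exact Prod.ext hk.1 hk.2
    have hτU : ∀ k, τ k ∉ block ι ℓ := by intro k; simp [hτ, block]
    -- `R` is the set of variables still to be merged with their partners `τ k`; the variables of
    -- the block outside `R` have already been lowered by `s`.
    have step : ∀ R : Finset (ι × ℕ), R ⊆ block ι ℓ → ∀ F : (ι × ℕ → ℂ) → ℂ,
        Good (block ι ℓ ∪ R.image τ) F →
        Pos (block ι ℓ ∪ R.image τ) F (fun k => if k ∈ block ι ℓ \ R then β - s else β) →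
        (∀ k ∈ block ι ℓ ∪ R.image τ,
          Rv (dd k F) (fun k => if k ∈ block ι ℓ \ R then β - s else β) ≤
          (if k ∈ block ι ℓ \ R then 4 * φ / 3 else φ) *
            Rv F (fun k => if k ∈ block ι ℓ \ R then β - s else β)) →
        Sel (block ι ℓ ∪ R.image τ) F (endpt ℓ (β - s) (4 * φ / 3)) := by
      intro R
      induction R using Finset.induction_on with
      | empty =>
        intro _ F hF hP hB
        simp only [Finset.image_empty, Finset.union_empty, Finset.sdiff_empty] at hF hP hB ⊢
        have hc : ∀ S ⊆ block ι ℓ, Rv (DD S F) (fun k => if k ∈ block ι ℓ then β - s else β) =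
            Rv (DD S F) (fun _ => β - s) := fun S hS =>
          Rv_congr hF hS (fun k hk => if_pos hk)
        apply IH F _ _ hF (by positivity)
        · intro S hS
          rw [← hc S hS]; exact hP S hS
        · intro k hk
          have := hB k hk
          rw [if_pos hk] at this
          have h1 := hc {k} (by simpa using hk)
          have h2 := hc ∅ (by simp)
          rw [show DD {k} F = dd k F from rfl] at h1
          rw [DD_empty] at h2
          rwa [h1, h2] at this
      | insert a R haR ih =>
        intro hR F hF hP hB
        have hRU := (Finset.subset_insert _ _).trans hR
        have haU : a ∈ block ι ℓ := hR (by simp)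
        have haW : a ∈ block ι ℓ ∪ (insert a R).image τ := by simp [haU]
        have hbW : τ a ∈ block ι ℓ ∪ (insert a R).image τ := by simp
        have hab : a ≠ τ a := fun hh => hτU a (hh ▸ haU)
        have hW : (block ι ℓ ∪ (insert a R).image τ).erase (τ a) = block ι ℓ ∪ R.image τ := by
          ext k
          simp only [Finset.mem_erase, Finset.mem_union, Finset.mem_image, Finset.mem_insert]
          constructor
          · rintro ⟨hk, hk' | ⟨j, rfl | hj, rfl⟩⟩
            · exact Or.inl hk'
            · exact absurd rfl hk
            · exact Or.inr ⟨j, hj, rfl⟩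
          · rintro (hk | ⟨j, hj, rfl⟩)
            · exact ⟨fun hh => hτU a (hh ▸ hk), Or.inl hk⟩
            · exact ⟨fun hh => haR (hτi hh ▸ hj), Or.inr ⟨j, Or.inr hj, rfl⟩⟩
        have xa : a ∉ block ι ℓ \ insert a R := by simp
        have xb : τ a ∉ block ι ℓ \ insert a R := by simp [hτU]
        have e : ∀ u v : ℝ, (fun k => if k ∈ block ι ℓ \ R then u else v) =
            Function.update (fun k => if k ∈ block ι ℓ \ insert a R then u else v) a u := by
          intro u v
          funext k
          by_cases hk : k = a
          · subst hk; simp [haU, haR]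
          · simp [hk]
        obtain ⟨m1, m2⟩ := merge_step hF hP hB hab haW hbW (by rw [if_neg xa, if_neg xb]) hφ
          (if_neg xa) (if_neg xb)
        rw [hW, if_neg xa, ← hs, ← e] at m1 m2
        rw [← e] at m2
        have g := hF.merge hab haW hbW
        refine Sel.unmerge hF hab haW hbW rfl ?_
        rw [hW] at g ⊢
        exact ih hRU _ g m1 m2
    have hU : block ι ℓ ∪ (block ι ℓ).image τ = block ι (ℓ + 1) := by
      ext ⟨i, c⟩
      simp only [block, hτ, Finset.mem_union, Finset.mem_image, Finset.mem_product,
        Finset.mem_univ, true_and, Finset.mem_range, Prod.mk.injEq, Prod.exists, pow_succ]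
      constructor
      · rintro (hc | ⟨j, d, hd, rfl, rfl⟩) <;> omega
      · intro hc
        by_cases h' : c < 2 ^ ℓ
        · exact Or.inl h'
        · exact Or.inr ⟨i, c - 2 ^ ℓ, by omega, rfl, by omega⟩
    have := step (block ι ℓ) subset_rfl F
    rw [hU] at this
    simp only [Finset.sdiff_self, Finset.notMem_empty, if_false] at this
    exact this h hp hb

end Pav

/-! ### The determinantal polynomial -/

namespace Pav

open Matrix
open scoped ComplexOrder
variable {ι : Type*} [DecidableEq ι] [Fintype ι]

/-- The matrix `Z_c - A`, where `Z_c` is diagonal with entries `z (i, c)`, with row `i` replaced by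
the `i`-th unit vector whenever `(i, c) ∈ L`. Its determinant is that of `Z_c - A` with those rows
and columns deleted. -/
def NM (A : Matrix ι ι ℂ) (L : Finset (ι × ℕ)) (c : ℕ) (z : ι × ℕ → ℂ) : Matrix ι ι ℂ :=
  fun i => if (i, c) ∈ L then Pi.single i 1 else Pi.single i (z (i, c)) - A i

/-- The product over the colours `c < r` of the determinants of `NM A L c z`: the derivative in the
variables of `L` of `∏_c det (Z_c - A)`. -/
def PL (A : Matrix ι ι ℂ) (r : ℕ) (L : Finset (ι × ℕ)) (z : ι × ℕ → ℂ) : ℂ :=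
  ∏ c ∈ Finset.range r, (NM A L c z).det

theorem NM_mulVec (A : Matrix ι ι ℂ) (L : Finset (ι × ℕ)) (c : ℕ) (z : ι × ℕ → ℂ)
    (v : ι → ℂ) (i : ι) : (NM A L c z *ᵥ v) i =
      if (i, c) ∈ L then v i else z (i, c) * v i - (A *ᵥ v) i := by
  by_cases h : (i, c) ∈ L
  · simp [mulVec, NM, h]
  · simp only [mulVec, NM, h, if_false, sub_dotProduct, single_dotProduct]

/-- A kernel vector `v` vanishes on the replaced rows, so pairing the kernel equation with `v`
expresses the quadratic form of `A` through the variables. -/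
theorem NM_ker {A : Matrix ι ι ℂ} {L : Finset (ι × ℕ)} {c : ℕ} {z : ι × ℕ → ℂ}
    (h : (NM A L c z).det = 0) : ∃ v : ι → ℂ, v ≠ 0 ∧
      star v ⬝ᵥ (A *ᵥ v) = ∑ i, z (i, c) * (‖v i‖ ^ 2 : ℝ) := by
  obtain ⟨v, hv, hN⟩ := exists_mulVec_eq_zero_iff.2 h
  refine ⟨v, hv, Finset.sum_congr rfl fun i _ => ?_⟩
  have := congrFun hN i
  rw [NM_mulVec] at this
  have hn : (star (v i)) * v i = ((‖v i‖ ^ 2 : ℝ) : ℂ) := by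
    push_cast; exact Complex.conj_mul' (v i)
  split_ifs at this with hi
  · simp at this; simp [this]
  · have e : (A *ᵥ v) i = z (i, c) * v i := by
      rw [Pi.zero_apply] at this; exact (sub_eq_zero.1 this).symm
    rw [e, Pi.star_apply, ← hn]; ring

theorem sum_sq_pos {v : ι → ℂ} (hv : v ≠ 0) {w : ι → ℝ} (hw : ∀ i, 0 < w i) :
    0 < ∑ i, w i * ‖v i‖ ^ 2 := by
  obtain ⟨i, hi⟩ := Function.ne_iff.1 hv
  apply Finset.sum_pos'
  · intro i _; have := hw i; positivity
  · exact ⟨i, Finset.mem_univ _, mul_pos (hw i) (by have := norm_pos_iff.2 hi; positivity)⟩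

theorem NM_det_ne_up {A : Matrix ι ι ℂ} (hA : A.IsHermitian) (L : Finset (ι × ℕ)) (c : ℕ)
    {z : ι × ℕ → ℂ} (hz : Up z) : (NM A L c z).det ≠ 0 := by
  intro h
  obtain ⟨v, hv, he⟩ := NM_ker h
  have h1 : (star v ⬝ᵥ (A *ᵥ v)).im = 0 := hA.im_star_dotProduct_mulVec_self v
  rw [he, Complex.im_sum] at h1
  simp only [Complex.im_mul_ofReal] at h1
  exact (sum_sq_pos hv (fun i => hz (i, c))).ne' h1

theorem NM_det_ne_two {A : Matrix ι ι ℂ} (hA : (1 - A).PosSemidef) (L : Finset (ι × ℕ))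
    (c : ℕ) : (NM A L c (fun _ => 2)).det ≠ 0 := by
  intro h
  obtain ⟨v, hv, he⟩ := NM_ker h
  have h1 := hA.dotProduct_mulVec_nonneg v
  have h2 : star v ⬝ᵥ v = ((∑ i, ‖v i‖ ^ 2 : ℝ) : ℂ) := by
    simp [dotProduct, Complex.conj_mul']
  rw [sub_mulVec, one_mulVec, dotProduct_sub, he, h2, ← Finset.mul_sum] at h1
  have h3 := sum_sq_pos hv (w := fun _ => 1) (by simp)
  simp only [one_mul] at h3
  have : ((0 : ℝ) : ℂ) ≤ ((∑ i, ‖v i‖ ^ 2 - 2 * ∑ i, ‖v i‖ ^ 2 : ℝ) : ℂ) := by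
    push_cast; push_cast at h1; exact h1
  rw [Complex.real_le_real] at this
  linarith

theorem NM_update_of_mem (A : Matrix ι ι ℂ) {L : Finset (ι × ℕ)} {k : ι × ℕ} (hk : k ∈ L)
    (c : ℕ) (z : ι × ℕ → ℂ) (t : ℂ) : NM A L c (Function.update z k t) = NM A L c z := by
  funext i
  simp only [NM]
  split_ifs with h
  · rfl
  · rw [Function.update_of_ne (fun hh => h (by rwa [hh]))]

theorem NM_update_of_ne (A : Matrix ι ι ℂ) (L : Finset (ι × ℕ)) {k : ι × ℕ}
    {c : ℕ} (hk : c ≠ k.2) (z : ι × ℕ → ℂ) (t : ℂ) :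
    NM A L c (Function.update z k t) = NM A L c z := by
  funext i
  simp only [NM]
  rw [Function.update_of_ne (fun hh => hk (by rw [← hh]))]

theorem NM_insert_of_ne (A : Matrix ι ι ℂ) (L : Finset (ι × ℕ)) {k : ι × ℕ}
    {c : ℕ} (hk : c ≠ k.2) (z : ι × ℕ → ℂ) :
    NM A (insert k L) c z = NM A L c z := by
  funext i
  have : (i, c) ≠ k := fun hh => hk (by rw [← hh])
  simp [NM, this]

theorem NM_insert (A : Matrix ι ι ℂ) (L : Finset (ι × ℕ)) (k : ι × ℕ) (z : ι × ℕ → ℂ) :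
    NM A (insert k L) k.2 z = (NM A L k.2 z).updateRow k.1 (Pi.single k.1 1) := by
  funext i
  by_cases hi : i = k.1
  · subst hi; simp [NM]
  · have : (i, k.2) ≠ k := fun hh => hi (by rw [← hh])
    simp [NM, this, updateRow_ne hi]

theorem NM_update (A : Matrix ι ι ℂ) {L : Finset (ι × ℕ)} {k : ι × ℕ} (hk : k ∉ L)
    (z : ι × ℕ → ℂ) (t : ℂ) :
    NM A L k.2 (Function.update z k t) =
      (NM A L k.2 z).updateRow k.1 (Pi.single k.1 t - A k.1) := by
  funext i
  by_cases hi : i = k.1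
  · subst hi; simp [NM, hk]
  · have : (i, k.2) ≠ k := fun hh => hi (by rw [← hh])
    simp [NM, this, updateRow_ne hi]

/-- The determinant is affine in the variable `k`, with slope the determinant for `insert k L`. -/
theorem NM_det_update (A : Matrix ι ι ℂ) {L : Finset (ι × ℕ)} {k : ι × ℕ} (hk : k ∉ L)
    (z : ι × ℕ → ℂ) (t : ℂ) :
    (NM A L k.2 (Function.update z k t)).det =
      (NM A L k.2 (Function.update z k 0)).det + t * (NM A (insert k L) k.2 z).det := by
  rw [NM_update A hk, NM_update A hk, NM_insert, ← det_updateRow_smul, ← det_updateRow_add]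
  congr 2
  rw [← Pi.single_smul]
  simp [sub_eq_add_neg, add_comm]

theorem PL_eq (A : Matrix ι ι ℂ) {r : ℕ} (L : Finset (ι × ℕ)) {c : ℕ} (hc : c < r)
    (z : ι × ℕ → ℂ) : PL A r L z = (NM A L c z).det *
      ∏ c' ∈ (Finset.range r).erase c, (NM A L c' z).det :=
  (Finset.mul_prod_erase _ _ (Finset.mem_range.2 hc)).symm

theorem PL_update (A : Matrix ι ι ℂ) {r : ℕ} {L : Finset (ι × ℕ)} {k : ι × ℕ} (hk : k ∉ L)
    (hr : k.2 < r) (z : ι × ℕ → ℂ) (t : ℂ) :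
    PL A r L (Function.update z k t) =
      PL A r L (Function.update z k 0) + t * PL A r (insert k L) z := by
  rw [PL_eq A _ hr, PL_eq A _ hr, PL_eq A _ hr, NM_det_update A hk]
  have e : ∀ t, ∏ c' ∈ (Finset.range r).erase k.2, (NM A L c' (Function.update z k t)).det =
      ∏ c' ∈ (Finset.range r).erase k.2, (NM A L c' z).det := fun t =>
    Finset.prod_congr rfl fun c' hc' => by
      rw [NM_update_of_ne A L (Finset.ne_of_mem_erase hc')]
  have e' : ∏ c' ∈ (Finset.range r).erase k.2, (NM A (insert k L) c' z).det =
      ∏ c' ∈ (Finset.range r).erase k.2, (NM A L c' z).det :=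
    Finset.prod_congr rfl fun c' hc' => by
      rw [NM_insert_of_ne A L (Finset.ne_of_mem_erase hc')]
  rw [e, e, e']; ring

theorem dd_PL (A : Matrix ι ι ℂ) {r : ℕ} {L : Finset (ι × ℕ)} {k : ι × ℕ} (hk : k ∉ L)
    (hr : k.2 < r) : dd k (PL A r L) = PL A r (insert k L) := by
  funext z
  rw [dd, PL_update A hk hr]; ring

theorem PL_MA (A : Matrix ι ι ℂ) (r : ℕ) (L : Finset (ι × ℕ)) : MA (PL A r L) := by
  intro z k t
  by_cases h : k ∉ L ∧ k.2 < r
  · rw [dd_PL A h.1 h.2, PL_update A h.1 h.2]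
  · have e : ∀ t, PL A r L (Function.update z k t) = PL A r L z := by
      intro t
      refine Finset.prod_congr rfl fun c hc => ?_
      by_cases hk : k ∈ L
      · rw [NM_update_of_mem A hk]
      · rw [NM_update_of_ne]
        intro hh
        exact h ⟨hk, hh ▸ Finset.mem_range.1 hc⟩
    simp [dd, e]

theorem DD_PL (A : Matrix ι ι ℂ) (ℓ : ℕ) {S : Finset (ι × ℕ)} (hS : S ⊆ block ι ℓ) :
    DD S (PL A (2 ^ ℓ) ∅) = PL A (2 ^ ℓ) S := by
  induction S using Finset.induction_on with
  | empty => rfl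
  | insert k S hk ih =>
    have : k ∈ block ι ℓ := hS (by simp)
    rw [DD_insert hk, ih ((Finset.subset_insert _ _).trans hS), dd_PL A hk]
    simpa [block] using this

theorem continuous_NM_det (A : Matrix ι ι ℂ) (L : Finset (ι × ℕ)) (c : ℕ) :
    Continuous fun z => (NM A L c z).det := by
  apply Continuous.matrix_det
  refine continuous_pi fun i => ?_
  unfold NM
  split_ifs
  · fun_prop
  · apply Continuous.sub _ continuous_const
    exact (continuous_single i).comp (continuous_apply _)

theorem PL_good {A : Matrix ι ι ℂ} (hA : A.IsHermitian) (ℓ : ℕ) :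
    Good (block ι ℓ) (PL A (2 ^ ℓ) ∅) where
  ma := PL_MA _ _ _
  cont := continuous_finsetProd _ fun c _ => continuous_NM_det A ∅ c
  real := by
    intro x
    rw [← Complex.conj_eq_iff_im]
    unfold PL
    rw [map_prod]
    refine Finset.prod_congr rfl fun c _ => ?_
    change star _ = _
    rw [← det_conjTranspose]
    congr 1
    ext i j
    have := hA.apply i j
    simp only [conjTranspose_apply, NM, Finset.notMem_empty, if_false, Pi.sub_apply, star_sub,
      this]
    congr 1
    by_cases hij : i = j
    · subst hij; simp
    · simp [Pi.single_apply, hij, Ne.symm hij]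
  dep := by
    intro z z' hz
    refine Finset.prod_congr rfl fun c hc => ?_
    congr 1
    funext i
    simp only [NM]
    rw [hz (i, c) (by simpa [block] using hc)]
  nv := by
    intro S hS z hz
    rw [DD_PL A ℓ hS]
    exact Finset.prod_ne_zero_iff.2 fun c _ => NM_det_ne_up hA S c hz

theorem psd_scale {A : Matrix ι ι ℂ} (hA : (1 - A).PosSemidef) {s : ℝ} (h0 : 0 ≤ s)
    (h1 : s ≤ 1) : (1 - (s : ℂ) • A).PosSemidef := by
  have e : (1 - (s : ℂ) • A) = (((1 - s : ℝ) : ℂ)) • (1 : Matrix ι ι ℂ) + (s : ℂ) • (1 - A) := by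
    push_cast
    rw [sub_smul, smul_sub, one_smul]; abel
  rw [e]
  apply PosSemidef.add
  · apply PosSemidef.one.smul
    rw [Complex.zero_le_real]; linarith
  · exact hA.smul (Complex.zero_le_real.2 h0)

/-- The constant point `2` is above the roots: the relevant determinants do not vanish along the path
from `0` to `A`, and are positive at `0`. -/
theorem PL_pos {A : Matrix ι ι ℂ} (hA : A.IsHermitian) (hA1 : (1 - A).PosSemidef) (ℓ : ℕ) :
    Pos (block ι ℓ) (PL A (2 ^ ℓ) ∅) fun _ => 2 := by
  intro S hS
  rw [DD_PL A ℓ hS]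
  by_contra! hneg
  let g : ℝ → ℝ := fun s => Rv (PL ((s : ℂ) • A) (2 ^ ℓ) S) fun _ => 2
  have hg : Continuous g := by
    refine Complex.continuous_re.comp (continuous_finsetProd _ fun c _ => ?_)
    apply Continuous.matrix_det
    refine continuous_pi fun i => ?_
    unfold NM
    split_ifs
    · fun_prop
    · apply Continuous.sub continuous_const
      refine continuous_pi fun j => ?_
      simp only [Matrix.smul_apply]
      fun_prop
  have g0 : 0 < g 0 := by
    have e : ∀ c, (NM ((0 : ℝ) • A) S c fun _ => 2) =
        diagonal fun i => if (i, c) ∈ S then 1 else (2 : ℂ) := by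
      intro c
      ext i j
      by_cases hij : i = j
      · subst hij; simp [NM]; split_ifs <;> simp
      · simp [NM, hij]; split_ifs <;> simp [Ne.symm hij]
    have e2 : (PL ((0 : ℝ) • A) (2 ^ ℓ) S fun _ => 2) =
        ((∏ c ∈ Finset.range (2 ^ ℓ), ∏ i, if (i, c) ∈ S then (1 : ℝ) else 2 : ℝ) : ℂ) := by
      unfold PL
      push_cast
      refine Finset.prod_congr rfl fun c _ => ?_
      rw [e, det_diagonal]
      refine Finset.prod_congr rfl fun i _ => ?_
      split_ifs <;> simp
    have e3 : g 0 = (PL ((0 : ℝ) • A) (2 ^ ℓ) S fun _ => 2).re := by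
      simp only [g, Rv]; norm_num
    rw [e3, e2, Complex.ofReal_re]
    refine Finset.prod_pos fun c _ => Finset.prod_pos fun i _ => ?_
    split_ifs <;> norm_num
  have g1 : g 1 ≤ 0 := by simpa [g] using hneg
  obtain ⟨s, hs, hs0⟩ := intermediate_value_Icc' (zero_le_one) hg.continuousOn ⟨g1, g0.le⟩
  have hsA : ((s : ℂ) • A).IsHermitian := by
    unfold IsHermitian
    rw [conjTranspose_smul, hA.eq]; simp
  have hG := (PL_good hsA ℓ).DD hS
  have hz := hG.coe_Rv fun _ => 2
  rw [DD_PL _ ℓ hS] at hz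
  simp only [g] at hs0
  rw [hs0] at hz
  simp only [Complex.ofReal_zero, Complex.ofReal_ofNat] at hz
  obtain ⟨c, _, hc⟩ := Finset.prod_eq_zero_iff.1 hz
  exact NM_det_ne_two (psd_scale hA1 hs.1 hs.2) S c hc

/-- The operator form of `1 / (2 - x) ≤ (2 + x) / 3` for `-1 ≤ x ≤ 1`, read on the diagonal. -/
theorem diag_inv_le {A : Matrix ι ι ℂ} (h1 : (1 - A).PosSemidef) (h2 : (1 + A).PosSemidef)
    (i : ι) (hi : (A i i).re ≤ 1 / 10) :
    (2 - A).det ≠ 0 ∧ ((2 - A)⁻¹ i i).re ≤ 7 / 10 := by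
  have hA : A.IsHermitian := by
    have := h1.isHermitian
    have h := isHermitian_one (α := ℂ) (n := ι) |>.sub this
    simpa using h
  have hM : (2 - A).PosDef := by
    have : (2 - A) = 1 + (1 - A) := by rw [← add_sub_assoc, one_add_one_eq_two]
    rw [this]
    exact PosDef.one.add_posSemidef h1
  have hdet : (2 - A).det ≠ 0 := hM.det_pos.ne'
  refine ⟨hdet, ?_⟩
  have hinv : (2 - A)⁻¹ * (2 - A) = 1 := nonsing_inv_mul _ (isUnit_iff_ne_zero.2 hdet)
  have hinv' : (2 - A) * (2 - A)⁻¹ = 1 := mul_nonsing_inv _ (isUnit_iff_ne_zero.2 hdet)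
  have a1 : ((1 - A) * (1 + A) * (1 - A)).PosSemidef := by
    have := h2.mul_mul_conjTranspose_same (1 - A)
    rwa [h1.isHermitian.eq] at this
  have a2 : ((1 + A) * (1 - A) * (1 + A)).PosSemidef := by
    have := h1.mul_mul_conjTranspose_same (1 + A)
    rwa [h2.isHermitian.eq] at this
  -- `(2 - x)(1 - x²) = ½((1-x)²(1+x) + (1+x)²(1-x)) + (1-x)²(1+x)`, a sum of positive terms; no
  -- functional calculus is needed.
  have hQ : ((2 - A) * (1 - A * A)).PosSemidef := by
    have e : (2 - A) * (1 - A * A) = ((1 / 2 : ℝ) : ℂ) • ((1 - A) * (1 + A) * (1 - A) +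
        (1 + A) * (1 - A) * (1 + A)) + (1 - A) * (1 + A) * (1 - A) := by
      have : (1 - A) * (1 + A) * (1 - A) + (1 + A) * (1 - A) * (1 + A) =
          (2 : ℂ) • (1 - A * A) := by
        rw [two_smul]; noncomm_ring
      rw [this, smul_smul]
      norm_num
      rw [← one_add_one_eq_two (R := Matrix ι ι ℂ)]
      noncomm_ring
    rw [e]
    exact ((a1.add a2).smul (by rw [Complex.zero_le_real]; norm_num)).add a1
  have hR := hQ.mul_mul_conjTranspose_same (2 - A)⁻¹
  have e : (2 - A)⁻¹ * ((2 - A) * (1 - A * A)) * ((2 - A)⁻¹)ᴴ = 2 + A - (3 : ℂ) • (2 - A)⁻¹ := by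
    rw [hM.inv.isHermitian.eq, ← mul_assoc, hinv, one_mul]
    have : (1 - A * A) = (2 + A) * (2 - A) - (3 : ℂ) • 1 := by
      have e3 : (3 : ℂ) • (1 : Matrix ι ι ℂ) = 1 + 1 + 1 := by
        rw [show (3 : ℂ) = 1 + 1 + 1 by norm_num, add_smul, add_smul, one_smul]
      rw [e3, ← one_add_one_eq_two (R := Matrix ι ι ℂ)]
      noncomm_ring
    rw [this, sub_mul, mul_assoc, hinv', mul_one, smul_mul_assoc, one_mul]
  rw [e] at hR
  have := (Complex.le_def.1 (hR.diag_nonneg (i := i))).1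
  have h2i : (2 : Matrix ι ι ℂ) i i = 2 := by simp [ofNat_apply]
  simp [h2i] at this
  linarith

/-- The initial barrier bound: the logarithmic derivative in `z (i, c)` is the diagonal entry `i` of
`(2 - A)⁻¹`. -/
theorem PL_barrier {A : Matrix ι ι ℂ} (h1 : (1 - A).PosSemidef) (h2 : (1 + A).PosSemidef)
    (hA : A.IsHermitian) (hd : ∀ i, (A i i).re ≤ 1 / 10) (ℓ : ℕ) (k : ι × ℕ)
    (hk : k ∈ block ι ℓ) :
    Rv (dd k (PL A (2 ^ ℓ) ∅)) (fun _ => 2) ≤ 7 / 10 * Rv (PL A (2 ^ ℓ) ∅) (fun _ => 2) := by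
  obtain ⟨hdet, hle⟩ := diag_inv_le h1 h2 k.1 (hd _)
  have hkr : k.2 < 2 ^ ℓ := by simpa [block] using hk
  rw [dd_PL A (by simp) hkr]
  have hpos := (PL_pos hA h1 ℓ).pos
  have hreal := (PL_good hA ℓ).coe_Rv fun _ => 2
  have hN : NM A ∅ k.2 (fun _ => 2) = 2 - A := by
    ext i j
    by_cases hij : i = j
    · subst hij; simp [NM, ofNat_apply]
    · simp [NM, hij, Ne.symm hij, ofNat_apply]
  have key : PL A (2 ^ ℓ) (insert k ∅) (fun _ => 2) =
      (2 - A)⁻¹ k.1 k.1 * PL A (2 ^ ℓ) ∅ (fun _ => 2) := by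
    rw [PL_eq A _ hkr, PL_eq A _ hkr, NM_insert, hN]
    have e' : ∏ c' ∈ (Finset.range (2 ^ ℓ)).erase k.2, (NM A (insert k ∅) c' fun _ => 2).det =
        ∏ c' ∈ (Finset.range (2 ^ ℓ)).erase k.2, (NM A ∅ c' fun _ => 2).det :=
      Finset.prod_congr rfl fun c' hc' => by
        rw [NM_insert_of_ne A _ (Finset.ne_of_mem_erase hc')]
    rw [e', ← adjugate_apply, inv_def]
    simp only [Matrix.smul_apply, smul_eq_mul, Ring.inverse_eq_inv']
    field_simp
  unfold Rv at hpos hreal ⊢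
  simp only [Complex.ofReal_ofNat] at *
  rw [key, hreal, Complex.re_mul_ofReal, Complex.ofReal_re]
  exact mul_le_mul_of_nonneg_right hle hpos.le

end Pav

/-! ### Pinchings and one-sided paving -/

namespace Pav

open Matrix
open scoped ComplexOrder

theorem endpt_five : endpt 5 2 (7 / 10) < 19 / 20 := by
  norm_num [endpt]

variable {ι : Type*}

/-- The pinching of `A` along a colouring `c`: the block-diagonal part, with the entries between
different colours set to `0`. -/
def pinch {γ : Type*} [DecidableEq γ] (c : ι → γ) (A : Matrix ι ι ℂ) : Matrix ι ι ℂ :=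
  fun i k => if c i = c k then A i k else 0

section
variable {γ δ : Type*} [DecidableEq γ] [DecidableEq δ]

theorem pinch_add (c : ι → γ) (A B : Matrix ι ι ℂ) :
    pinch c (A + B) = pinch c A + pinch c B := by
  ext i j; simp only [pinch, Matrix.add_apply]; split_ifs <;> simp

theorem pinch_sub (c : ι → γ) (A B : Matrix ι ι ℂ) :
    pinch c (A - B) = pinch c A - pinch c B := by
  ext i j; simp only [pinch, Matrix.sub_apply]; split_ifs <;> simp

theorem pinch_neg (c : ι → γ) (A : Matrix ι ι ℂ) : pinch c (-A) = -pinch c A := by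
  ext i j; simp only [pinch, Matrix.neg_apply]; split_ifs <;> simp

theorem pinch_smul (c : ι → γ) (t : ℂ) (A : Matrix ι ι ℂ) :
    pinch c (t • A) = t • pinch c A := by
  ext i j; simp only [pinch, Matrix.smul_apply]; split_ifs <;> simp

theorem pinch_one [DecidableEq ι] (c : ι → γ) : pinch c (1 : Matrix ι ι ℂ) = 1 := by
  ext i j; simp only [pinch]
  by_cases h : i = j
  · subst h; simp
  · simp [h]

theorem pinch_pinch (c : ι → γ) (d : ι → δ) (A : Matrix ι ι ℂ) :
    pinch c (pinch d A) = pinch (fun i => (c i, d i)) A := by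
  ext i j; simp only [pinch, Prod.mk.injEq]; split_ifs <;> simp_all

theorem pinch_comp_inj (c : ι → γ) {f : γ → δ} (hf : Function.Injective f) (A : Matrix ι ι ℂ) :
    pinch (fun i => f (c i)) A = pinch c A := by
  ext i j; simp only [pinch, hf.eq_iff]

theorem pinch_isHermitian (c : ι → γ) {A : Matrix ι ι ℂ} (h : A.IsHermitian) :
    (pinch c A).IsHermitian := by
  ext i j
  have := h.apply i j
  simp only [conjTranspose_apply, pinch]
  by_cases hc : c j = c i
  · simp [hc, this]
  · simp [hc, Ne.symm hc]

/-- A pinching is the sum of the compressions `P A P` to the colour classes. -/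
theorem pinch_posSemidef [Fintype ι] (c : ι → γ) {A : Matrix ι ι ℂ} (h : A.PosSemidef) :
    (pinch c A).PosSemidef := by
  classical
  have e : pinch c A = ∑ j ∈ Finset.univ.image c,
      (diagonal fun i => if c i = j then (1 : ℂ) else 0) * A *
        (diagonal fun i => if c i = j then (1 : ℂ) else 0)ᴴ := by
    ext i k
    rw [Matrix.sum_apply]
    simp only [diagonal_conjTranspose, mul_diagonal, diagonal_mul, pinch]
    rw [Finset.sum_eq_single (c i)]
    · by_cases hc : c i = c k
      · simp [hc]
      · simp [hc, Ne.symm hc]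
    · intro j _ hj; simp [Ne.symm hj]
    · intro hh; simp at hh
  rw [e]
  exact posSemidef_sum _ fun j _ => h.mul_mul_conjTranspose_same _
end

variable [DecidableEq ι] [Fintype ι]

/-- The one-sided paving estimate with `32` colours. -/
theorem one_sided {A : Matrix ι ι ℂ} (h1 : (1 - A).PosSemidef) (h2 : (1 + A).PosSemidef)
    (hd : ∀ i, (A i i).re ≤ 1 / 10) :
    ∃ c : ι → Fin 32, (((19 / 20 : ℝ) : ℂ) • 1 - pinch c A).PosSemidef := by
  have hA : A.IsHermitian := by
    have := h1.isHermitian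
    have h := isHermitian_one (α := ℂ) (n := ι) |>.sub this
    simpa using h
  obtain ⟨c, hc, hp⟩ := sel_main 5 (PL A (2 ^ 5) ∅) 2 (7 / 10) (PL_good hA 5) (by norm_num)
    (PL_pos hA h1 5) (fun k hk => PL_barrier h1 h2 hA hd 5 k hk)
  have hc32 : ∀ i, c i < 32 := by
    intro i; simpa [block] using hc i
  refine ⟨fun i => ⟨c i, hc32 i⟩, ?_⟩
  have epin : pinch (fun i => (⟨c i, hc32 i⟩ : Fin 32)) A = pinch c A :=
    (pinch_comp_inj (fun i => (⟨c i, hc32 i⟩ : Fin 32)) Fin.val_injective A).symm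
  rw [epin]
  have hH : (((19 / 20 : ℝ) : ℂ) • (1 : Matrix ι ι ℂ) - pinch c A).IsHermitian := by
    apply IsHermitian.sub _ (pinch_isHermitian c hA)
    unfold IsHermitian
    rw [conjTranspose_smul, conjTranspose_one]; simp
  -- An eigenvalue `lam > 19 / 20` of the pinching would be a root of the `j`-th determinant when the
  -- kept variables of a colour class `j` are raised from the endpoint to `lam`, contrary to
  -- positivity.
  rw [hH.posSemidef_iff_eigenvalues_nonneg]
  by_contra hneg
  rw [Pi.le_def] at hneg
  push Not at hneg
  obtain ⟨j0, hj0⟩ := hneg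
  have ev := hH.mulVec_eigenvectorBasis j0
  set μ := hH.eigenvalues j0 with hμ
  have hμ0 : μ < 0 := hj0
  have hv0 : hH.eigenvectorBasis j0 ≠ 0 := hH.eigenvectorBasis.orthonormal.ne_zero j0
  set v : ι → ℂ := (hH.eigenvectorBasis j0).ofLp with hv
  have hvne : v ≠ 0 := fun hh => hv0 (by ext i; exact congrFun hh i)
  obtain ⟨i0, hi0⟩ := Function.ne_iff.1 hvne
  set lam : ℝ := 19 / 20 - μ with hlam
  have hpv : ∀ i, (pinch c A *ᵥ v) i = (lam : ℂ) * v i := by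
    intro i
    have := congrFun ev i
    simp only [sub_mulVec, smul_mulVec, one_mulVec, Pi.sub_apply, Pi.smul_apply, smul_eq_mul] at this
    rw [hlam]; push_cast
    push_cast at this
    have t : (μ • v i : ℂ) = (μ : ℂ) * v i := by simp
    rw [t] at this
    linear_combination -this
  set V := (block ι 5).filter fun k => k.2 = c k.1 with hV
  set L := (block ι 5).filter fun k => ¬ k.2 = c k.1 with hL
  rw [DD_PL A 5 (Finset.filter_subset _ _)] at hp
  set j := c i0 with hj
  have hs := (hp.shift_set (PL_MA _ _ _) (T := V.filter fun k => k.2 = j) (Finset.filter_subset _ _)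
    (u := lam - endpt 5 2 (7 / 10)) (by have := endpt_five; linarith)).pos
  set w : ι → ℂ := fun i => if c i = j then v i else 0 with hw
  have hwne : w ≠ 0 := fun hh => hi0 (by have := congrFun hh i0; simpa [hw, hj] using this)
  have hAw : ∀ i, c i = j → (A *ᵥ w) i = (pinch c A *ᵥ v) i := by
    intro i hi
    simp only [mulVec, dotProduct]
    refine Finset.sum_congr rfl fun k _ => ?_
    simp only [hw, pinch, hi]
    by_cases hk : c k = j
    · simp [hk]
    · simp [hk, Ne.symm hk]
  have hz : PL A (2 ^ 5) L (fun k => (((if k ∈ V.filter fun k => k.2 = j then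
      endpt 5 2 (7 / 10) + (lam - endpt 5 2 (7 / 10)) else endpt 5 2 (7 / 10)) : ℝ) : ℂ)) = 0 := by
    apply Finset.prod_eq_zero (Finset.mem_range.2 (by have := hc32 i0; omega) : j ∈ Finset.range (2 ^ 5))
    rw [← exists_mulVec_eq_zero_iff]
    refine ⟨w, hwne, ?_⟩
    funext i
    rw [NM_mulVec]
    have hjb : (i, j) ∈ block ι 5 := by
      have := hc32 i0
      simp only [block, Finset.mem_product, Finset.mem_univ, true_and, Finset.mem_range]
      omega
    by_cases hi : c i = j
    · have m1 : (i, j) ∉ L := by simp [hL, hi]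
      have m2 : (i, j) ∈ V.filter fun k => k.2 = j := by simp [hV, hi, hjb]
      rw [if_neg m1, if_pos m2, hAw i hi, hpv]
      simp [hw, hi]
    · have m1 : (i, j) ∈ L := by simp [hL, hjb, Ne.symm hi]
      rw [if_pos m1]
      simp [hw, hi]
  unfold Rv at hs
  rw [hz] at hs
  simp at hs

end Pav

/-! ### Two-sided paving of Hermitian matrices -/

namespace Pav

open Matrix
open scoped ComplexOrder
variable {ι : Type*} [DecidableEq ι] [Fintype ι]

/-- A second colouring is found for the negative of the first pinching; both bounds survive further
pinching. -/
theorem two_sided {A : Matrix ι ι ℂ} (h1 : (1 - A).PosSemidef) (h2 : (1 + A).PosSemidef)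
    (hd : ∀ i, |(A i i).re| ≤ 1 / 10) :
    ∃ c : ι → Fin 32 × Fin 32, (((19 / 20 : ℝ) : ℂ) • 1 - pinch c A).PosSemidef ∧
      (((19 / 20 : ℝ) : ℂ) • 1 + pinch c A).PosSemidef := by
  obtain ⟨c1, hc1⟩ := one_sided h1 h2 fun i => (le_abs_self _).trans (hd i)
  have b1 := pinch_posSemidef c1 h1
  have b2 := pinch_posSemidef c1 h2
  rw [pinch_sub, pinch_one] at b1
  rw [pinch_add, pinch_one] at b2
  obtain ⟨c2, hc2⟩ := one_sided (A := -pinch c1 A) (by rwa [sub_neg_eq_add])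
    (by rwa [← sub_eq_add_neg]) fun i => by
      have := (abs_le.1 (hd i)).1
      simp only [Matrix.neg_apply, pinch, if_true, Complex.neg_re]
      linarith
  have hc3 := pinch_posSemidef c2 hc1
  rw [pinch_neg, sub_neg_eq_add, pinch_pinch] at hc2
  rw [pinch_sub, pinch_smul, pinch_one, pinch_pinch] at hc3
  exact ⟨fun i => (c2 i, c1 i), hc3, hc2⟩

/-- The pinching obtained so far is divided by `(19 / 20) ^ t`, and `two_sided` is applied to it. The
hypothesis on the diagonal keeps the rescaled diagonal at most `1 / 10` in each round. -/
theorem two_sided_iterate (t : ℕ) {A : Matrix ι ι ℂ} (h1 : (1 - A).PosSemidef)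
    (h2 : (1 + A).PosSemidef) (hd : ∀ i, |(A i i).re| ≤ 1 / 10 * (19 / 20) ^ t) :
    ∃ c : ι → Fin (1024 ^ t), ((((19 / 20) ^ t : ℝ) : ℂ) • 1 - pinch c A).PosSemidef ∧
      ((((19 / 20) ^ t : ℝ) : ℂ) • 1 + pinch c A).PosSemidef := by
  induction t with
  | zero =>
    have e : pinch (fun _ : ι => (⟨0, by norm_num⟩ : Fin (1024 ^ 0))) A = A := by
      ext i j; simp [pinch]
    refine ⟨fun _ => ⟨0, by norm_num⟩, ?_, ?_⟩ <;> rw [e] <;> simpa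
  | succ t ih =>
    have hθ : (0 : ℝ) < (19 / 20) ^ t := by positivity
    obtain ⟨c, hc1, hc2⟩ := ih fun i => (hd i).trans (by rw [pow_succ]; linarith)
    set θ : ℝ := (19 / 20) ^ t with hθdef
    have hθc : (θ : ℂ) ≠ 0 := by exact_mod_cast hθ.ne'
    have hi : (0 : ℂ) ≤ ((θ⁻¹ : ℝ) : ℂ) := Complex.zero_le_real.2 (by positivity)
    have g1 := hc1.smul hi
    have g2 := hc2.smul hi
    have e1 : ((θ⁻¹ : ℝ) : ℂ) • (θ : ℂ) • (1 : Matrix ι ι ℂ) = 1 := by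
      rw [smul_smul]; push_cast; rw [inv_mul_cancel₀ hθc, one_smul]
    rw [smul_sub, e1] at g1
    rw [smul_add, e1] at g2
    obtain ⟨d, hd1, hd2⟩ := two_sided g1 g2 fun i => by
      simp only [Matrix.smul_apply, pinch, if_true, smul_eq_mul, Complex.re_ofReal_mul]
      rw [abs_mul, abs_of_pos (by positivity), inv_mul_le_iff₀ hθ]
      refine (hd i).trans ?_
      rw [pow_succ]; linarith
    have hi' : (0 : ℂ) ≤ (θ : ℂ) := Complex.zero_le_real.2 hθ.le
    have k1 := hd1.smul hi'
    have k2 := hd2.smul hi'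
    have e2 : (θ : ℂ) • ((19 / 20 : ℝ) : ℂ) • (1 : Matrix ι ι ℂ) =
        (((19 / 20) ^ (t + 1) : ℝ) : ℂ) • 1 := by
      rw [smul_smul, ← Complex.ofReal_mul, hθdef, ← pow_succ]
    have e3 : (θ : ℂ) • ((θ⁻¹ : ℝ) : ℂ) • pinch (fun i => (d i, c i)) A =
        pinch (fun i => (d i, c i)) A := by
      rw [smul_smul]; push_cast; rw [mul_inv_cancel₀ hθc, one_smul]
    rw [smul_sub, e2, pinch_smul, pinch_pinch, e3] at k1
    rw [smul_add, e2, pinch_smul, pinch_pinch, e3] at k2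
    let f : (Fin 32 × Fin 32) × Fin (1024 ^ t) ≃ Fin (1024 ^ (t + 1)) :=
      Fintype.equivFinOfCardEq (by simp [pow_succ]; ring)
    refine ⟨fun i => f (d i, c i), ?_, ?_⟩ <;>
      rwa [pinch_comp_inj (fun i => (d i, c i)) f.injective]

theorem star_dotProduct_eq_norm_sq (v : ι → ℂ) :
    star v ⬝ᵥ v = ((‖WithLp.toLp 2 v‖ ^ 2 : ℝ) : ℂ) := by
  rw [EuclideanSpace.norm_sq_eq]
  simp [dotProduct, Complex.conj_mul']

/-- The Hermitian part of `A`. -/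
noncomputable def hpart (A : Matrix ι ι ℂ) : Matrix ι ι ℂ := (1 / 2 : ℂ) • (A + Aᴴ)

theorem hpart_neg (A : Matrix ι ι ℂ) : hpart (-A) = -hpart A := by
  unfold hpart
  rw [conjTranspose_neg, ← neg_add, smul_neg]

theorem hpart_isHermitian (A : Matrix ι ι ℂ) : (hpart A).IsHermitian := by
  unfold hpart IsHermitian
  rw [conjTranspose_smul, conjTranspose_add, conjTranspose_conjTranspose, add_comm]
  simp

theorem hpart_posSemidef {A : Matrix ι ι ℂ}
    (h : ∀ v : ι → ℂ, ‖WithLp.toLp 2 (A *ᵥ v)‖ ≤ ‖WithLp.toLp 2 v‖) :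
    (1 - hpart A).PosSemidef := by
  apply PosSemidef.of_dotProduct_mulVec_nonneg (isHermitian_one.sub (hpart_isHermitian A))
  intro v
  have e1 : star v ⬝ᵥ (Aᴴ *ᵥ v) = star (star v ⬝ᵥ (A *ᵥ v)) := by
    rw [star_dotProduct, star_mulVec, conjTranspose_conjTranspose, ← dotProduct_mulVec]
  have e2 : star v ⬝ᵥ ((1 - hpart A) *ᵥ v) =
      ((‖WithLp.toLp 2 v‖ ^ 2 - (star v ⬝ᵥ (A *ᵥ v)).re : ℝ) : ℂ) := by
    rw [sub_mulVec, one_mulVec, dotProduct_sub, star_dotProduct_eq_norm_sq, hpart, smul_mulVec,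
      add_mulVec, dotProduct_smul, dotProduct_add, e1]
    generalize star v ⬝ᵥ (A *ᵥ v) = q
    have : q + star q = ((2 * q.re : ℝ) : ℂ) := Complex.add_conj q
    rw [this]; push_cast; simp
  rw [e2, Complex.zero_le_real]
  have e3 : star v ⬝ᵥ (A *ᵥ v) = inner ℂ (WithLp.toLp 2 v) (WithLp.toLp 2 (A *ᵥ v)) := by
    rw [EuclideanSpace.inner_eq_star_dotProduct]
    exact dotProduct_comm _ _
  rw [e3]
  have := re_inner_le_norm (𝕜 := ℂ) (WithLp.toLp 2 v) (WithLp.toLp 2 (A *ᵥ v))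
  have h2 := mul_le_mul_of_nonneg_left (h v) (norm_nonneg (WithLp.toLp 2 v))
  have h3 : (inner ℂ (WithLp.toLp 2 v) (WithLp.toLp 2 (A *ᵥ v)) : ℂ).re ≤ _ := this
  nlinarith

/-- `-θ ≤ B ≤ θ` implies `B² ≤ θ²`, because
`(θ - B)(θ + B)(θ - B) + (θ + B)(θ - B)(θ + B) = 2 θ (θ² - B²)`. -/
theorem norm_le_of_posSemidef {B : Matrix ι ι ℂ} {θ : ℝ} (hθ : 0 < θ)
    (h1 : ((θ : ℂ) • 1 - B).PosSemidef) (h2 : ((θ : ℂ) • 1 + B).PosSemidef) (v : ι → ℂ) :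
    ‖WithLp.toLp 2 (B *ᵥ v)‖ ≤ θ * ‖WithLp.toLp 2 v‖ := by
  have hB : B.IsHermitian := by
    have h := h2.isHermitian.sub h1.isHermitian
    have : B = (1 / 2 : ℂ) • ((θ : ℂ) • 1 + B - ((θ : ℂ) • 1 - B)) := by
      rw [add_sub_sub_cancel, ← two_smul ℂ B, smul_smul]; norm_num
    rw [this]
    unfold IsHermitian
    rw [conjTranspose_smul, h.eq]; simp
  set T : Matrix ι ι ℂ := (θ : ℂ) • 1 with hT
  have hTB : T * B = B * T := by simp [hT]
  have a1 : ((T - B) * (T + B) * (T - B)).PosSemidef := by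
    have := h2.mul_mul_conjTranspose_same (T - B)
    rwa [h1.isHermitian.eq] at this
  have a2 : ((T + B) * (T - B) * (T + B)).PosSemidef := by
    have := h1.mul_mul_conjTranspose_same (T + B)
    rwa [h2.isHermitian.eq] at this
  have e : (T - B) * (T + B) * (T - B) + (T + B) * (T - B) * (T + B) =
      ((2 * θ : ℝ) : ℂ) • (((θ ^ 2 : ℝ) : ℂ) • 1 - B * B) := by
    simp only [hT, sub_mul, mul_sub, add_mul, mul_add, smul_mul_assoc, mul_smul_comm, one_mul,
      mul_one, smul_sub, smul_add, smul_smul]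
    push_cast
    module
  have q := (a1.add a2).dotProduct_mulVec_nonneg v
  rw [e, smul_mulVec, dotProduct_smul, sub_mulVec, smul_mulVec, one_mulVec, dotProduct_sub,
    dotProduct_smul, ← mulVec_mulVec, dotProduct_mulVec, star_dotProduct_eq_norm_sq] at q
  have e3 : star v ᵥ* B = star (B *ᵥ v) := by rw [star_mulVec, hB.eq]
  rw [e3, star_dotProduct_eq_norm_sq, smul_eq_mul, smul_eq_mul, ← Complex.ofReal_mul,
    ← Complex.ofReal_sub, ← Complex.ofReal_mul, Complex.zero_le_real] at q
  have q2 := nonneg_of_mul_nonneg_right q (by positivity)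
  apply le_of_sq_le_sq _ (by positivity)
  rw [mul_pow]; linarith

end Pav

/-! ### Paving of general matrices -/

namespace Pav

open Matrix
open scoped ComplexOrder

theorem specNorm_le {n : ℕ} {B : Matrix (Fin n) (Fin n) ℂ} {M : ℝ} (hM : 0 ≤ M)
    (h : ∀ v : Fin n → ℂ, ‖WithLp.toLp 2 (B *ᵥ v)‖ ≤ M * ‖WithLp.toLp 2 v‖) :
    specNorm B ≤ M :=
  ContinuousLinearMap.opNorm_le_bound _ hM fun x => h x.ofLp

theorem norm_mulVec_le {n : ℕ} {A : Matrix (Fin n) (Fin n) ℂ} (hA : specNorm A = 1)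
    (v : Fin n → ℂ) : ‖WithLp.toLp 2 (A *ᵥ v)‖ ≤ ‖WithLp.toLp 2 v‖ := by
  have := (LinearMap.toContinuousLinearMap (Matrix.toEuclideanLin A)).le_opNorm (WithLp.toLp 2 v)
  rw [show ‖LinearMap.toContinuousLinearMap (Matrix.toEuclideanLin A)‖ = 1 from hA, one_mul] at this
  exact this

/-- Real and imaginary parts of `A` are paved separately, and the common refinement of the two
colourings is used. -/
theorem paving {n : ℕ} {A : Matrix (Fin n) (Fin n) ℂ} (hA : specNorm A = 1) (t : ℕ)
    (hd : ∀ i, ‖A i i‖ ≤ 1 / 10 * (19 / 20) ^ t) :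
    ∃ c : Fin n → Fin (1024 ^ t * 1024 ^ t), specNorm (pinch c A) ≤ 2 * (19 / 20) ^ t := by
  have hn := norm_mulVec_le hA
  -- The Hermitian part of `u • A` is the real part of `A` for `u = 1` and the imaginary part for
  -- `u = -i`.
  have key : ∀ u : ℂ, ‖u‖ = 1 → ∃ c : Fin n → Fin (1024 ^ t),
      ((((19 / 20) ^ t : ℝ) : ℂ) • 1 - pinch c (hpart (u • A))).PosSemidef ∧
      ((((19 / 20) ^ t : ℝ) : ℂ) • 1 + pinch c (hpart (u • A))).PosSemidef := by
    intro u hu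
    have hn' : ∀ w : ℂ, ‖w‖ = 1 → ∀ v : Fin n → ℂ,
        ‖WithLp.toLp 2 ((w • A) *ᵥ v)‖ ≤ ‖WithLp.toLp 2 v‖ := by
      intro w hw v
      rw [smul_mulVec, WithLp.toLp_smul, norm_smul, hw, one_mul]
      exact hn v
    have h1 := hpart_posSemidef (hn' u hu)
    have h2 := hpart_posSemidef (hn' (-u) (by rwa [norm_neg]))
    rw [neg_smul, hpart_neg, sub_neg_eq_add] at h2
    apply two_sided_iterate t h1 h2
    intro i
    have e : hpart (u • A) i i = (((u * A i i).re : ℝ) : ℂ) := by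
      rw [hpart, Matrix.smul_apply, Matrix.add_apply, conjTranspose_apply, Matrix.smul_apply,
        smul_eq_mul, smul_eq_mul]
      have := Complex.add_conj (u * A i i)
      change (1 / 2 : ℂ) * (u * A i i + (starRingEnd ℂ) (u * A i i)) = _
      rw [this]; push_cast; ring
    rw [e, Complex.ofReal_re]
    refine (Complex.abs_re_le_norm _).trans ?_
    rw [norm_mul, hu, one_mul]
    exact hd i
  obtain ⟨c, hc1, hc2⟩ := key 1 (by simp)
  obtain ⟨d, hd1, hd2⟩ := key (-Complex.I) (by simp)
  set X := hpart ((1 : ℂ) • A) with hX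
  set Y := hpart (-Complex.I • A) with hY
  have hXY : A = X + Complex.I • Y := by
    ext i j
    simp only [hX, hY, hpart, Matrix.add_apply, Matrix.smul_apply, conjTranspose_apply,
      smul_eq_mul, star_mul', star_neg, one_mul]
    have : star Complex.I = -Complex.I := Complex.conj_I
    rw [this]
    linear_combination (A i j / 2 - star (A j i) / 2) * Complex.I_sq
  set θ : ℝ := (19 / 20) ^ t with hθ
  have hθ0 : 0 < θ := by positivity
  let f := fun i => finProdFinEquiv (d i, c i)
  refine ⟨f, ?_⟩
  have pX : pinch f X = pinch d (pinch c X) := by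
    rw [pinch_pinch]
    exact pinch_comp_inj (fun i => (d i, c i)) finProdFinEquiv.injective X
  have pY : pinch f Y = pinch c (pinch d Y) := by
    rw [pinch_pinch, ← pinch_comp_inj (fun i => (c i, d i)) Prod.swap_injective]
    exact pinch_comp_inj (fun i => (d i, c i)) finProdFinEquiv.injective Y
  have nX := norm_le_of_posSemidef (B := pinch f X) hθ0
    (by have := pinch_posSemidef d hc1
        rwa [pinch_sub, pinch_smul, pinch_one, ← pX] at this)
    (by have := pinch_posSemidef d hc2
        rwa [pinch_add, pinch_smul, pinch_one, ← pX] at this)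
  have nY := norm_le_of_posSemidef (B := pinch f Y) hθ0
    (by have := pinch_posSemidef c hd1
        rwa [pinch_sub, pinch_smul, pinch_one, ← pY] at this)
    (by have := pinch_posSemidef c hd2
        rwa [pinch_add, pinch_smul, pinch_one, ← pY] at this)
  apply specNorm_le (by positivity)
  intro v
  have e : pinch f A *ᵥ v = pinch f X *ᵥ v + Complex.I • (pinch f Y *ᵥ v) := by
    conv_lhs => rw [hXY]
    rw [pinch_add, pinch_smul, add_mulVec, smul_mulVec]
  rw [e, WithLp.toLp_add, WithLp.toLp_smul]
  refine (norm_add_le _ _).trans ?_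
  rw [norm_smul, Complex.norm_I, one_mul]
  have := nX v
  have := nY v
  linarith

theorem sum_projOf {n m : ℕ} (c : Fin n → Fin m) (A : Matrix (Fin n) (Fin n) ℂ) :
    ∑ j, projOf (Finset.univ.filter fun i => c i = j) * A *
      projOf (Finset.univ.filter fun i => c i = j) = pinch c A := by
  ext i k
  rw [Matrix.sum_apply]
  simp only [projOf, mul_diagonal, diagonal_mul, pinch, Finset.mem_filter, Finset.mem_univ,
    true_and]
  rw [Finset.sum_eq_single (c i)]
  · by_cases hc : c i = c k
    · simp [hc]
    · simp [hc, Ne.symm hc]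
  · intro j _ hj; simp [Ne.symm hj]
  · intro hh; simp at hh

/-- The number of colours `1048576 ^ t` for the least `t` with `2 (19 / 20) ^ t ≤ ε`. The exponent
comes from `1048576 * (19 / 20) ^ 271 ≤ 1`. -/
theorem exists_exponent {ε : ℝ} (h0 : 0 < ε) (h1 : ε < 1) :
    ∃ t : ℕ, 2 * (19 / 20 : ℝ) ^ t ≤ ε ∧
      (((1024 ^ t * 1024 ^ t : ℕ) : ℝ)) ≤ 1048576 * 2 ^ 271 * ε ^ (-(271 : ℝ)) := by
  have hex : ∃ t : ℕ, 2 * (19 / 20 : ℝ) ^ t ≤ ε := by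
    obtain ⟨t, ht⟩ := exists_pow_lt_of_lt_one (half_pos h0) (by norm_num : (19 / 20 : ℝ) < 1)
    exact ⟨t, by linarith⟩
  classical
  refine ⟨Nat.find hex, Nat.find_spec hex, ?_⟩
  have hmin := fun {m : ℕ} => Nat.find_min hex (m := m)
  generalize ht : Nat.find hex = t at *
  cases t with
  | zero =>
    have := Nat.find_spec hex
    rw [ht] at this
    norm_num at this; linarith
  | succ t =>
    have hs := hmin (Nat.lt_succ_self t)
    push Not at hs
    set q : ℝ := (19 / 20) ^ t with hq
    have hq0 : 0 < q := by positivity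
    have hK : (1048576 : ℝ) ^ t * q ^ 271 ≤ 1 := by
      rw [hq, ← pow_mul, mul_comm t, pow_mul, ← mul_pow]
      apply pow_le_one₀ (by positivity)
      rw [show (271 : ℕ) = 135 + 136 from rfl, pow_add]
      norm_num
    rw [Real.rpow_neg h0.le, show (271 : ℝ) = ((271 : ℕ) : ℝ) by norm_num, Real.rpow_natCast]
    rw [← div_eq_mul_inv, le_div_iff₀ (by positivity)]
    have e : ((1024 ^ (t + 1) * 1024 ^ (t + 1) : ℕ) : ℝ) = 1048576 * 1048576 ^ t := by
      push_cast
      rw [← mul_pow, pow_succ]; norm_num [mul_comm]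
    rw [e]
    have h2 : ε ^ 271 ≤ 2 ^ 271 * q ^ 271 := by
      rw [← mul_pow]; exact pow_le_pow_left₀ h0.le hs.le _
    calc (1048576 : ℝ) * 1048576 ^ t * ε ^ 271
        ≤ 1048576 * 1048576 ^ t * (2 ^ 271 * q ^ 271) := by gcongr
      _ = 1048576 * 2 ^ 271 * (1048576 ^ t * q ^ 271) := mul_mul_mul_comm _ _ _ _
      _ ≤ 1048576 * 2 ^ 271 * 1 := by gcongr
      _ = _ := mul_one _

end Pav

/-- Bourgain–Tzafriri: constant-size paving for uniformly bounded unit-norm matrices. -/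
theorem bourgain_tzafriri_paving :
    ∃ C : ℝ, 0 < C ∧
      ∀ γ : ℝ, 0 < γ → ∀ ε : ℝ, ε ∈ Set.Ioo (0:ℝ) 1 →
        ∃ m : ℕ, 0 < m ∧ (m : ℝ) ≤ C * ε ^ (-(C / min 1 γ)) ∧
          ∃ N : ℕ, ∀ n : ℕ, N ≤ n →
            ∀ A : Matrix (Fin n) (Fin n) ℂ,
              specNorm A = 1 →
              (∀ j k : Fin n, ‖A j k‖ ≤ (Real.log n) ^ (-(1 + γ))) →
              ∃ σ : Fin m → Finset (Fin n),
                (Pairwise fun i j => Disjoint (σ i) (σ j)) ∧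
                Finset.univ.biUnion σ = Finset.univ ∧
                specNorm (∑ j, projOf (σ j) * A * projOf (σ j)) ≤ ε := by
  refine ⟨1048576 * 2 ^ 271, by positivity, fun γ hγ ε ⟨h0, h1⟩ => ?_⟩
  obtain ⟨t, ht, hm⟩ := Pav.exists_exponent h0 h1
  refine ⟨1024 ^ t * 1024 ^ t, by positivity, hm.trans ?_, ?_⟩
  · refine mul_le_mul_of_nonneg_left ?_ (by positivity)
    apply Real.rpow_le_rpow_of_exponent_ge h0 h1.le
    have hmin : 0 < min 1 γ := lt_min one_pos hγ
    rw [neg_le_neg_iff, le_div_iff₀ hmin]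
    have : (271 : ℝ) * min 1 γ ≤ 271 * 1 := by gcongr; exact min_le_left _ _
    have h2 : (1 : ℝ) ≤ 2 ^ 271 := one_le_pow₀ (by norm_num)
    generalize (2 : ℝ) ^ 271 = X at *
    linarith
  -- For large `n` the entry bound drops below `(19 / 20) ^ t / 10`; only the diagonal is used.
  · have hlim : Filter.Tendsto (fun n : ℕ => (Real.log n) ^ (-(1 + γ))) Filter.atTop (nhds 0) :=
      (tendsto_rpow_neg_atTop (by linarith)).comp
        (Real.tendsto_log_atTop.comp tendsto_natCast_atTop_atTop)
    have hev := hlim.eventually_le_const (show (0 : ℝ) < 1 / 10 * (19 / 20) ^ t by positivity)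
    obtain ⟨N, hN⟩ := Filter.eventually_atTop.1 hev
    refine ⟨N, fun n hn A hA hent => ?_⟩
    obtain ⟨c, hc⟩ := Pav.paving hA t fun i => (hent i i).trans (hN n hn)
    refine ⟨fun j => Finset.univ.filter fun i => c i = j, ?_, ?_, ?_⟩
    · intro i j hij
      rw [Finset.disjoint_left]
      intro k hk hk'
      simp only [Finset.mem_filter, Finset.mem_univ, true_and] at hk hk'
      exact hij (hk.symm.trans hk')
    · ext k; simp
    · rw [Pav.sum_projOf]; exact hc.trans ht
end
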